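/- arXiv:1712.10208 — 4 statements merged into one kernel-verified Lean document; each statement's English description precedes it below -/
import Mathlib

section
/- Let d ≥ 1 be an integer, p > d, q > 0, and r₀ > 0. Suppose u : [r₀, ∞) → ℝ is continuously differentiable, nonincreasing, nonnegative, u(r₀) = 1, lim_{r→∞} u(r) = 0, and the function r ↦ r^{d−1}|u'(r)|^{p−2}u'(r) is differentiable on (r₀, ∞) with derivative r^{d−1} u(r)^q at every r > r₀. Then the integral ∫_{r₀}^∞ r^{d−1} u(r)^q dr is finite and r₀^{d−1} |u'(r₀)|^{p−1} = ∫_{r₀}^∞ r^{d−1} u(r)^q dr. -/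
open Filter Set Topology MeasureTheory

/-!
The flux `w |u'|^{p-2} u'`, with `w r = r^{d-1}`, is monotone because its derivative is nonnegative.
If it stayed above some `ε > 0` from a radius on, then `u' ≥ (ε / w)^{1/(p-1)}` there; since `p ≥ d`
makes `w^{-1/(p-1)}` non-integrable at infinity, `u` would be unbounded. The same argument for `-u`
excludes a flux staying below `-ε`. Hence the flux of a bounded `u` increases to `0`, and the
fundamental theorem of calculus on `[r₀, ∞)` gives the identity.
-/

section HalfLine

variable {g g' : ℝ → ℝ} {a C : ℝ}

theorem monotoneOn_Ici_of_hasDerivAt_nonneg (hg : ContinuousOn g (Ici a))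
    (hderiv : ∀ x ∈ Ioi a, HasDerivAt g (g' x) x) (hg' : ∀ x ∈ Ioi a, 0 ≤ g' x) :
    MonotoneOn g (Ici a) := by
  refine monotoneOn_of_hasDerivWithinAt_nonneg (f' := g') (convex_Ici a) hg ?_ ?_ <;>
    rw [interior_Ici]
  · exact fun x hx => (hderiv x hx).hasDerivWithinAt
  · exact hg'

theorem exists_tendsto_atTop_of_monotoneOn_Ici (hg : MonotoneOn g (Ici a))
    (hC : ∀ x ∈ Ici a, g x ≤ C) : ∃ l, Tendsto g atTop (𝓝 l) := by
  have hmono : Monotone fun x => g (max a x) := fun x y hxy =>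
    hg (le_max_left a x) (le_max_left a y) (max_le_max_left a hxy)
  have hbdd : BddAbove (range fun x => g (max a x)) :=
    ⟨C, forall_mem_range.2 fun x => hC _ (le_max_left a x)⟩
  refine ⟨_, (tendsto_atTop_ciSup hmono hbdd).congr' ?_⟩
  filter_upwards [eventually_ge_atTop a] with x hx
  rw [max_eq_right hx]

theorem integrableOn_Ioi_deriv_of_nonneg_of_le (hg : ContinuousOn g (Ici a))
    (hderiv : ∀ x ∈ Ioi a, HasDerivAt g (g' x) x) (hg' : ∀ x ∈ Ioi a, 0 ≤ g' x)
    (hC : ∀ x ∈ Ici a, g x ≤ C) : IntegrableOn g' (Ioi a) := by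
  obtain ⟨l, hl⟩ := exists_tendsto_atTop_of_monotoneOn_Ici
    (monotoneOn_Ici_of_hasDerivAt_nonneg hg hderiv hg') hC
  exact integrableOn_Ioi_deriv_of_nonneg (hg a self_mem_Ici) hderiv hg' hl

end HalfLine

section Flux

variable {p : ℝ} {w v : ℝ → ℝ} {r : ℝ}

theorem abs_rpow_sub_two_mul_abs (hp : 1 < p) (x : ℝ) : |x| ^ (p - 2) * |x| = |x| ^ (p - 1) := by
  rw [← Real.rpow_add_one' (abs_nonneg x) (by linarith)]
  ring_nf

theorem continuous_abs_rpow_sub_two_mul (hp : 1 < p) :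
    Continuous fun x : ℝ => |x| ^ (p - 2) * x := by
  refine continuous_iff_continuousAt.2 fun x => ?_
  rcases eq_or_ne x 0 with rfl | hx
  · have hlim : Tendsto (fun x : ℝ => |x| ^ (p - 1)) (𝓝 0) (𝓝 0) := by
      have hcont : Continuous fun x : ℝ => |x| ^ (p - 1) :=
        continuous_abs.rpow_const fun _ => Or.inr (by linarith)
      simpa [Real.zero_rpow (sub_pos.2 hp).ne'] using hcont.tendsto 0
    rw [ContinuousAt, mul_zero]
    refine squeeze_zero_norm (fun x => ?_) hlim
    rw [Real.norm_eq_abs, abs_mul, Real.abs_rpow_of_nonneg (abs_nonneg x), abs_abs,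
      abs_rpow_sub_two_mul_abs hp]
  · exact (continuousAt_id.abs.rpow_const (Or.inl (abs_ne_zero.2 hx))).mul continuousAt_id

/-- The radial `p`-Laplace flux `w |v|^{p-2} v` of a function with derivative `v`, for a general
weight `w` in place of `r ↦ r ^ (d - 1)`. For `p < 2` the junk value of `0 ^ (p - 2)` is harmless,
being multiplied by `v r = 0`. -/
noncomputable def weightedFlux (p : ℝ) (w v : ℝ → ℝ) (r : ℝ) : ℝ := w r * |v r| ^ (p - 2) * v r

theorem weightedFlux_neg : weightedFlux p w (-v) r = -weightedFlux p w v r := by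
  simp [weightedFlux]

theorem abs_weightedFlux (hp : 1 < p) (hw : 0 ≤ w r) :
    |weightedFlux p w v r| = w r * |v r| ^ (p - 1) := by
  rw [weightedFlux, mul_assoc, abs_mul, abs_mul, abs_of_nonneg hw,
    Real.abs_rpow_of_nonneg (abs_nonneg _), abs_abs, abs_rpow_sub_two_mul_abs hp]

theorem continuousOn_weightedFlux {s : Set ℝ} (hp : 1 < p) (hw : ContinuousOn w s)
    (hv : ContinuousOn v s) : ContinuousOn (weightedFlux p w v) s :=
  (hw.mul ((continuous_abs_rpow_sub_two_mul hp).comp_continuousOn hv)).congr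
    fun _ _ => mul_assoc _ _ _

theorem rpow_mul_rpow_neg_le_of_le_weightedFlux {ε : ℝ} (hp : 1 < p) (hw : 0 < w r) (hε : 0 < ε)
    (h : ε ≤ weightedFlux p w v r) : ε ^ (p - 1)⁻¹ * w r ^ (-(p - 1)⁻¹) ≤ v r := by
  have hv : 0 < v r := pos_of_mul_pos_right (hε.trans_le h) (by positivity)
  have hpow : ε / w r ≤ v r ^ (p - 1) := by
    rw [div_le_iff₀' hw]
    calc ε ≤ |weightedFlux p w v r| := h.trans (le_abs_self _)
      _ = w r * v r ^ (p - 1) := by rw [abs_weightedFlux hp hw.le, abs_of_pos hv]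
  calc ε ^ (p - 1)⁻¹ * w r ^ (-(p - 1)⁻¹) = (ε / w r) ^ (p - 1)⁻¹ := by
        rw [Real.div_rpow hε.le hw.le, Real.rpow_neg hw.le, div_eq_mul_inv]
    _ ≤ v r := (Real.rpow_inv_le_iff_of_pos (by positivity) hv.le (sub_pos.2 hp)).2 hpow

end Flux

/-- A `p`-parabolic weight on `[a, ∞)`: the integral of `w ^ (-1 / (p - 1))` diverges at infinity,
so that functions with a constant nonzero `p`-flux are unbounded. -/
structure IsParabolicWeight (p : ℝ) (w : ℝ → ℝ) (a : ℝ) : Prop where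
  continuousOn : ContinuousOn w (Ici a)
  pos : ∀ r ∈ Ici a, 0 < w r
  not_integrableOn : ¬IntegrableOn (fun r => w r ^ (-(p - 1)⁻¹)) (Ioi a)

theorem isParabolicWeight_rpow {p α a : ℝ} (hp : 1 < p) (hα : α ≤ p - 1) (ha : 0 < a) :
    IsParabolicWeight p (fun r => r ^ α) a where
  continuousOn := continuousOn_id.rpow_const fun _ hr => Or.inl (ha.trans_le hr).ne'
  pos _ hr := Real.rpow_pos_of_pos (ha.trans_le hr) α
  not_integrableOn hint := by
    have hexp : α * -(p - 1)⁻¹ < -1 := (integrableOn_Ioi_rpow_iff ha).1 <|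
      hint.congr_fun (fun r hr => (Real.rpow_mul (ha.trans hr).le _ _).symm) measurableSet_Ioi
    have hle : α * (p - 1)⁻¹ ≤ 1 := by
      rwa [← div_eq_mul_inv, div_le_one (sub_pos.2 hp)]
    linarith

theorem isParabolicWeight_pow {p a : ℝ} {n : ℕ} (hp : 1 < p) (hn : n ≤ p - 1) (ha : 0 < a) :
    IsParabolicWeight p (fun r => r ^ n) a := by
  simpa only [Real.rpow_natCast] using isParabolicWeight_rpow hp hn ha

namespace IsParabolicWeight

variable {p a b C : ℝ} {w u u' : ℝ → ℝ}

theorem continuousOn_rpow (hw : IsParabolicWeight p w a) (β : ℝ) :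
    ContinuousOn (fun r => w r ^ β) (Ici a) :=
  hw.continuousOn.rpow_const fun r hr => Or.inl (hw.pos r hr).ne'

theorem mono (hw : IsParabolicWeight p w a) (hab : a ≤ b) : IsParabolicWeight p w b where
  continuousOn := hw.continuousOn.mono (Ici_subset_Ici.2 hab)
  pos r hr := hw.pos r (hab.trans hr)
  not_integrableOn hint := by
    have hcompact : IntegrableOn (fun r => w r ^ (-(p - 1)⁻¹)) (Icc a b) :=
      ((hw.continuousOn_rpow _).mono Icc_subset_Ici_self).integrableOn_Icc
    refine hw.not_integrableOn ?_
    rw [← Ioc_union_Ioi_eq_Ioi hab]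
    exact (hcompact.mono_set Ioc_subset_Icc_self).union hint

theorem exists_weightedFlux_lt (hw : IsParabolicWeight p w a) (hp : 1 < p)
    (hderiv : ∀ r ∈ Ici a, HasDerivWithinAt u (u' r) (Ici a) r) (hC : ∀ r ∈ Ici a, u r ≤ C)
    {ε : ℝ} (hε : 0 < ε) : ∃ r ∈ Ioi a, weightedFlux p w u' r < ε := by
  by_contra! hflux
  have hbound : ∀ r ∈ Ioi a, ε ^ (p - 1)⁻¹ * w r ^ (-(p - 1)⁻¹) ≤ u' r := fun r hr =>
    rpow_mul_rpow_neg_le_of_le_weightedFlux hp (hw.pos r (Ioi_subset_Ici_self hr)) hε (hflux r hr)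
  have hpos : ∀ r ∈ Ioi a, 0 ≤ ε ^ (p - 1)⁻¹ * w r ^ (-(p - 1)⁻¹) := fun r hr =>
    mul_nonneg (by positivity) (Real.rpow_nonneg (hw.pos r (Ioi_subset_Ici_self hr)).le _)
  have hu' : IntegrableOn u' (Ioi a) :=
    integrableOn_Ioi_deriv_of_nonneg_of_le (fun r hr => (hderiv r hr).continuousWithinAt)
      (fun r hr => (hderiv r (Ioi_subset_Ici_self hr)).hasDerivAt (Ici_mem_nhds hr))
      (fun r hr => (hpos r hr).trans (hbound r hr)) hC
  have hmeas : AEStronglyMeasurable (fun r => ε ^ (p - 1)⁻¹ * w r ^ (-(p - 1)⁻¹))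
      (volume.restrict (Ioi a)) :=
    (((hw.continuousOn_rpow _).mono Ioi_subset_Ici_self).const_mul _).aestronglyMeasurable
      measurableSet_Ioi
  have hint : IntegrableOn (fun r => ε ^ (p - 1)⁻¹ * w r ^ (-(p - 1)⁻¹)) (Ioi a) := by
    refine hu'.mono' hmeas ((ae_restrict_iff' measurableSet_Ioi).2 (ae_of_all _ fun r hr => ?_))
    rw [Real.norm_of_nonneg (hpos r hr)]
    exact hbound r hr
  have hε' : IsUnit (ε ^ (p - 1)⁻¹) := (Real.rpow_pos_of_pos hε _).ne'.isUnit
  exact hw.not_integrableOn ((integrable_const_mul_iff hε' _).1 hint)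

theorem exists_lt_weightedFlux (hw : IsParabolicWeight p w a) (hp : 1 < p)
    (hderiv : ∀ r ∈ Ici a, HasDerivWithinAt u (u' r) (Ici a) r) (hC : ∀ r ∈ Ici a, C ≤ u r)
    {ε : ℝ} (hε : ε < 0) : ∃ r ∈ Ioi a, ε < weightedFlux p w u' r := by
  obtain ⟨r, hr, hlt⟩ := hw.exists_weightedFlux_lt (u' := -u') hp
    (fun r hr => (hderiv r hr).neg) (fun r hr => neg_le_neg (hC r hr)) (neg_pos.2 hε)
  exact ⟨r, hr, neg_lt_neg_iff.1 (weightedFlux_neg ▸ hlt)⟩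

theorem weightedFlux_nonpos (hw : IsParabolicWeight p w a) (hp : 1 < p)
    (hderiv : ∀ r ∈ Ici a, HasDerivWithinAt u (u' r) (Ici a) r) (hC : ∀ r ∈ Ici a, u r ≤ C)
    (hmono : MonotoneOn (weightedFlux p w u') (Ici a)) :
    ∀ r ∈ Ici a, weightedFlux p w u' r ≤ 0 := by
  intro r hr
  have hsub : Ici r ⊆ Ici a := Ici_subset_Ici.2 hr
  by_contra! hpos
  obtain ⟨s, hs, hlt⟩ := (hw.mono hr).exists_weightedFlux_lt hp
    (fun s hs => (hderiv s (hsub hs)).mono hsub) (fun s hs => hC s (hsub hs)) hpos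
  exact hlt.not_ge (hmono hr (hsub (Ioi_subset_Ici_self hs)) (le_of_lt hs))

theorem tendsto_weightedFlux_zero (hw : IsParabolicWeight p w a) (hp : 1 < p)
    (hderiv : ∀ r ∈ Ici a, HasDerivWithinAt u (u' r) (Ici a) r) (hC : ∀ r ∈ Ici a, |u r| ≤ C)
    (hmono : MonotoneOn (weightedFlux p w u') (Ici a)) :
    Tendsto (weightedFlux p w u') atTop (𝓝 0) := by
  refine tendsto_order.2 ⟨fun ε hε => ?_, fun ε hε => ?_⟩
  · obtain ⟨r, hr, hlt⟩ :=
      hw.exists_lt_weightedFlux hp hderiv (fun r hr => (abs_le.1 (hC r hr)).1) hε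
    filter_upwards [eventually_ge_atTop r] with s hs
    exact hlt.trans_le (hmono (Ioi_subset_Ici_self hr) ((le_of_lt hr).trans hs) hs)
  · filter_upwards [eventually_ge_atTop a] with r hr
    have hnonpos : weightedFlux p w u' r ≤ 0 :=
      hw.weightedFlux_nonpos hp hderiv (fun r hr => (abs_le.1 (hC r hr)).2) hmono r hr
    exact hnonpos.trans_lt hε

end IsParabolicWeight

theorem stmt3_general {p r₀ C : ℝ} {w u u' f : ℝ → ℝ} (hp : 1 < p)
    (hw : IsParabolicWeight p w r₀)
    (hderiv : ∀ r ∈ Ici r₀, HasDerivWithinAt u (u' r) (Ici r₀) r)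
    (hu'c : ContinuousOn u' (Ici r₀)) (hC : ∀ r ∈ Ici r₀, |u r| ≤ C)
    (hf : ∀ r ∈ Ioi r₀, 0 ≤ f r)
    (hode : ∀ r ∈ Ioi r₀, HasDerivAt (weightedFlux p w u') (f r) r) :
    IntegrableOn f (Ioi r₀) ∧ w r₀ * |u' r₀| ^ (p - 1) = ∫ r in Ioi r₀, f r := by
  have hcont := continuousOn_weightedFlux hp hw.continuousOn hu'c
  have hmono := monotoneOn_Ici_of_hasDerivAt_nonneg hcont hode hf
  have hlim := hw.tendsto_weightedFlux_zero hp hderiv hC hmono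
  have hnonpos : weightedFlux p w u' r₀ ≤ 0 :=
    hw.weightedFlux_nonpos hp hderiv (fun r hr => (abs_le.1 (hC r hr)).2) hmono r₀ self_mem_Ici
  refine ⟨integrableOn_Ioi_deriv_of_nonneg (hcont r₀ self_mem_Ici) hode hf hlim, ?_⟩
  rw [integral_Ioi_of_hasDerivAt_of_nonneg (hcont r₀ self_mem_Ici) hode hf hlim, zero_sub,
    ← abs_of_nonpos hnonpos, abs_weightedFlux hp (hw.pos r₀ self_mem_Ici).le]

/-- For the exterior Dirichlet problem for `Δ_p u = u^q` on `(r₀,∞)`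
with `u(r₀)=1`, `u(∞)=0`, the weighted integral of `u^q` is finite and equals the
boundary flux `r₀^{d-1} |u'(r₀)|^{p-1}`. -/
theorem stmt3 (d : ℕ) (hd : 1 ≤ d) (p q r₀ : ℝ) (hp : (d : ℝ) < p) (hq : 0 < q)
    (hr₀ : 0 < r₀)
    (u u' : ℝ → ℝ)
    (hderiv : ∀ r ∈ Ici r₀, HasDerivWithinAt u (u' r) (Ici r₀) r)
    (hu'c : ContinuousOn u' (Ici r₀))
    (hmono : AntitoneOn u (Ici r₀))
    (hnonneg : ∀ r ∈ Ici r₀, 0 ≤ u r)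
    (hur₀ : u r₀ = 1)
    (hlim : Tendsto u atTop (𝓝 0))
    (hode : ∀ r ∈ Ioi r₀,
      HasDerivAt (fun s => s ^ (d - 1) * |u' s| ^ (p - 2) * u' s)
        (r ^ (d - 1) * u r ^ q) r) :
    IntegrableOn (fun r => r ^ (d - 1) * u r ^ q) (Ioi r₀) ∧
    r₀ ^ (d - 1) * |u' r₀| ^ (p - 1) = ∫ r in Ioi r₀, r ^ (d - 1) * u r ^ q := by
  have hp₁ : 1 < p := lt_of_le_of_lt (mod_cast hd) hp
  have hw : IsParabolicWeight p (fun r => r ^ (d - 1)) r₀ :=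
    isParabolicWeight_pow hp₁ (by push_cast [hd]; linarith) hr₀
  have habs : ∀ r ∈ Ici r₀, |u r| ≤ 1 := fun r hr => by
    rw [abs_of_nonneg (hnonneg r hr), ← hur₀]
    exact hmono self_mem_Ici hr hr
  have hsource : ∀ r ∈ Ioi r₀, 0 ≤ r ^ (d - 1) * u r ^ q := fun r hr =>
    mul_nonneg (pow_nonneg (hr₀.trans hr).le _)
      (Real.rpow_nonneg (hnonneg r (Ioi_subset_Ici_self hr)) q)
  exact stmt3_general hp₁ hw hderiv hu'c habs hsource hode
end

section
/- Let d ≥ 1 be an integer and p > d, q > 0 real numbers. There exists a continuously differentiable, nonincreasing, nonnegative function u : (0,∞) → ℝ with lim_{r→0⁺} u(r) = 1 and lim_{r→∞} u(r) = 0, such that the function r ↦ r^{d−1}|u'(r)|^{p−2}u'(r) is differentiable on (0,∞) with derivative r^{d−1} u(r)^q at every r > 0, u'(r) < 0 at every r with u(r) > 0, the integrals ∫_0^∞ r^{d−1}|u'(r)|^p dr, ∫_0^∞ r^{d−1} u(r)^{q+1} dr and ∫_0^∞ r^{d−1} u(r)^q dr are all finite, and ∫_0^∞ r^{d−1}|u'(r)|^p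 dr + ∫_0^∞ r^{d−1} u(r)^{q+1} dr = lim_{r→0⁺} r^{d−1}|u'(r)|^{p−1} = ∫_0^∞ r^{d−1} u(r)^q dr. -/
open Filter Set Topology MeasureTheory

/-!
In terms of the flux `w = r^(d-1) |u'|^(p-1)` the equation for a nonincreasing `u` is the Stieltjes
system `du = -w^(1/(p-1)) dA`, `dw = -u^q dG` with `A = r^γ / γ`, `γ = (p-d)/(p-1)`, `G = r^d / d`.
Both time scales are finite at the origin exactly because `p > d`, so `r = 0` is a regular point.

For such a system with nondecreasing laws, a semi-implicit Euler scheme started at `(c, b)` stays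
nonnegative for some `b`: otherwise for every `b` exactly one of `u` and `w` would become negative,
two open alternatives that split the connected line. Along these discrete solutions each increment
is bounded on both sides by values of the nonincreasing densities at the endpoints; these bounds
pass to an ultralimit as the step tends to zero, with no compactness beyond boundedness, and
characterize solutions. Uniqueness for the initial value problem, which may fail when the laws are
not Lipschitz, is never needed.

Since `A` and `G` are unbounded, nonnegativity forces `u` and `w` to vanish at infinity; integrating
`dw` and `d(u w)` over `(0, ∞)` then gives the two energy identities.
-/

/-- `-dU = φ dA` on `S` for a nonincreasing density `φ`, encoded by two-sided bounds on increments: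
they mention no integral, make sense on a grid as well as on an interval, and survive pointwise
limits. -/
def HasAntitoneDensityOn {ι : Type*} [Preorder ι] (U φ A : ι → ℝ) (S : Set ι) : Prop :=
  ∀ ⦃s⦄, s ∈ S → ∀ ⦃t⦄, t ∈ S → s ≤ t →
    U s - U t ∈ Icc (φ t * (A t - A s)) (φ s * (A t - A s))

namespace HasAntitoneDensityOn

section Preorder

variable {ι κ : Type*} [Preorder ι] {U φ A : ι → ℝ} {S : Set ι}

lemma mono (hU : HasAntitoneDensityOn U φ A S) {R : Set ι} (hRS : R ⊆ S) :
    HasAntitoneDensityOn U φ A R :=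
  fun _ hs _ ht hst ↦ hU (hRS hs) (hRS ht) hst

lemma comp_monotone [Preorder κ] (hU : HasAntitoneDensityOn U φ A S) {m : κ → ι}
    (hm : Monotone m) : HasAntitoneDensityOn (U ∘ m) (φ ∘ m) (A ∘ m) (m ⁻¹' S) :=
  fun _ hs _ ht hst ↦ hU hs ht (hm hst)

lemma of_tendsto {l : Filter κ} [l.NeBot] {V ψ B : κ → ι → ℝ}
    (hV : ∀ n, HasAntitoneDensityOn (V n) (ψ n) (B n) S)
    (hVU : ∀ t ∈ S, Tendsto (V · t) l (𝓝 (U t)))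
    (hψφ : ∀ t ∈ S, Tendsto (ψ · t) l (𝓝 (φ t)))
    (hBA : ∀ t ∈ S, Tendsto (B · t) l (𝓝 (A t))) :
    HasAntitoneDensityOn U φ A S := by
  intro s hs t ht hst
  have hdiffU := (hVU s hs).sub (hVU t ht)
  have hdiffA := (hBA t ht).sub (hBA s hs)
  exact ⟨le_of_tendsto_of_tendsto' ((hψφ t ht).mul hdiffA) hdiffU fun n ↦ (hV n hs ht hst).1,
    le_of_tendsto_of_tendsto' hdiffU ((hψφ s hs).mul hdiffA) fun n ↦ (hV n hs ht hst).2⟩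

lemma antitoneOn (hU : HasAntitoneDensityOn U φ A S) (hA : MonotoneOn A S)
    (hφ : ∀ t ∈ S, 0 ≤ φ t) : AntitoneOn U S := fun _ hs _ ht hst ↦
  sub_nonneg.1 <| (mul_nonneg (hφ _ ht) (sub_nonneg.2 (hA hs ht hst))).trans (hU hs ht hst).1

end Preorder

lemma of_succ {U φ A : ℕ → ℝ} (hA : Monotone A) (hφ : Antitone φ)
    (hU : ∀ k, U k - U (k + 1) ∈
      Icc (φ (k + 1) * (A (k + 1) - A k)) (φ k * (A (k + 1) - A k))) :
    HasAntitoneDensityOn U φ A univ := by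
  rintro i - j - hij
  induction j, hij using Nat.le_induction with
  | base => simp
  | succ j hij ih =>
    have hlower : φ (j + 1) * (A j - A i) ≤ φ j * (A j - A i) :=
      mul_le_mul_of_nonneg_right (hφ j.le_succ) (sub_nonneg.2 (hA hij))
    have hupper : φ j * (A (j + 1) - A j) ≤ φ i * (A (j + 1) - A j) :=
      mul_le_mul_of_nonneg_right (hφ hij) (sub_nonneg.2 (hA j.le_succ))
    exact ⟨by linarith [ih.1, (hU j).1], by linarith [ih.2, (hU j).2]⟩

section LinearOrder

variable {ι : Type*} [LinearOrder ι] {U φ A : ι → ℝ} {S : Set ι}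

lemma abs_sub_le (hU : HasAntitoneDensityOn U φ A S) {C : ℝ} (hφ : ∀ t ∈ S, |φ t| ≤ C)
    {s t : ι} (hs : s ∈ S) (ht : t ∈ S) : |U s - U t| ≤ C * |A s - A t| := by
  wlog hst : s ≤ t generalizing s t
  · rw [abs_sub_comm, abs_sub_comm (A s)]
    exact this ht hs (le_of_not_ge hst)
  have hbound : ∀ r ∈ S, |φ r * (A t - A s)| ≤ C * |A s - A t| := fun r hr ↦ by
    rw [abs_mul, abs_sub_comm (A t)]
    exact mul_le_mul_of_nonneg_right (hφ r hr) (abs_nonneg _)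
  exact abs_le.2 ⟨(neg_le_of_abs_le (hbound t ht)).trans (hU hs ht hst).1,
    (hU hs ht hst).2.trans (le_of_abs_le (hbound s hs))⟩

lemma continuousOn [TopologicalSpace ι] (hU : HasAntitoneDensityOn U φ A S)
    (hA : ContinuousOn A S) {C : ℝ} (hφ : ∀ t ∈ S, |φ t| ≤ C) : ContinuousOn U S := by
  intro t ht
  have hAt : Tendsto (fun s ↦ C * |A s - A t|) (𝓝[S] t) (𝓝 0) := by
    simpa using ((hA t ht).sub_const (A t)).abs.const_mul C
  refine tendsto_iff_norm_sub_tendsto_zero.2 <|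
    squeeze_zero' (.of_forall fun _ ↦ norm_nonneg _) ?_ hAt
  filter_upwards [self_mem_nhdsWithin] with s hs using hU.abs_sub_le hφ hs ht

lemma sub_add_mul_sub_mem_Icc (hU : HasAntitoneDensityOn U φ A S) {s t : ι}
    (hs : s ∈ S) (ht : t ∈ S) :
    U s - U t + φ t * (A s - A t) ∈ Icc 0 ((φ t - φ s) * (A s - A t)) := by
  rcases le_total s t with hst | hts
  · constructor <;> linarith [(hU hs ht hst).1, (hU hs ht hst).2]
  · constructor <;> linarith [(hU ht hs hts).1, (hU ht hs hts).2]

end LinearOrder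

variable {U φ A : ℝ → ℝ}

lemma hasDerivAt {S : Set ℝ} (hU : HasAntitoneDensityOn U φ A S) {t a : ℝ} (hS : S ∈ 𝓝 t)
    (hφ : ContinuousAt φ t) (hA : HasDerivAt A a t) : HasDerivAt U (-(φ t * a)) t := by
  have hremainder : (fun s ↦ (φ t - φ s) * (A s - A t)) =o[𝓝 t] fun s ↦ s - t := by
    have hφ' : (fun s ↦ φ t - φ s) =o[𝓝 t] fun _ ↦ (1 : ℝ) := by
      rw [Asymptotics.isLittleO_one_iff]
      simpa using (tendsto_const_nhds (x := φ t)).sub hφ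
    simpa only [one_mul] using hφ'.mul_isBigO hA.isBigO_sub
  have hzero : HasDerivAt (fun s ↦ U s + φ t * A s) 0 t := by
    refine .of_isLittleO (Asymptotics.IsBigO.trans_isLittleO (.of_bound 1 ?_) hremainder)
    filter_upwards [hS] with s hs
    have hmem := hU.sub_add_mul_sub_mem_Icc hs (mem_of_mem_nhds hS)
    have hrw : U s + φ t * A s - (U t + φ t * A t) - (s - t) • (0 : ℝ)
      = U s - U t + φ t * (A s - A t) := by rw [smul_zero]; ring
    rw [hrw, one_mul, Real.norm_of_nonneg hmem.1]
    exact hmem.2.trans (le_abs_self _)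
  simpa using hzero.fun_sub (hA.const_mul (φ t))

lemma tendsto_density_atTop (hU : HasAntitoneDensityOn U φ A (Ici 0))
    (hA : Tendsto A atTop atTop) (hφ : ∀ t, 0 ≤ φ t) (hU₀ : ∀ t, 0 ≤ U t) :
    Tendsto φ atTop (𝓝 0) := by
  have hdiff : Tendsto (fun t ↦ A t - A 0) atTop atTop :=
    tendsto_atTop_add_const_right _ _ hA
  refine squeeze_zero' (.of_forall hφ) ?_ (hdiff.const_div_atTop (U 0))
  filter_upwards [hdiff.eventually_gt_atTop 0, eventually_ge_atTop 0] with t hpos ht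
  rw [le_div_iff₀ hpos]
  linarith [(hU self_mem_Ici ht ht).1, hU₀ t]

end HasAntitoneDensityOn

/-- A constitutive law on `[0, ∞)`: continuous, nondecreasing, and zero exactly at `0`. Values at
negative arguments are irrelevant, so that `x ↦ x ^ q` qualifies for every `q > 0`. -/
structure IsMonotoneLaw (f : ℝ → ℝ) : Prop where
  continuousOn : ContinuousOn f (Ici 0)
  monotoneOn : MonotoneOn f (Ici 0)
  map_zero : f 0 = 0
  pos : ∀ x, 0 < x → 0 < f x

namespace IsMonotoneLaw

variable {f : ℝ → ℝ}

lemma nonneg (hf : IsMonotoneLaw f) {x : ℝ} (hx : 0 ≤ x) : 0 ≤ f x :=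
  hf.map_zero ▸ hf.monotoneOn self_mem_Ici hx hx

lemma continuous_comp_max (hf : IsMonotoneLaw f) : Continuous fun x ↦ f (max x 0) :=
  hf.continuousOn.comp_continuous (by fun_prop) fun _ ↦ mem_Ici.2 (le_max_right _ _)

lemma monotone_comp_max (hf : IsMonotoneLaw f) : Monotone fun x ↦ f (max x 0) :=
  fun _ _ hxy ↦ hf.monotoneOn (mem_Ici.2 (le_max_right _ _)) (mem_Ici.2 (le_max_right _ _))
    (max_le_max_right 0 hxy)

lemma tendsto_zero {ι : Type*} {l : Filter ι} {V : ι → ℝ} (hf : IsMonotoneLaw f)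
    (hV : ∀ i, 0 ≤ V i) (hfV : Tendsto (f ∘ V) l (𝓝 0)) : Tendsto V l (𝓝 0) := by
  refine tendsto_order.2 ⟨fun a ha ↦ .of_forall fun i ↦ ha.trans_le (hV i), fun ε hε ↦ ?_⟩
  filter_upwards [hfV.eventually_lt_const (hf.pos ε hε)] with i hi
  exact lt_of_not_ge fun hle ↦ (hf.monotoneOn hε.le (hV i) hle).not_gt hi

lemma tendsto_comp_max {ι : Type*} {l : Filter ι} {V : ι → ℝ} {x : ℝ} (hf : IsMonotoneLaw f)
    (hx : 0 ≤ x) (hV : Tendsto V l (𝓝 x)) : Tendsto (fun i ↦ f (max (V i) 0)) l (𝓝 (f x)) := by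
  have hcomp := (hf.continuous_comp_max.tendsto x).comp hV
  rwa [max_eq_left hx] at hcomp

lemma rpow {q : ℝ} (hq : 0 < q) : IsMonotoneLaw fun x ↦ x ^ q where
  continuousOn := (Real.continuous_rpow_const hq.le).continuousOn
  monotoneOn _ hx _ _ hxy := Real.rpow_le_rpow hx hxy hq.le
  map_zero := Real.zero_rpow hq.ne'
  pos _ hx := Real.rpow_pos_of_pos hx q

end IsMonotoneLaw

/-- The semi-implicit Euler scheme for `dU = -h(W) dA`, `dW = -f(U) dG`, started at `x`, where `A k`
and `G k` are the values at the `k`-th grid point. The laws are extended by zero to negative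
arguments; updating `W` with the *new* value of `U` keeps `U` and `W` from becoming negative in the
same step. -/
def eulerScheme (h f : ℝ → ℝ) (A G : ℕ → ℝ) (x : ℝ × ℝ) : ℕ → ℝ × ℝ
  | 0 => x
  | k + 1 =>
    let y := eulerScheme h f A G x k
    let u := y.1 - h (max y.2 0) * (A (k + 1) - A k)
    (u, y.2 - f (max u 0) * (G (k + 1) - G k))

namespace eulerScheme

variable {h f : ℝ → ℝ} {A G : ℕ → ℝ}

lemma fst_sub_fst_succ (x : ℝ × ℝ) (k : ℕ) :
    (eulerScheme h f A G x k).1 - (eulerScheme h f A G x (k + 1)).1 =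
      h (max (eulerScheme h f A G x k).2 0) * (A (k + 1) - A k) := by
  simp [eulerScheme]

lemma snd_sub_snd_succ (x : ℝ × ℝ) (k : ℕ) :
    (eulerScheme h f A G x k).2 - (eulerScheme h f A G x (k + 1)).2 =
      f (max (eulerScheme h f A G x (k + 1)).1 0) * (G (k + 1) - G k) := by
  simp [eulerScheme]

lemma continuous_start (hh : IsMonotoneLaw h) (hf : IsMonotoneLaw f) (k : ℕ) :
    Continuous fun x ↦ eulerScheme h f A G x k := by
  induction k with
  | zero => exact continuous_id
  | succ k ih =>
    have hu : Continuous fun x ↦ (eulerScheme h f A G x (k + 1)).1 :=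
      ih.fst.sub ((hh.continuous_comp_max.comp ih.snd).mul_const _)
    exact hu.prodMk (ih.snd.sub ((hf.continuous_comp_max.comp hu).mul_const _))

lemma nonneg_fst_or_nonneg_snd (hh : h 0 = 0) (hf : f 0 = 0) {x : ℝ × ℝ} (hx : 0 ≤ x.1) (k : ℕ) :
    0 ≤ (eulerScheme h f A G x k).1 ∨ 0 ≤ (eulerScheme h f A G x k).2 := by
  induction k with
  | zero => exact .inl hx
  | succ k ih =>
    by_contra! hneg
    have hsnd := snd_sub_snd_succ (h := h) (f := f) (A := A) (G := G) x k
    rw [max_eq_right hneg.1.le, hf, zero_mul] at hsnd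
    have hsnd_neg : (eulerScheme h f A G x k).2 < 0 := by linarith [hneg.2]
    have hfst := fst_sub_fst_succ (h := h) (f := f) (A := A) (G := G) x k
    rw [max_eq_right hsnd_neg.le, hh, zero_mul] at hfst
    rcases ih with hU | hW <;> linarith [hneg.1]

lemma antitone_fst (hh : IsMonotoneLaw h) (hA : Monotone A) (x : ℝ × ℝ) :
    Antitone fun k ↦ (eulerScheme h f A G x k).1 :=
  antitone_nat_of_succ_le fun k ↦ sub_nonneg.1 <| by
    rw [fst_sub_fst_succ]
    exact mul_nonneg (hh.nonneg (le_max_right _ _)) (sub_nonneg.2 (hA k.le_succ))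

lemma antitone_snd (hf : IsMonotoneLaw f) (hG : Monotone G) (x : ℝ × ℝ) :
    Antitone fun k ↦ (eulerScheme h f A G x k).2 :=
  antitone_nat_of_succ_le fun k ↦ sub_nonneg.1 <| by
    rw [snd_sub_snd_succ]
    exact mul_nonneg (hf.nonneg (le_max_right _ _)) (sub_nonneg.2 (hG k.le_succ))

variable (hh : IsMonotoneLaw h) (hf : IsMonotoneLaw f) (hA : Monotone A) (hG : Monotone G)

include hh hf hA hG

lemma hasAntitoneDensityOn_fst (x : ℝ × ℝ) :
    HasAntitoneDensityOn (fun k ↦ (eulerScheme h f A G x k).1)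
      (fun k ↦ h (max (eulerScheme h f A G x k).2 0)) A univ := by
  have hφ := hh.monotone_comp_max.comp_antitone (antitone_snd (h := h) (A := A) hf hG x)
  refine .of_succ hA hφ fun k ↦ ?_
  rw [fst_sub_fst_succ]
  exact ⟨mul_le_mul_of_nonneg_right (hφ k.le_succ) (sub_nonneg.2 (hA k.le_succ)), le_rfl⟩

lemma hasAntitoneDensityOn_snd (x : ℝ × ℝ) :
    HasAntitoneDensityOn (fun k ↦ (eulerScheme h f A G x k).2)
      (fun k ↦ f (max (eulerScheme h f A G x k).1 0)) G univ := by
  have hφ := hf.monotone_comp_max.comp_antitone (antitone_fst (f := f) (G := G) hh hA x)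
  refine .of_succ hG hφ fun k ↦ ?_
  rw [snd_sub_snd_succ]
  exact ⟨le_rfl, mul_le_mul_of_nonneg_right (hφ k.le_succ) (sub_nonneg.2 (hG k.le_succ))⟩

lemma fst_neg {x : ℝ × ℝ} {m : ℕ} (hx : 0 ≤ x.1) (hA' : x.1 < h 1 * (A m - A 0))
    (hG' : 1 + f x.1 * (G m - G 0) ≤ x.2) : (eulerScheme h f A G x m).1 < 0 := by
  have hsnd : x.2 - (eulerScheme h f A G x m).2 ≤ f x.1 * (G m - G 0) := by
    simpa only [eulerScheme, max_eq_left hx] using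
      (hasAntitoneDensityOn_snd hh hf hA hG x (mem_univ 0) (mem_univ m) m.zero_le).2
  have hfst : h (max (eulerScheme h f A G x m).2 0) * (A m - A 0) ≤
      x.1 - (eulerScheme h f A G x m).1 :=
    (hasAntitoneDensityOn_fst hh hf hA hG x (mem_univ 0) (mem_univ m) m.zero_le).1
  have hone : h 1 ≤ h (max (eulerScheme h f A G x m).2 0) :=
    hh.monotoneOn (mem_Ici.2 zero_le_one) (mem_Ici.2 (le_max_right _ _))
      (le_max_of_le_left (by linarith))
  linarith [mul_le_mul_of_nonneg_right hone (sub_nonneg.2 (hA m.zero_le))]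

/-- Shooting: the starting values `b` for which `U` becomes negative and those for which `W` does
form two disjoint nonempty open subsets of `ℝ`, hence they leave some `b` uncovered. -/
lemma exists_forall_nonneg {c : ℝ} (hc : 0 ≤ c) {m : ℕ} (hA' : c < h 1 * (A m - A 0)) :
    ∃ b ≤ 1 + f c * (G m - G 0), ∀ k,
      0 ≤ (eulerScheme h f A G (c, b) k).1 ∧ 0 ≤ (eulerScheme h f A G (c, b) k).2 := by
  let s : Set ℝ := ⋃ k, {b | (eulerScheme h f A G (c, b) k).1 < 0}
  let t : Set ℝ := ⋃ k, {b | (eulerScheme h f A G (c, b) k).2 < 0}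
  have hcont (k : ℕ) : Continuous fun b : ℝ ↦ eulerScheme h f A G (c, b) k :=
    (continuous_start hh hf k).comp (by fun_prop)
  have hs_open : IsOpen s := isOpen_iUnion fun k ↦ isOpen_lt (hcont k).fst continuous_const
  have ht_open : IsOpen t := isOpen_iUnion fun k ↦ isOpen_lt (hcont k).snd continuous_const
  have hs_large {b : ℝ} (hb : 1 + f c * (G m - G 0) ≤ b) : b ∈ s :=
    mem_iUnion.2 ⟨m, fst_neg hh hf hA hG hc hA' hb⟩
  have ht_neg : -1 ∈ t := mem_iUnion.2 ⟨0, by simp [eulerScheme]⟩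
  have hdisj : ¬(s ∩ t).Nonempty := by
    rintro ⟨b, hbs, hbt⟩
    obtain ⟨i, hi⟩ := mem_iUnion.1 hbs
    obtain ⟨j, hj⟩ := mem_iUnion.1 hbt
    rcases nonneg_fst_or_nonneg_snd hh.map_zero hf.map_zero (x := (c, b)) hc (max i j) with hk | hk
    · exact (hk.trans (antitone_fst hh hA _ (le_max_left i j))).not_gt hi
    · exact (hk.trans (antitone_snd hf hG _ (le_max_right i j))).not_gt hj
  obtain ⟨b, hb⟩ : ∃ b, b ∉ s ∪ t := by
    by_contra! hcover
    exact hdisj (nonempty_inter hs_open ht_open (eq_univ_of_forall hcover)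
      ⟨_, hs_large le_rfl⟩ ⟨_, ht_neg⟩)
  have hbs : b ∉ s := fun h ↦ hb (.inl h)
  have hbt : b ∉ t := fun h ↦ hb (.inr h)
  simp only [s, t, mem_iUnion, mem_ofPred_eq, not_exists, not_lt] at hbs hbt
  exact ⟨b, le_of_not_ge fun hle ↦ hb (.inl (hs_large hle)), fun k ↦ ⟨hbs k, hbt k⟩⟩

end eulerScheme

/-- A time scale on `[0, ∞)` against which a function can be integrated: continuous, nondecreasing
and unbounded. -/
structure IsTimeScale (A : ℝ → ℝ) : Prop where
  continuousOn : ContinuousOn A (Ici 0)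
  monotoneOn : MonotoneOn A (Ici 0)
  tendsto_atTop : Tendsto A atTop atTop

lemma isTimeScale_rpow_div {a : ℝ} (ha : 0 < a) : IsTimeScale fun r ↦ r ^ a / a where
  continuousOn := ((Real.continuous_rpow_const ha.le).div_const a).continuousOn
  monotoneOn _ hs _ _ hst :=
    div_le_div_of_nonneg_right (Real.rpow_le_rpow hs hst ha.le) ha.le
  tendsto_atTop := (tendsto_rpow_atTop ha).atTop_div_const ha

lemma hasDerivAt_rpow_div {a r : ℝ} (ha : a ≠ 0) (hr : 0 < r) :
    HasDerivAt (fun s ↦ s ^ a / a) (r ^ (a - 1)) r :=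
  ((Real.hasDerivAt_rpow_const (.inl hr.ne')).div_const a).congr_deriv (by field_simp)

/-- A global nonnegative solution of the Stieltjes system `dU = -h(W) dA`, `dW = -f(U) dG` on
`[0, ∞)`. -/
structure IsStieltjesSolution (A G h f U W : ℝ → ℝ) : Prop where
  nonneg_fst : ∀ t, 0 ≤ U t
  nonneg_snd : ∀ t, 0 ≤ W t
  density_fst : HasAntitoneDensityOn U (h ∘ W) A (Ici 0)
  density_snd : HasAntitoneDensityOn W (f ∘ U) G (Ici 0)

namespace IsStieltjesSolution

variable {A G h f U W : ℝ → ℝ}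

lemma swap (sol : IsStieltjesSolution A G h f U W) : IsStieltjesSolution G A f h W U :=
  ⟨sol.nonneg_snd, sol.nonneg_fst, sol.density_snd, sol.density_fst⟩

lemma antitoneOn_fst (sol : IsStieltjesSolution A G h f U W) (hA : IsTimeScale A)
    (hh : IsMonotoneLaw h) : AntitoneOn U (Ici 0) :=
  sol.density_fst.antitoneOn hA.monotoneOn fun t _ ↦ hh.nonneg (sol.nonneg_snd t)

lemma tendsto_fst_atTop (sol : IsStieltjesSolution A G h f U W) (hG : IsTimeScale G)
    (hf : IsMonotoneLaw f) : Tendsto U atTop (𝓝 0) :=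
  hf.tendsto_zero sol.nonneg_fst <| sol.density_snd.tendsto_density_atTop hG.tendsto_atTop
    (fun t ↦ hf.nonneg (sol.nonneg_fst t)) sol.nonneg_snd

lemma continuousOn_fst (sol : IsStieltjesSolution A G h f U W) (hA : IsTimeScale A)
    (hG : IsTimeScale G) (hh : IsMonotoneLaw h) (hf : IsMonotoneLaw f) :
    ContinuousOn U (Ici 0) := by
  refine sol.density_fst.continuousOn hA.continuousOn (C := h (W 0)) fun t ht ↦ ?_
  rw [Function.comp_apply, abs_of_nonneg (hh.nonneg (sol.nonneg_snd t))]
  exact hh.monotoneOn (sol.nonneg_snd t) (sol.nonneg_snd 0)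
    (sol.swap.antitoneOn_fst hG hf self_mem_Ici ht ht)

lemma hasDerivAt_fst (sol : IsStieltjesSolution A G h f U W) (hA : IsTimeScale A)
    (hG : IsTimeScale G) (hh : IsMonotoneLaw h) (hf : IsMonotoneLaw f) {t a : ℝ} (ht : 0 < t)
    (ha : HasDerivAt A a t) : HasDerivAt U (-(h (W t) * a)) t := by
  have hdensity : ContinuousOn (h ∘ W) (Ici 0) :=
    hh.continuousOn.comp (sol.swap.continuousOn_fst hG hA hf hh) fun t _ ↦ sol.nonneg_snd t
  exact sol.density_fst.hasDerivAt (Ici_mem_nhds ht) (hdensity.continuousAt (Ici_mem_nhds ht)) ha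

/-- If `W` vanished at `t`, it would vanish from then on, so `U` would be constant from `t` on, and
`dW = -f(U) dG` would drive `W` below zero. -/
lemma snd_pos (sol : IsStieltjesSolution A G h f U W) (hA : IsTimeScale A) (hG : IsTimeScale G)
    (hh : IsMonotoneLaw h) (hf : IsMonotoneLaw f) {t : ℝ} (ht : 0 ≤ t) (hU : 0 < U t) :
    0 < W t := by
  by_contra! hle
  have hWt : W t = 0 := hle.antisymm (sol.nonneg_snd t)
  obtain ⟨x, hGx, htx⟩ :=
    ((hG.tendsto_atTop.eventually_gt_atTop (G t)).and (eventually_ge_atTop t)).exists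
  have hx : 0 ≤ x := ht.trans htx
  have hUx : U x = U t := by
    have hdrop := (sol.density_fst ht hx htx).2
    rw [Function.comp_apply, hWt, hh.map_zero, zero_mul] at hdrop
    exact (sol.antitoneOn_fst hA hh ht hx htx).antisymm (by linarith)
  have hdrop : f (U x) * (G x - G t) ≤ W t - W x := (sol.density_snd ht hx htx).1
  rw [hUx] at hdrop
  linarith [mul_pos (hf.pos _ hU) (sub_pos.2 hGx), sol.nonneg_snd x]

end IsStieltjesSolution

lemma exists_forall_tendsto_of_forall_mem_Icc {ι κ : Type*} (F : Ultrafilter κ) {V : κ → ι → ℝ}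
    {a b : ℝ} (hV : ∀ n t, V n t ∈ Icc a b) :
    ∃ v : ι → ℝ, (∀ t, v t ∈ Icc a b) ∧ ∀ t, Tendsto (V · t) F (𝓝 (v t)) := by
  have hlim (t : ι) : ∃ x ∈ Icc a b, Tendsto (V · t) F (𝓝 x) :=
    isCompact_Icc.ultrafilter_le_nhds' (F.map (V · t)) (mem_map.2 (univ_mem' (hV · t)))
  choose v hv using hlim
  exact ⟨v, fun t ↦ (hv t).1, fun t ↦ (hv t).2⟩

/-- The `k`-th point of the uniform grid of step `1 / (n + 1)` on `[0, ∞)`. -/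
noncomputable def gridPoint (n k : ℕ) : ℝ := k / (n + 1)

/-- The index of the last point of the grid of step `1 / (n + 1)` not exceeding `t`; it is `0` for
negative `t`. -/
noncomputable def gridIndex (n : ℕ) (t : ℝ) : ℕ := ⌊t * (n + 1)⌋₊

lemma gridPoint_nonneg (n k : ℕ) : 0 ≤ gridPoint n k := by unfold gridPoint; positivity

lemma monotone_gridPoint (n : ℕ) : Monotone (gridPoint n) := fun i j hij ↦ by
  unfold gridPoint; gcongr

lemma monotone_gridIndex (n : ℕ) : Monotone (gridIndex n) := fun s t hst ↦
  Nat.floor_mono (by gcongr)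

lemma tendsto_gridPoint_gridIndex {t : ℝ} (ht : 0 ≤ t) :
    Tendsto (fun n ↦ gridPoint n (gridIndex n t)) atTop (𝓝 t) :=
  (tendsto_nat_floor_mul_div_atTop ht).comp
    (tendsto_atTop_add_const_right _ 1 tendsto_natCast_atTop_atTop)

lemma IsTimeScale.monotone_comp_gridPoint {A : ℝ → ℝ} (hA : IsTimeScale A) (n : ℕ) :
    Monotone (A ∘ gridPoint n) := fun _ _ hij ↦
  hA.monotoneOn (gridPoint_nonneg n _) (gridPoint_nonneg n _) (monotone_gridPoint n hij)

lemma HasAntitoneDensityOn.of_tendsto_grid {U φ A : ℝ → ℝ} {l : Filter ℕ} [l.NeBot]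
    {V ψ : ℕ → ℕ → ℝ} (hV : ∀ n, HasAntitoneDensityOn (V n) (ψ n) (A ∘ gridPoint n) univ)
    (hA : ContinuousOn A (Ici 0)) (hl : l ≤ atTop)
    (hVU : ∀ t, Tendsto (fun n ↦ V n (gridIndex n t)) l (𝓝 (U t)))
    (hψφ : ∀ t, Tendsto (fun n ↦ ψ n (gridIndex n t)) l (𝓝 (φ t))) :
    HasAntitoneDensityOn U φ A (Ici 0) := by
  refine .of_tendsto (fun n ↦ ((hV n).comp_monotone (monotone_gridIndex n)).mono (subset_univ _))
    (fun t _ ↦ hVU t) (fun t _ ↦ hψφ t) fun t ht ↦ ?_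
  have hgrid : Tendsto (fun n ↦ gridPoint n (gridIndex n t)) l (𝓝[Ici 0] t) :=
    tendsto_nhdsWithin_iff.2
      ⟨(tendsto_gridPoint_gridIndex ht).mono_left hl, .of_forall fun n ↦ gridPoint_nonneg n _⟩
  exact (hA t ht).tendsto.comp hgrid

section Existence

variable {A G h f : ℝ → ℝ}

lemma exists_forall_nonneg_eulerScheme (hA : IsTimeScale A) (hG : IsTimeScale G)
    (hh : IsMonotoneLaw h) (hf : IsMonotoneLaw f) {c : ℝ} (hc : 0 ≤ c) :
    ∃ M, ∀ n, ∃ b ≤ M, ∀ k,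
      0 ≤ (eulerScheme h f (A ∘ gridPoint n) (G ∘ gridPoint n) (c, b) k).1 ∧
      0 ≤ (eulerScheme h f (A ∘ gridPoint n) (G ∘ gridPoint n) (c, b) k).2 := by
  obtain ⟨T, hT⟩ : ∃ T : ℕ, c < h 1 * (A T - A 0) := by
    have hlim : Tendsto (fun T : ℕ ↦ h 1 * (A T - A 0)) atTop atTop :=
      (tendsto_atTop_add_const_right _ (-A 0)
        (hA.tendsto_atTop.comp tendsto_natCast_atTop_atTop)).const_mul_atTop (hh.pos 1 one_pos)
    exact (hlim.eventually_gt_atTop c).exists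
  refine ⟨1 + f c * (G T - G 0), fun n ↦ ?_⟩
  have hgridT : gridPoint n (T * (n + 1)) = T := by unfold gridPoint; push_cast; field_simp
  have hgrid0 : gridPoint n 0 = 0 := by simp [gridPoint]
  simpa [hgridT, hgrid0] using eulerScheme.exists_forall_nonneg hh hf
    (hA.monotone_comp_gridPoint n) (hG.monotone_comp_gridPoint n) hc (m := T * (n + 1))
    (by simpa [hgridT, hgrid0] using hT)

theorem exists_isStieltjesSolution (hA : IsTimeScale A) (hG : IsTimeScale G)
    (hh : IsMonotoneLaw h) (hf : IsMonotoneLaw f) {c : ℝ} (hc : 0 ≤ c) :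
    ∃ U W, IsStieltjesSolution A G h f U W ∧ U 0 = c := by
  obtain ⟨M, hM⟩ := exists_forall_nonneg_eulerScheme hA hG hh hf hc
  choose b hbM hb using hM
  let X (n : ℕ) : ℕ → ℝ × ℝ := eulerScheme h f (A ∘ gridPoint n) (G ∘ gridPoint n) (c, b n)
  have hAn := hA.monotone_comp_gridPoint
  have hGn := hG.monotone_comp_gridPoint
  have hle : (hyperfilter ℕ : Filter ℕ) ≤ atTop := Nat.hyperfilter_le_atTop
  obtain ⟨U, hU, hXU⟩ := exists_forall_tendsto_of_forall_mem_Icc (hyperfilter ℕ)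
    (V := fun n t ↦ (X n (gridIndex n t)).1) (a := 0) (b := c) fun n t ↦
      ⟨(hb n _).1, eulerScheme.antitone_fst hh (hAn n) _ (Nat.zero_le _)⟩
  obtain ⟨W, hW, hXW⟩ := exists_forall_tendsto_of_forall_mem_Icc (hyperfilter ℕ)
    (V := fun n t ↦ (X n (gridIndex n t)).2) (a := 0) (b := M) fun n t ↦
      ⟨(hb n _).2, (eulerScheme.antitone_snd hf (hGn n) _ (Nat.zero_le _)).trans (hbM n)⟩
  refine ⟨U, W, ⟨fun t ↦ (hU t).1, fun t ↦ (hW t).1, ?_, ?_⟩, ?_⟩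
  · exact .of_tendsto_grid
      (fun n ↦ eulerScheme.hasAntitoneDensityOn_fst hh hf (hAn n) (hGn n) (c, b n))
      hA.continuousOn hle hXU fun t ↦ hh.tendsto_comp_max (hW t).1 (hXW t)
  · exact .of_tendsto_grid
      (fun n ↦ eulerScheme.hasAntitoneDensityOn_snd hh hf (hAn n) (hGn n) (c, b n))
      hG.continuousOn hle hXW fun t ↦ hf.tendsto_comp_max (hU t).1 (hXU t)
  · refine tendsto_nhds_unique (hXU 0) ?_
    simp [X, gridIndex, eulerScheme]

end Existence

lemma integrableOn_Ioi_and_integral_eq_of_hasDerivAt_neg {F φ : ℝ → ℝ} {a : ℝ}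
    (hcont : ContinuousWithinAt F (Ici a) a) (hderiv : ∀ r ∈ Ioi a, HasDerivAt F (-φ r) r)
    (hφ : ∀ r ∈ Ioi a, 0 ≤ φ r) (hlim : Tendsto F atTop (𝓝 0)) :
    IntegrableOn φ (Ioi a) ∧ ∫ r in Ioi a, φ r = F a := by
  have hneg : ∀ r ∈ Ioi a, -φ r ≤ 0 := fun r hr ↦ neg_nonpos.2 (hφ r hr)
  constructor
  · simpa using (integrableOn_Ioi_deriv_of_nonpos hcont hderiv hneg hlim).fun_neg
  · simpa [integral_neg] using integral_Ioi_of_hasDerivAt_of_nonpos hcont hderiv hneg hlim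

/-- The radial equation `(r^(d-1) |u'|^(p-2) u')' = r^(d-1) f(u)` for a nonincreasing `u`, in terms
of `u` and its flux `w = r^(d-1) |u'|^(p-1)`. Solving for `u'` gives
`u' = -w^(1/(p-1)) r^((1-d)/(p-1))`, so that `u` decreases along the time scale `r^γ / γ` with
`γ = (p-d)/(p-1)`, and `w` along `r^d / d`. -/
abbrev IsRadialSolution (d p : ℝ) (f u w : ℝ → ℝ) : Prop :=
  IsStieltjesSolution (fun r ↦ r ^ ((p - d) / (p - 1)) / ((p - d) / (p - 1))) (fun r ↦ r ^ d / d)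
    (fun x ↦ x ^ (p - 1)⁻¹) f u w

/-- The derivative of a nonincreasing radial function, recovered from its flux
`w = r^(d-1) |u'|^(p-1)`. -/
noncomputable def radialSlope (d p : ℝ) (w : ℝ → ℝ) (r : ℝ) : ℝ :=
  -(w r ^ (p - 1)⁻¹ * r ^ ((1 - d) / (p - 1)))

namespace radialSlope

variable {d p r : ℝ} {w : ℝ → ℝ}

lemma nonpos (hw : 0 ≤ w r) (hr : 0 ≤ r) : radialSlope d p w r ≤ 0 := by
  unfold radialSlope
  exact neg_nonpos.2 (by positivity)

lemma neg (hw : 0 < w r) (hr : 0 < r) : radialSlope d p w r < 0 := by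
  unfold radialSlope
  exact neg_neg_iff_pos.2 (by positivity)

lemma rpow_mul_abs_rpow (hp : p ≠ 1) (hw : 0 ≤ w r) (hr : 0 < r) :
    r ^ (d - 1) * |radialSlope d p w r| ^ (p - 1) = w r := by
  have hp' : p - 1 ≠ 0 := sub_ne_zero.2 hp
  have hcancel : r ^ (d - 1) * r ^ (1 - d) = 1 := by
    rw [← Real.rpow_add hr, sub_add_sub_cancel, sub_self, Real.rpow_zero]
  rw [radialSlope, abs_neg, abs_of_nonneg (by positivity),
    Real.mul_rpow (by positivity) (by positivity), Real.rpow_inv_rpow hw hp', ← Real.rpow_mul hr.le,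
    div_mul_cancel₀ _ hp', mul_left_comm, hcancel, mul_one]

lemma rpow_mul_abs_rpow_mul (hp : p ≠ 1) (hw : 0 ≤ w r) (hr : 0 < r) :
    r ^ (d - 1) * |radialSlope d p w r| ^ (p - 2) * radialSlope d p w r = -w r := by
  set s := radialSlope d p w r with hs
  have hsplit : |s| ^ (p - 1) = |s| ^ (p - 2) * |s| := by
    rw [← Real.rpow_add_one' (abs_nonneg s) (by contrapose! hp; linarith)]
    ring_nf
  rw [← rpow_mul_abs_rpow hp hw hr, ← hs, hsplit, abs_of_nonpos (nonpos hw hr.le)]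
  ring

lemma rpow_mul_abs_rpow_self (hp : 1 < p) (hw : 0 ≤ w r) (hr : 0 < r) :
    r ^ (d - 1) * |radialSlope d p w r| ^ p = -(radialSlope d p w r * w r) := by
  set s := radialSlope d p w r with hs
  have hsplit : |s| ^ p = |s| ^ (p - 1) * |s| := by
    rw [← Real.rpow_add_one' (abs_nonneg s) (by linarith), sub_add_cancel]
  rw [hsplit, ← mul_assoc, rpow_mul_abs_rpow hp.ne' hw hr, hs, abs_of_nonpos (nonpos hw hr.le)]
  ring

end radialSlope

lemma isTimeScale_radial {d p : ℝ} (hp : 1 < p) (hdp : d < p) :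
    IsTimeScale fun r ↦ r ^ ((p - d) / (p - 1)) / ((p - d) / (p - 1)) :=
  isTimeScale_rpow_div (div_pos (sub_pos.2 hdp) (sub_pos.2 hp))

lemma isMonotoneLaw_radial {p : ℝ} (hp : 1 < p) : IsMonotoneLaw fun x ↦ x ^ (p - 1)⁻¹ :=
  .rpow (inv_pos.2 (sub_pos.2 hp))

namespace IsRadialSolution

variable {d p : ℝ} {f u w : ℝ → ℝ} (sol : IsRadialSolution d p f u w) (hd : 0 < d) (hp : 1 < p)
  (hdp : d < p) (hf : IsMonotoneLaw f)

include sol hd hp hdp hf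

lemma continuousOn : ContinuousOn u (Ici 0) :=
  sol.continuousOn_fst (isTimeScale_radial hp hdp) (isTimeScale_rpow_div hd)
    (isMonotoneLaw_radial hp) hf

lemma continuousOn_flux : ContinuousOn w (Ici 0) :=
  sol.swap.continuousOn_fst (isTimeScale_rpow_div hd) (isTimeScale_radial hp hdp) hf
    (isMonotoneLaw_radial hp)

lemma hasDerivAt {r : ℝ} (hr : 0 < r) : HasDerivAt u (radialSlope d p w r) r := by
  have hp' : p - 1 ≠ 0 := (sub_pos.2 hp).ne'
  have hscale := hasDerivAt_rpow_div (div_pos (sub_pos.2 hdp) (sub_pos.2 hp)).ne' hr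
  have hexp : (p - d) / (p - 1) - 1 = (1 - d) / (p - 1) := by field_simp; ring
  rw [hexp] at hscale
  exact sol.hasDerivAt_fst (isTimeScale_radial hp hdp) (isTimeScale_rpow_div hd)
    (isMonotoneLaw_radial hp) hf hr hscale

lemma hasDerivAt_flux {r : ℝ} (hr : 0 < r) : HasDerivAt w (-(r ^ (d - 1) * f (u r))) r := by
  rw [mul_comm]
  exact sol.swap.hasDerivAt_fst (isTimeScale_rpow_div hd) (isTimeScale_radial hp hdp) hf
    (isMonotoneLaw_radial hp) hr (hasDerivAt_rpow_div hd.ne' hr)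

lemma continuousOn_slope : ContinuousOn (radialSlope d p w) (Ioi 0) := by
  have hw : ContinuousOn w (Ioi 0) :=
    (sol.continuousOn_flux hd hp hdp hf).mono Ioi_subset_Ici_self
  have hpow : ContinuousOn (fun r ↦ w r ^ (p - 1)⁻¹) (Ioi 0) :=
    hw.rpow_const fun _ _ ↦ .inr (inv_pos.2 (sub_pos.2 hp)).le
  exact (hpow.mul (continuousOn_id.rpow_const fun _ hr ↦ .inl (ne_of_gt hr))).neg

lemma slope_neg {r : ℝ} (hr : 0 < r) (hu : 0 < u r) : radialSlope d p w r < 0 :=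
  radialSlope.neg (sol.snd_pos (isTimeScale_radial hp hdp) (isTimeScale_rpow_div hd)
    (isMonotoneLaw_radial hp) hf hr.le hu) hr

lemma hasDerivAt_signed_flux {r : ℝ} (hr : 0 < r) :
    HasDerivAt (fun s ↦ s ^ (d - 1) * |radialSlope d p w s| ^ (p - 2) * radialSlope d p w s)
      (r ^ (d - 1) * f (u r)) r := by
  have hflux := (sol.hasDerivAt_flux hd hp hdp hf hr).fun_neg
  rw [neg_neg] at hflux
  refine hflux.congr_of_eventuallyEq ?_
  filter_upwards [Ioi_mem_nhds hr] with s hs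
  exact radialSlope.rpow_mul_abs_rpow_mul hp.ne' (sol.nonneg_snd s) hs

lemma tendsto_flux :
    Tendsto (fun r ↦ r ^ (d - 1) * |radialSlope d p w r| ^ (p - 1)) (𝓝[>] 0) (𝓝 (w 0)) := by
  have hw := (sol.continuousOn_flux hd hp hdp hf 0 self_mem_Ici).mono Ioi_subset_Ici_self
  refine Tendsto.congr' ?_ hw
  filter_upwards [self_mem_nhdsWithin] with r hr
  exact (radialSlope.rpow_mul_abs_rpow hp.ne' (sol.nonneg_snd r) hr).symm

lemma integrableOn_and_integral_eq_flux :
    IntegrableOn (fun r ↦ r ^ (d - 1) * f (u r)) (Ioi 0) ∧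
      ∫ r in Ioi 0, r ^ (d - 1) * f (u r) = w 0 :=
  integrableOn_Ioi_and_integral_eq_of_hasDerivAt_neg
    (sol.continuousOn_flux hd hp hdp hf 0 self_mem_Ici)
    (fun _ hr ↦ sol.hasDerivAt_flux hd hp hdp hf hr)
    (fun r hr ↦ mul_nonneg (Real.rpow_nonneg (le_of_lt hr) _) (hf.nonneg (sol.nonneg_fst r)))
    (sol.swap.tendsto_fst_atTop (isTimeScale_radial hp hdp) (isMonotoneLaw_radial hp))

lemma hasDerivAt_mul_flux {r : ℝ} (hr : 0 < r) :
    HasDerivAt (fun r ↦ u r * w r)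
      (-(r ^ (d - 1) * |radialSlope d p w r| ^ p + r ^ (d - 1) * (u r * f (u r)))) r := by
  refine ((sol.hasDerivAt hd hp hdp hf hr).fun_mul
    (sol.hasDerivAt_flux hd hp hdp hf hr)).congr_deriv ?_
  rw [radialSlope.rpow_mul_abs_rpow_self hp (sol.nonneg_snd r) hr]
  ring

lemma integrableOn_and_integral_add_eq_mul_flux :
    IntegrableOn (fun r ↦ r ^ (d - 1) * |radialSlope d p w r| ^ p) (Ioi 0) ∧
      IntegrableOn (fun r ↦ r ^ (d - 1) * (u r * f (u r))) (Ioi 0) ∧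
      (∫ r in Ioi 0, r ^ (d - 1) * |radialSlope d p w r| ^ p) +
        (∫ r in Ioi 0, r ^ (d - 1) * (u r * f (u r))) = u 0 * w 0 := by
  have hgrad : ∀ r ∈ Ioi (0 : ℝ), 0 ≤ r ^ (d - 1) * |radialSlope d p w r| ^ p := fun r hr ↦
    mul_nonneg (Real.rpow_nonneg (le_of_lt hr) _) (Real.rpow_nonneg (abs_nonneg _) _)
  have hpot : ∀ r ∈ Ioi (0 : ℝ), 0 ≤ r ^ (d - 1) * (u r * f (u r)) := fun r hr ↦
    mul_nonneg (Real.rpow_nonneg (le_of_lt hr) _)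
      (mul_nonneg (sol.nonneg_fst r) (hf.nonneg (sol.nonneg_fst r)))
  have hlim : Tendsto (fun r ↦ u r * w r) atTop (𝓝 0) := by
    simpa using (sol.tendsto_fst_atTop (isTimeScale_rpow_div hd) hf).mul
      (sol.swap.tendsto_fst_atTop (isTimeScale_radial hp hdp) (isMonotoneLaw_radial hp))
  obtain ⟨hsum, hvalue⟩ := integrableOn_Ioi_and_integral_eq_of_hasDerivAt_neg
    (((sol.continuousOn hd hp hdp hf).mul (sol.continuousOn_flux hd hp hdp hf)) 0 self_mem_Ici)
    (fun _ hr ↦ sol.hasDerivAt_mul_flux hd hp hdp hf hr)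
    (fun r hr ↦ add_nonneg (hgrad r hr) (hpot r hr)) hlim
  have hmeas : AEStronglyMeasurable (fun r ↦ r ^ (d - 1) * |radialSlope d p w r| ^ p)
      (volume.restrict (Ioi 0)) :=
    ((continuousOn_id.rpow_const fun _ hr ↦ .inl (ne_of_gt hr)).mul
      ((sol.continuousOn_slope hd hp hdp hf).abs.rpow_const fun _ _ ↦
        .inr (by linarith))).aestronglyMeasurable measurableSet_Ioi
  obtain ⟨hint_grad, hint_pot⟩ := (integrable_add_iff_of_nonneg hmeas
    (ae_restrict_of_forall_mem measurableSet_Ioi hgrad)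
    (ae_restrict_of_forall_mem measurableSet_Ioi hpot)).1 hsum
  exact ⟨hint_grad, hint_pot, (integral_add hint_grad hint_pot).symm.trans hvalue⟩

end IsRadialSolution

theorem stmt5_general {d p : ℝ} (hd : 0 < d) (hp : 1 < p) (hdp : d < p) {f : ℝ → ℝ}
    (hf : IsMonotoneLaw f) {c : ℝ} (hc : 0 ≤ c) :
    ∃ u u' : ℝ → ℝ,
      (∀ r ∈ Ioi (0 : ℝ), HasDerivAt u (u' r) r) ∧
      ContinuousOn u' (Ioi 0) ∧
      AntitoneOn u (Ioi 0) ∧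
      (∀ r, 0 ≤ u r) ∧
      Tendsto u (𝓝[>] 0) (𝓝 c) ∧
      Tendsto u atTop (𝓝 0) ∧
      (∀ r ∈ Ioi (0 : ℝ), HasDerivAt (fun s ↦ s ^ (d - 1) * |u' s| ^ (p - 2) * u' s)
        (r ^ (d - 1) * f (u r)) r) ∧
      (∀ r ∈ Ioi (0 : ℝ), 0 < u r → u' r < 0) ∧
      IntegrableOn (fun r ↦ r ^ (d - 1) * |u' r| ^ p) (Ioi 0) ∧
      IntegrableOn (fun r ↦ r ^ (d - 1) * (u r * f (u r))) (Ioi 0) ∧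
      IntegrableOn (fun r ↦ r ^ (d - 1) * f (u r)) (Ioi 0) ∧
      Tendsto (fun r ↦ r ^ (d - 1) * |u' r| ^ (p - 1)) (𝓝[>] 0)
        (𝓝 (∫ r in Ioi 0, r ^ (d - 1) * f (u r))) ∧
      (∫ r in Ioi 0, r ^ (d - 1) * |u' r| ^ p) + (∫ r in Ioi 0, r ^ (d - 1) * (u r * f (u r))) =
        c * ∫ r in Ioi 0, r ^ (d - 1) * f (u r) := by
  have hA := isTimeScale_radial hp hdp
  have hG := isTimeScale_rpow_div hd
  have hh := isMonotoneLaw_radial hp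
  obtain ⟨u, w, sol, rfl⟩ : ∃ u w, IsRadialSolution d p f u w ∧ u 0 = c :=
    exists_isStieltjesSolution hA hG hh hf hc
  obtain ⟨hint, hflux⟩ := sol.integrableOn_and_integral_eq_flux hd hp hdp hf
  obtain ⟨hint_grad, hint_pot, henergy⟩ :=
    sol.integrableOn_and_integral_add_eq_mul_flux hd hp hdp hf
  refine ⟨u, radialSlope d p w, ?_⟩
  rw [hflux]
  exact ⟨fun r hr ↦ sol.hasDerivAt hd hp hdp hf hr,
    sol.continuousOn_slope hd hp hdp hf, (sol.antitoneOn_fst hA hh).mono Ioi_subset_Ici_self,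
    sol.nonneg_fst, (sol.continuousOn hd hp hdp hf 0 self_mem_Ici).mono Ioi_subset_Ici_self,
    sol.tendsto_fst_atTop hG hf, fun r hr ↦ sol.hasDerivAt_signed_flux hd hp hdp hf hr,
    fun r hr ↦ sol.slope_neg hd hp hdp hf hr, hint_grad, hint_pot, hint,
    sol.tendsto_flux hd hp hdp hf, henergy⟩

/-- Existence of a `C¹` nonincreasing nonnegative solution of the
Euler-Lagrange equation `Δ_p u = u^q` on `(0,∞)` with `u(0⁺)=1`, `u(∞)=0`,
satisfying the energy identities. -/
theorem stmt5 (d : ℕ) (hd : 1 ≤ d) (p q : ℝ) (hp : (d : ℝ) < p) (hq : 0 < q) :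
    ∃ u u' : ℝ → ℝ,
      (∀ r ∈ Ioi (0:ℝ), HasDerivAt u (u' r) r) ∧
      ContinuousOn u' (Ioi 0) ∧
      AntitoneOn u (Ioi 0) ∧
      (∀ r ∈ Ioi (0:ℝ), 0 ≤ u r) ∧
      Tendsto u (𝓝[>] 0) (𝓝 1) ∧
      Tendsto u atTop (𝓝 0) ∧
      (∀ r ∈ Ioi (0:ℝ),
        HasDerivAt (fun s => s ^ (d - 1) * |u' s| ^ (p - 2) * u' s)
          (r ^ (d - 1) * u r ^ q) r) ∧
      (∀ r ∈ Ioi (0:ℝ), 0 < u r → u' r < 0) ∧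
      IntegrableOn (fun r => r ^ (d - 1) * |u' r| ^ p) (Ioi 0) ∧
      IntegrableOn (fun r => r ^ (d - 1) * u r ^ (q + 1)) (Ioi 0) ∧
      IntegrableOn (fun r => r ^ (d - 1) * u r ^ q) (Ioi 0) ∧
      Tendsto (fun r => r ^ (d - 1) * |u' r| ^ (p - 1)) (𝓝[>] 0)
        (𝓝 ((∫ r in Ioi (0:ℝ), r ^ (d - 1) * |u' r| ^ p) +
             ∫ r in Ioi (0:ℝ), r ^ (d - 1) * u r ^ (q + 1))) ∧
      (∫ r in Ioi (0:ℝ), r ^ (d - 1) * |u' r| ^ p) +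
          (∫ r in Ioi (0:ℝ), r ^ (d - 1) * u r ^ (q + 1))
        = ∫ r in Ioi (0:ℝ), r ^ (d - 1) * u r ^ q := by
  have hd' : (1 : ℝ) ≤ d := mod_cast hd
  obtain ⟨u, u', hderiv, hcont, hanti, hnonneg, hzero, htop, hflux_deriv, hneg, hgrad, hpot, hint,
      hflux, henergy⟩ :=
    stmt5_general (one_pos.trans_le hd') (hd'.trans_lt hp) hp (.rpow hq) zero_le_one
  have hpow (r : ℝ) : u r * u r ^ q = u r ^ (q + 1) := by
    rw [Real.rpow_add_one' (hnonneg r) (by linarith), mul_comm]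
  simp only [← Nat.cast_pred hd, Real.rpow_natCast, hpow, one_mul]
    at hflux_deriv hgrad hpot hint hflux henergy
  exact ⟨u, u', hderiv, hcont, hanti, fun r _ ↦ hnonneg r, hzero, htop, hflux_deriv, hneg, hgrad,
    hpot, hint, henergy ▸ hflux, henergy⟩
end

section
/- Let p > 1 and q ≥ 0 be real numbers, and set θ = p/(p + (p−1)(q+1)) and C = ((p + (p−1)(q+1))/(2p))^{p/(p + (p−1)(q+1))}. Then for every continuously differentiable function u : ℝ → ℝ with ∫_ℝ |u(x)|^{q+1} dx < ∞ and ∫_ℝ |u'(x)|^p dx < ∞, one has sup_{x∈ℝ} |u(x)| ≤ C · (∫_ℝ |u(x)|^{q+1} dx)^{(1−θ)/(q+1)} · (∫_ℝ |u'(x)|^p dx)^{θ/p}. Moreover, the constant C is optimal: for every C' < C there exists such a function u for which the inequality fails with C' in place of C. -/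
open Filter Set Topology MeasureTheory

/-!
Put `m = q + 1`, let `r` be the exponent conjugate to `p` and `s = 1 + m / r`, so that `θ = s⁻¹`.
Since `|u| ^ s` vanishes at `±∞`, integrating its derivative over the two half-lines ending at `x`
gives `2 |u x| ^ s ≤ s ∫ |u| ^ (m / r) |u'|`, and Hölder's inequality bounds the right-hand side.

Equality in Hölder's inequality forces `|u'| ^ p = |u| ^ m` up to scaling. The extremal is therefore
`φ |x|`, where `φ' = -φ ^ (m / p)` and `φ 0 = 1`. It has a corner at the origin, which is removed by
replacing `|x|` with `√(x ^ 2 + ε ^ 2) - ε`; this costs at most `2 ε` in `∫ |u| ^ m`.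
-/

section UpperBound

lemma tendsto_atTop_zero_of_integrable_rpow {f f' : ℝ → ℝ} {κ : ℝ} (hκ : 0 < κ)
    (hf : ∀ x, 0 ≤ f x) (hderiv : ∀ x, HasDerivAt f (f' x) x) (hf' : Integrable f')
    (hfκ : Integrable fun x ↦ f x ^ κ) : Tendsto f atTop (𝓝 0) := by
  have hlim : Tendsto f atTop (𝓝 (limUnder atTop f)) :=
    tendsto_limUnder_of_hasDerivAt_of_integrableOn_Ioi (a := 0) (fun x _ ↦ hderiv x)
      hf'.integrableOn
  have hlim_nonneg : 0 ≤ limUnder atTop f := ge_of_tendsto' hlim hf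
  have hvolume : ∀ S ∈ (atTop : Filter ℝ), volume S = ⊤ := fun S hS ↦ by
    obtain ⟨b, hb⟩ := mem_atTop_sets.1 hS
    exact measure_mono_top hb Real.volume_Ici
  have hlim_rpow : limUnder atTop f ^ κ = 0 :=
    (hfκ.integrableAtFilter atTop).eq_zero_of_tendsto hvolume
      (hlim.rpow_const (Or.inr hκ.le))
  rwa [(Real.rpow_eq_zero hlim_nonneg hκ.ne').1 hlim_rpow] at hlim

lemma tendsto_atBot_zero_of_integrable_rpow {f f' : ℝ → ℝ} {κ : ℝ} (hκ : 0 < κ)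
    (hf : ∀ x, 0 ≤ f x) (hderiv : ∀ x, HasDerivAt f (f' x) x) (hf' : Integrable f')
    (hfκ : Integrable fun x ↦ f x ^ κ) : Tendsto f atBot (𝓝 0) := by
  have hderiv_neg (x : ℝ) : HasDerivAt (fun y ↦ f (-y)) (-f' (-x)) x := by
    simpa [Function.comp_def] using (hderiv (-x)).comp x (hasDerivAt_neg x)
  have hlim := tendsto_atTop_zero_of_integrable_rpow hκ (fun x ↦ hf (-x)) hderiv_neg
    hf'.comp_neg.neg hfκ.comp_neg
  simpa [Function.comp_def] using hlim.comp tendsto_neg_atBot_atTop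

lemma two_mul_norm_le_integral_norm_deriv {E : Type*} [NormedAddCommGroup E] [NormedSpace ℝ E]
    [CompleteSpace E] {f f' : ℝ → E} (hderiv : ∀ x, HasDerivAt f (f' x) x) (hf' : Integrable f')
    (hbot : Tendsto f atBot (𝓝 0)) (htop : Tendsto f atTop (𝓝 0)) (x : ℝ) :
    2 * ‖f x‖ ≤ ∫ y, ‖f' y‖ := by
  have hleft : ‖f x‖ ≤ ∫ y in Iic x, ‖f' y‖ := by
    have hint := integral_Iic_of_hasDerivAt_of_tendsto' (a := x) (fun y _ ↦ hderiv y)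
      hf'.integrableOn hbot
    simpa [hint] using norm_integral_le_integral_norm (μ := volume.restrict (Iic x)) f'
  have hright : ‖f x‖ ≤ ∫ y in Ioi x, ‖f' y‖ := by
    have hint := integral_Ioi_of_hasDerivAt_of_tendsto' (a := x) (fun y _ ↦ hderiv y)
      hf'.integrableOn htop
    simpa [hint] using norm_integral_le_integral_norm (μ := volume.restrict (Ioi x)) f'
  calc 2 * ‖f x‖ ≤ (∫ y in Iic x, ‖f' y‖) + ∫ y in Ioi x, ‖f' y‖ := by linarith
    _ = ∫ y, ‖f' y‖ :=
      intervalIntegral.integral_Iic_add_Ioi hf'.norm.integrableOn hf'.norm.integrableOn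

section Holder

variable {α E F : Type*} [MeasurableSpace α] {μ : Measure α} [NormedAddCommGroup E]
  [NormedAddCommGroup F] {u : α → E} {v : α → F} {p r m : ℝ}

lemma memLp_norm_ofReal_of_integrable_norm_rpow (hp : 0 < p) (hv : AEStronglyMeasurable v μ)
    (hint : Integrable (fun x ↦ ‖v x‖ ^ p) μ) : MemLp (fun x ↦ ‖v x‖) (ENNReal.ofReal p) μ := by
  rw [memLp_norm_iff hv, ← integrable_norm_rpow_iff hv (by simpa using hp) ENNReal.ofReal_ne_top]
  simpa only [ENNReal.toReal_ofReal hp.le] using hint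

lemma norm_rpow_div_rpow (hr : r ≠ 0) (a : E) : (‖a‖ ^ (m / r)) ^ r = ‖a‖ ^ m := by
  rw [← Real.rpow_mul (norm_nonneg a), div_mul_cancel₀ m hr]

lemma memLp_norm_rpow_div_of_integrable_norm_rpow (hr : 0 < r) (hu : AEStronglyMeasurable u μ)
    (hint : Integrable (fun x ↦ ‖u x‖ ^ m) μ) :
    MemLp (fun x ↦ ‖u x‖ ^ (m / r)) (ENNReal.ofReal r) μ := by
  have hnorm (x : α) : ‖‖u x‖ ^ (m / r)‖ = ‖u x‖ ^ (m / r) :=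
    Real.norm_of_nonneg (by positivity)
  have hmeas : AEStronglyMeasurable (fun x ↦ ‖u x‖ ^ (m / r)) μ :=
    (hu.norm.aemeasurable.pow_const _).aestronglyMeasurable
  simpa only [hnorm] using memLp_norm_ofReal_of_integrable_norm_rpow hr hmeas
    (by simpa only [hnorm, norm_rpow_div_rpow hr.ne'] using hint)

lemma integrable_norm_rpow_mul_norm (hpr : p.HolderConjugate r) (hu : AEStronglyMeasurable u μ)
    (hv : AEStronglyMeasurable v μ) (hum : Integrable (fun x ↦ ‖u x‖ ^ m) μ)
    (hvp : Integrable (fun x ↦ ‖v x‖ ^ p) μ) :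
    Integrable (fun x ↦ ‖u x‖ ^ (m / r) * ‖v x‖) μ :=
  have := hpr.symm.ennrealOfReal
  (memLp_norm_rpow_div_of_integrable_norm_rpow hpr.symm.pos hu hum).integrable_mul
    (memLp_norm_ofReal_of_integrable_norm_rpow hpr.pos hv hvp)

lemma integral_norm_rpow_mul_norm_le (hpr : p.HolderConjugate r) (hu : AEStronglyMeasurable u μ)
    (hv : AEStronglyMeasurable v μ) (hum : Integrable (fun x ↦ ‖u x‖ ^ m) μ)
    (hvp : Integrable (fun x ↦ ‖v x‖ ^ p) μ) :
    ∫ x, ‖u x‖ ^ (m / r) * ‖v x‖ ∂μ ≤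
      (∫ x, ‖u x‖ ^ m ∂μ) ^ (1 / r) * (∫ x, ‖v x‖ ^ p ∂μ) ^ (1 / p) := by
  simpa only [norm_rpow_div_rpow hpr.symm.ne_zero] using
    integral_mul_le_Lp_mul_Lq_of_nonneg hpr.symm
      (Eventually.of_forall fun x ↦ by positivity) (Eventually.of_forall fun x ↦ norm_nonneg (v x))
      (memLp_norm_rpow_div_of_integrable_norm_rpow hpr.symm.pos hu hum)
      (memLp_norm_ofReal_of_integrable_norm_rpow hpr.pos hv hvp)

end Holder

variable {E : Type*} [NormedAddCommGroup E] [InnerProductSpace ℝ E] {u : ℝ → E} {p r m s : ℝ}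

lemma norm_deriv_norm_rpow_le (hs : 1 < s) (hu : Differentiable ℝ u) (x : ℝ) :
    ‖deriv (fun y ↦ ‖u y‖ ^ s) x‖ ≤ s * (‖u x‖ ^ (s - 1) * ‖deriv u x‖) := by
  simpa only [norm_deriv_eq_norm_fderiv, mul_assoc] using norm_fderiv_norm_rpow_le hu hs

variable [CompleteSpace E]

lemma norm_rpow_le_integral_mul_integral_deriv (hpr : p.HolderConjugate r) (hm : 0 < m)
    (hs : s = 1 + m / r) (hu : Differentiable ℝ u) (hum : Integrable fun x ↦ ‖u x‖ ^ m)
    (hup : Integrable fun x ↦ ‖deriv u x‖ ^ p) (x : ℝ) :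
    ‖u x‖ ^ s ≤ s / 2 * ((∫ y, ‖u y‖ ^ m) ^ (1 / r) * (∫ y, ‖deriv u y‖ ^ p) ^ (1 / p)) := by
  have hs1 : 1 < s := by have := div_pos hm hpr.symm.pos; linarith
  have hu_meas : AEStronglyMeasurable u := hu.continuous.aestronglyMeasurable
  have hderiv_meas : AEStronglyMeasurable (deriv u) := aestronglyMeasurable_deriv u volume
  have hderiv (y : ℝ) : HasDerivAt (fun y ↦ ‖u y‖ ^ s) (deriv (fun y ↦ ‖u y‖ ^ s) y) y :=
    (hu.norm_rpow hs1 y).hasDerivAt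
  have hderiv_le (y : ℝ) :
      ‖deriv (fun y ↦ ‖u y‖ ^ s) y‖ ≤ s * (‖u y‖ ^ (m / r) * ‖deriv u y‖) := by
    simpa [hs] using norm_deriv_norm_rpow_le hs1 hu y
  have hbound_int : Integrable fun y ↦ s * (‖u y‖ ^ (m / r) * ‖deriv u y‖) :=
    (integrable_norm_rpow_mul_norm hpr hu_meas hderiv_meas hum hup).const_mul s
  have hderiv_int : Integrable (deriv fun y ↦ ‖u y‖ ^ s) :=
    hbound_int.mono' (aestronglyMeasurable_deriv _ _) (Eventually.of_forall hderiv_le)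
  have hnonneg (y : ℝ) : 0 ≤ ‖u y‖ ^ s := by positivity
  have hrpow_int : Integrable fun y ↦ (‖u y‖ ^ s) ^ (m / s) := by
    simpa only [← Real.rpow_mul (norm_nonneg _), mul_div_cancel₀ m (by linarith : s ≠ 0)] using hum
  have hms : 0 < m / s := by positivity
  have hFTC := two_mul_norm_le_integral_norm_deriv hderiv hderiv_int
    (tendsto_atBot_zero_of_integrable_rpow hms hnonneg hderiv hderiv_int hrpow_int)
    (tendsto_atTop_zero_of_integrable_rpow hms hnonneg hderiv hderiv_int hrpow_int) x
  rw [Real.norm_of_nonneg (hnonneg x)] at hFTC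
  have hHolder := integral_norm_rpow_mul_norm_le hpr hu_meas hderiv_meas hum hup
  calc ‖u x‖ ^ s ≤ (∫ y, ‖deriv (fun y ↦ ‖u y‖ ^ s) y‖) / 2 := by linarith
    _ ≤ (∫ y, s * (‖u y‖ ^ (m / r) * ‖deriv u y‖)) / 2 := by
      gcongr
      exacts [hderiv_int.norm, hderiv_le]
    _ = s / 2 * ∫ y, ‖u y‖ ^ (m / r) * ‖deriv u y‖ := by rw [integral_const_mul]; ring
    _ ≤ _ := by gcongr

theorem norm_le_integral_mul_integral_deriv (hpr : p.HolderConjugate r) (hm : 0 < m)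
    (hs : s = 1 + m / r) (hu : Differentiable ℝ u) (hum : Integrable fun x ↦ ‖u x‖ ^ m)
    (hup : Integrable fun x ↦ ‖deriv u x‖ ^ p) (x : ℝ) :
    ‖u x‖ ≤ (s / 2) ^ s⁻¹ * (∫ y, ‖u y‖ ^ m) ^ (s⁻¹ / r) *
      (∫ y, ‖deriv u y‖ ^ p) ^ (s⁻¹ / p) := by
  have hs0 : 0 < s := by have := div_pos hm hpr.symm.pos; linarith
  have hA : 0 ≤ ∫ y, ‖u y‖ ^ m := by positivity
  have hB : 0 ≤ ∫ y, ‖deriv u y‖ ^ p := by positivity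
  have h := (Real.le_rpow_inv_iff_of_pos (norm_nonneg _) (by positivity) hs0).2
    (norm_rpow_le_integral_mul_integral_deriv hpr hm hs hu hum hup x)
  rwa [Real.mul_rpow (by positivity) (by positivity), Real.mul_rpow (by positivity) (by positivity),
    ← Real.rpow_mul hA, ← Real.rpow_mul hB, one_div_mul_eq_div, one_div_mul_eq_div,
    ← mul_assoc] at h

end UpperBound

section Integrals

variable {E : Type*} [NormedAddCommGroup E] {f : ℝ → E} {ε : ℝ}

lemma integrable_comp_abs (hf : IntegrableOn f (Ioi 0)) : Integrable fun x ↦ f |x| := by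
  have hpos : IntegrableOn (fun x ↦ f |x|) (Ioi 0) :=
    hf.congr_fun (fun x hx ↦ by rw [abs_of_pos hx]) measurableSet_Ioi
  have hneg : IntegrableOn (fun x ↦ f |x|) (Iio 0) := by
    simpa [Function.comp_def] using
      ((Measure.measurePreserving_neg volume).integrableOn_comp_preimage
        (Homeomorph.neg ℝ).measurableEmbedding).2 hpos
  rw [← integrableOn_univ, ← Iic_union_Ioi (a := (0 : ℝ))]
  exact (Iff.mpr integrableOn_Iic_iff_integrableOn_Iio hneg).union hpos

lemma integrableOn_Ioc_comp_max_sub (f : ℝ → E) (ε : ℝ) :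
    IntegrableOn (fun x ↦ f (max (x - ε) 0)) (Ioc 0 ε) :=
  IntegrableOn.congr_fun (f := fun _ ↦ f 0) (by simp)
    (fun x hx ↦ by rw [max_eq_right (sub_nonpos.2 hx.2)]) measurableSet_Ioc

lemma integrableOn_Ioi_self_comp_max_sub (hf : IntegrableOn f (Ioi 0)) :
    IntegrableOn (fun x ↦ f (max (x - ε) 0)) (Ioi ε) := by
  have hshift : IntegrableOn (fun x ↦ f (x - ε)) (Ioi ε) := by
    simpa [Function.comp_def] using
      ((measurePreserving_sub_right volume ε).integrableOn_comp_preimage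
        (measurableEmbedding_subRight ε)).2 hf
  exact hshift.congr_fun (fun x hx ↦ by rw [max_eq_left (sub_nonneg.2 (le_of_lt hx))])
    measurableSet_Ioi

lemma integrableOn_Ioi_comp_max_sub (hε : 0 ≤ ε) (hf : IntegrableOn f (Ioi 0)) :
    IntegrableOn (fun x ↦ f (max (x - ε) 0)) (Ioi 0) := by
  rw [← Ioc_union_Ioi_eq_Ioi hε]
  exact (integrableOn_Ioc_comp_max_sub f ε).union (integrableOn_Ioi_self_comp_max_sub hf)

lemma integral_Ioi_comp_max_sub [NormedSpace ℝ E] [CompleteSpace E] (hε : 0 ≤ ε)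
    (hf : IntegrableOn f (Ioi 0)) :
    ∫ x in Ioi 0, f (max (x - ε) 0) = ε • f 0 + ∫ x in Ioi 0, f x := by
  have hflat : ∫ x in Ioc 0 ε, f (max (x - ε) 0) = ε • f 0 := by
    rw [setIntegral_congr_fun (g := fun _ ↦ f 0) measurableSet_Ioc
      fun x hx ↦ by simp only [max_eq_right (sub_nonpos.2 hx.2)]]
    simp [hε]
  have hshift : ∫ x in Ioi ε, f (max (x - ε) 0) = ∫ x in Ioi 0, f x := by
    rw [setIntegral_congr_fun (g := fun x ↦ f (x - ε)) measurableSet_Ioi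
      fun x hx ↦ by simp only [max_eq_left (sub_nonneg.2 (le_of_lt (mem_Ioi.1 hx)))]]
    simpa using (measurePreserving_sub_right volume ε).setIntegral_preimage_emb
      (measurableEmbedding_subRight ε) f (Ioi 0)
  rw [← Ioc_union_Ioi_eq_Ioi hε, setIntegral_union (Ioc_disjoint_Ioi le_rfl) measurableSet_Ioi
    (integrableOn_Ioc_comp_max_sub f ε) (integrableOn_Ioi_self_comp_max_sub hf), hflat, hshift,
    Ioc_union_Ioi_eq_Ioi hε]

end Integrals

section SmoothAbs

/-- A smooth approximation of `|x|` for `ε > 0`, normalised to vanish at the origin; it rounds off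
the corner of the extremal. -/
noncomputable def smoothAbs (ε x : ℝ) : ℝ := √(x ^ 2 + ε ^ 2) - ε

variable {ε : ℝ}

lemma smoothAbs_zero (hε : 0 ≤ ε) : smoothAbs ε 0 = 0 := by
  simp [smoothAbs, Real.sqrt_sq hε]

lemma smoothAbs_nonneg (ε x : ℝ) : 0 ≤ smoothAbs ε x :=
  sub_nonneg.2 (Real.le_sqrt_of_sq_le (by nlinarith [sq_nonneg x]))

lemma abs_le_sqrt_sq_add_sq (ε x : ℝ) : |x| ≤ √(x ^ 2 + ε ^ 2) :=
  Real.abs_le_sqrt (by nlinarith [sq_nonneg ε])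

lemma max_abs_sub_le_smoothAbs (ε x : ℝ) : max (|x| - ε) 0 ≤ smoothAbs ε x :=
  max_le (sub_le_sub_right (abs_le_sqrt_sq_add_sq ε x) ε) (smoothAbs_nonneg ε x)

lemma hasDerivAt_smoothAbs (hε : ε ≠ 0) (x : ℝ) :
    HasDerivAt (smoothAbs ε) (x / √(x ^ 2 + ε ^ 2)) x := by
  have hradicand : HasDerivAt (fun x : ℝ ↦ x ^ 2 + ε ^ 2) (2 * x) x := by
    simpa using (hasDerivAt_pow 2 x).add_const (ε ^ 2)
  have hpos : x ^ 2 + ε ^ 2 ≠ 0 := by positivity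
  exact ((hradicand.sqrt hpos).sub_const ε).congr_deriv (mul_div_mul_left _ _ two_ne_zero)

lemma abs_div_sqrt_sq_add_sq_le_one (ε x : ℝ) : |x / √(x ^ 2 + ε ^ 2)| ≤ 1 := by
  rw [abs_div, abs_of_nonneg (Real.sqrt_nonneg _)]
  exact div_le_one_of_le₀ (abs_le_sqrt_sq_add_sq ε x) (Real.sqrt_nonneg _)

end SmoothAbs

/-- `φ` restricted to `[0, ∞)` is the decaying solution of `φ' = -φ ^ α`, `φ 0 = 1`, which is the
profile of the extremals of the inequality when `α = m / p`. The equation is two-sided at `0`, so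
that `φ` can be composed with functions touching `0`; values on `(-∞, 0)` are otherwise free. -/
structure IsExtremalProfile (α : ℝ) (φ : ℝ → ℝ) : Prop where
  apply_zero : φ 0 = 1
  nonneg {t : ℝ} : 0 ≤ t → 0 ≤ φ t
  hasDerivAt {t : ℝ} : 0 ≤ t → HasDerivAt φ (-φ t ^ α) t
  tendsto_zero : Tendsto φ atTop (𝓝 0)

section Existence

variable {α β : ℝ}

lemma hasDerivAt_max_zero_rpow (hβ : 1 < β) (y : ℝ) :
    HasDerivAt (fun y : ℝ ↦ max y 0 ^ β) (β * max y 0 ^ (β - 1)) y := by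
  have hcont {γ : ℝ} (hγ : 0 ≤ γ) : Continuous fun y : ℝ ↦ max y 0 ^ γ :=
    (continuous_id.max continuous_const).rpow_const fun _ ↦ Or.inr hγ
  have hne (z : ℝ) (hz : z ≠ 0) :
      HasDerivAt (fun y : ℝ ↦ max y 0 ^ β) (β * max z 0 ^ (β - 1)) z := by
    rcases lt_or_gt_of_ne hz with hneg | hpos
    · rw [max_eq_right hneg.le, Real.zero_rpow (by linarith), mul_zero]
      refine (hasDerivAt_const z (0 : ℝ)).congr_of_eventuallyEq ?_
      filter_upwards [Iio_mem_nhds hneg] with w hw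
      rw [max_eq_right (le_of_lt hw), Real.zero_rpow (by linarith)]
    · rw [max_eq_left hpos.le]
      refine (Real.hasDerivAt_rpow_const (Or.inl hz)).congr_of_eventuallyEq ?_
      filter_upwards [Ioi_mem_nhds hpos] with w hw
      rw [max_eq_left (le_of_lt hw)]
  rcases eq_or_ne y 0 with rfl | hy
  · exact hasDerivAt_of_hasDerivAt_of_ne hne (hcont (by linarith)).continuousAt
      (continuous_const.mul (hcont (by linarith))).continuousAt
  · exact hne y hy

lemma isExtremalProfile_max_rpow (hα : 0 < α) (hα1 : α < 1) :
    IsExtremalProfile α fun t ↦ max (1 - (1 - α) * t) 0 ^ (1 / (1 - α)) where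
  apply_zero := by simp
  nonneg _ := by positivity
  hasDerivAt {t} _ := by
    have h1α : 0 < 1 - α := by linarith
    have hlin : HasDerivAt (fun t : ℝ ↦ 1 - (1 - α) * t) (-(1 - α)) t := by
      simpa using ((hasDerivAt_id t).const_mul (1 - α)).const_sub 1
    have hexp : 1 / (1 - α) * α = 1 / (1 - α) - 1 := by field_simp; ring
    have hβ : 1 < 1 / (1 - α) := by rw [lt_div_iff₀ h1α]; linarith
    refine ((hasDerivAt_max_zero_rpow hβ _).comp t hlin).congr_deriv ?_
    rw [← Real.rpow_mul (le_max_right _ _), hexp]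
    field_simp
  tendsto_zero := by
    have h1α : 0 < 1 - α := by linarith
    refine tendsto_const_nhds.congr' ?_
    filter_upwards [eventually_ge_atTop (1 / (1 - α))] with t ht
    rw [div_le_iff₀ h1α] at ht
    rw [max_eq_right (by linarith), Real.zero_rpow (by positivity)]

lemma isExtremalProfile_exp_neg : IsExtremalProfile 1 fun t ↦ Real.exp (-t) where
  apply_zero := by simp
  nonneg _ := (Real.exp_pos _).le
  hasDerivAt {t} _ := by simpa using (hasDerivAt_id t).neg.exp
  tendsto_zero := Real.tendsto_exp_neg_atTop_nhds_zero

lemma isExtremalProfile_rpow_neg (hα : 1 < α) :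
    IsExtremalProfile α fun t ↦ (1 + (α - 1) * t) ^ (-(1 / (α - 1))) where
  apply_zero := by simp
  nonneg {t} ht := by have := sub_pos.2 hα; positivity
  hasDerivAt {t} ht := by
    have hα1 : 0 < α - 1 := sub_pos.2 hα
    have hpos : 0 < 1 + (α - 1) * t := by positivity
    have hlin : HasDerivAt (fun t : ℝ ↦ 1 + (α - 1) * t) (α - 1) t := by
      simpa using ((hasDerivAt_id t).const_mul (α - 1)).const_add 1
    have hexp : -(1 / (α - 1)) * α = -(1 / (α - 1)) - 1 := by field_simp; ring
    refine (hlin.rpow_const (Or.inl hpos.ne')).congr_deriv ?_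
    rw [← Real.rpow_mul hpos.le, hexp]
    field_simp
  tendsto_zero := by
    have hα1 : 0 < α - 1 := sub_pos.2 hα
    exact (tendsto_rpow_neg_atTop (one_div_pos.2 hα1)).comp
      (tendsto_atTop_add_const_left _ _ (tendsto_id.const_mul_atTop hα1))

lemma exists_isExtremalProfile (hα : 0 < α) : ∃ φ, IsExtremalProfile α φ := by
  rcases lt_trichotomy α 1 with hlt | rfl | hgt
  · exact ⟨_, isExtremalProfile_max_rpow hα hlt⟩
  · exact ⟨_, isExtremalProfile_exp_neg⟩
  · exact ⟨_, isExtremalProfile_rpow_neg hgt⟩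

end Existence

namespace IsExtremalProfile

variable {α m ε : ℝ} {φ : ℝ → ℝ}

lemma antitoneOn (hφ : IsExtremalProfile α φ) : AntitoneOn φ (Ici 0) := by
  refine antitoneOn_of_hasDerivWithinAt_nonpos (f' := fun t ↦ -φ t ^ α) (convex_Ici 0)
    (fun t ht ↦ (hφ.hasDerivAt ht).continuousAt.continuousWithinAt)
    (fun t ht ↦ (hφ.hasDerivAt (interior_subset ht)).hasDerivWithinAt) fun t ht ↦ ?_
  exact neg_nonpos.2 (Real.rpow_nonneg (hφ.nonneg (interior_subset ht)) α)

lemma hasDerivAt_primitive_rpow (hφ : IsExtremalProfile α φ) (hm : 0 < m) (hαm : α ≤ m) {t : ℝ}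
    (ht : 0 ≤ t) :
    HasDerivAt (fun t ↦ -(φ t ^ (1 + m - α) / (1 + m - α))) (φ t ^ m) t := by
  have hsplit : φ t ^ m = φ t ^ α * φ t ^ (1 + m - α - 1) := by
    rw [← Real.rpow_add' (hφ.nonneg ht) (by ring_nf; exact hm.ne')]
    congr 1
    ring
  have hs : 1 + m - α ≠ 0 := by linarith
  refine (((hφ.hasDerivAt ht).rpow_const (p := 1 + m - α)
    (Or.inr (by linarith))).div_const (1 + m - α)).neg.congr_deriv ?_
  rw [hsplit]
  field_simp

lemma tendsto_primitive_rpow (hφ : IsExtremalProfile α φ) (hαm : α < 1 + m) :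
    Tendsto (fun t ↦ -(φ t ^ (1 + m - α) / (1 + m - α))) atTop (𝓝 0) := by
  have hs : 0 < 1 + m - α := by linarith
  simpa [Real.zero_rpow hs.ne'] using
    ((hφ.tendsto_zero.rpow_const (Or.inr hs.le)).div_const (1 + m - α)).neg

lemma integrableOn_rpow (hφ : IsExtremalProfile α φ) (hm : 0 < m) (hαm : α ≤ m) :
    IntegrableOn (fun t ↦ φ t ^ m) (Ioi 0) :=
  integrableOn_Ioi_deriv_of_nonneg' (fun _ ht ↦ hφ.hasDerivAt_primitive_rpow hm hαm ht)
    (fun _ ht ↦ Real.rpow_nonneg (hφ.nonneg (le_of_lt ht)) m)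
    (hφ.tendsto_primitive_rpow (by linarith))

lemma integral_rpow (hφ : IsExtremalProfile α φ) (hm : 0 < m) (hαm : α ≤ m) :
    ∫ t in Ioi 0, φ t ^ m = (1 + m - α)⁻¹ := by
  rw [integral_Ioi_of_hasDerivAt_of_nonneg'
    (fun _ ht ↦ hφ.hasDerivAt_primitive_rpow hm hαm ht)
    (fun _ ht ↦ Real.rpow_nonneg (hφ.nonneg (le_of_lt ht)) m)
    (hφ.tendsto_primitive_rpow (by linarith))]
  simp [hφ.apply_zero]

lemma hasDerivAt_comp_smoothAbs (hφ : IsExtremalProfile α φ) (hε : ε ≠ 0) (x : ℝ) :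
    HasDerivAt (fun x ↦ φ (smoothAbs ε x))
      (-φ (smoothAbs ε x) ^ α * (x / √(x ^ 2 + ε ^ 2))) x :=
  (hφ.hasDerivAt (smoothAbs_nonneg ε x)).comp x (hasDerivAt_smoothAbs hε x)

lemma contDiff_comp_smoothAbs (hφ : IsExtremalProfile α φ) (hα : 0 ≤ α) (hε : ε ≠ 0) :
    ContDiff ℝ 1 fun x ↦ φ (smoothAbs ε x) := by
  have hcont : Continuous fun x ↦ φ (smoothAbs ε x) :=
    continuous_iff_continuousAt.2 fun x ↦ (hφ.hasDerivAt_comp_smoothAbs hε x).continuousAt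
  refine contDiff_one_iff_deriv.2
    ⟨fun x ↦ (hφ.hasDerivAt_comp_smoothAbs hε x).differentiableAt, ?_⟩
  rw [funext fun x ↦ (hφ.hasDerivAt_comp_smoothAbs hε x).deriv]
  have hsqrt (x : ℝ) : √(x ^ 2 + ε ^ 2) ≠ 0 := by positivity
  exact (hcont.rpow_const fun _ ↦ Or.inr hα).neg.mul (continuous_id.div (by fun_prop) hsqrt)

lemma abs_deriv_comp_smoothAbs_le (hφ : IsExtremalProfile α φ) (hε : ε ≠ 0) (x : ℝ) :
    |deriv (fun x ↦ φ (smoothAbs ε x)) x| ≤ |φ (smoothAbs ε x)| ^ α := by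
  have hu : 0 ≤ φ (smoothAbs ε x) := hφ.nonneg (smoothAbs_nonneg ε x)
  have hrpow : 0 ≤ φ (smoothAbs ε x) ^ α := Real.rpow_nonneg hu α
  rw [(hφ.hasDerivAt_comp_smoothAbs hε x).deriv, abs_mul, abs_neg, abs_of_nonneg hrpow,
    abs_of_nonneg hu]
  exact mul_le_of_le_one_right hrpow (abs_div_sqrt_sq_add_sq_le_one ε x)

lemma abs_comp_smoothAbs_rpow_le (hφ : IsExtremalProfile α φ) (hm : 0 ≤ m) (x : ℝ) :
    |φ (smoothAbs ε x)| ^ m ≤ φ (max (|x| - ε) 0) ^ m := by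
  have hnonneg := hφ.nonneg (smoothAbs_nonneg ε x)
  rw [abs_of_nonneg hnonneg]
  gcongr
  exact hφ.antitoneOn (mem_Ici.2 (le_max_right _ _)) (smoothAbs_nonneg ε x)
    (max_abs_sub_le_smoothAbs ε x)

lemma integrable_comp_max_abs_sub_rpow (hφ : IsExtremalProfile α φ) (hm : 0 < m) (hαm : α ≤ m)
    (hε : 0 ≤ ε) : Integrable fun x ↦ φ (max (|x| - ε) 0) ^ m :=
  integrable_comp_abs (integrableOn_Ioi_comp_max_sub hε (hφ.integrableOn_rpow hm hαm))

lemma integral_comp_max_abs_sub_rpow (hφ : IsExtremalProfile α φ) (hm : 0 < m) (hαm : α ≤ m)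
    (hε : 0 ≤ ε) :
    ∫ x, φ (max (|x| - ε) 0) ^ m = 2 * (ε + (1 + m - α)⁻¹) := by
  rw [integral_comp_abs (f := fun x ↦ φ (max (x - ε) 0) ^ m),
    integral_Ioi_comp_max_sub hε (hφ.integrableOn_rpow hm hαm), hφ.integral_rpow hm hαm]
  simp [hφ.apply_zero]

lemma integrable_comp_smoothAbs_rpow (hφ : IsExtremalProfile α φ) (hα : 0 ≤ α) (hm : 0 < m)
    (hαm : α ≤ m) (hε : 0 < ε) : Integrable fun x ↦ |φ (smoothAbs ε x)| ^ m := by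
  have hcont := (hφ.contDiff_comp_smoothAbs hα hε.ne').continuous
  refine (hφ.integrable_comp_max_abs_sub_rpow hm hαm hε.le).mono'
    (hcont.abs.rpow_const fun _ ↦ Or.inr hm.le).aestronglyMeasurable
    (Eventually.of_forall fun x ↦ ?_)
  rw [Real.norm_of_nonneg (by positivity)]
  exact hφ.abs_comp_smoothAbs_rpow_le hm.le x

lemma integral_comp_smoothAbs_rpow_le (hφ : IsExtremalProfile α φ) (hα : 0 ≤ α) (hm : 0 < m)
    (hαm : α ≤ m) (hε : 0 < ε) :
    ∫ x, |φ (smoothAbs ε x)| ^ m ≤ 2 * (ε + (1 + m - α)⁻¹) := by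
  rw [← hφ.integral_comp_max_abs_sub_rpow hm hαm hε.le]
  exact integral_mono (hφ.integrable_comp_smoothAbs_rpow hα hm hαm hε)
    (hφ.integrable_comp_max_abs_sub_rpow hm hαm hε.le) (hφ.abs_comp_smoothAbs_rpow_le hm.le)

end IsExtremalProfile

section Optimality

variable {p r m s : ℝ}

lemma exists_contDiff_integral_deriv_le_integral_le (hpr : p.HolderConjugate r) (hm : 0 < m)
    (hs : s = 1 + m / r) {ε : ℝ} (hε : 0 < ε) :
    ∃ u : ℝ → ℝ, ContDiff ℝ 1 u ∧ Integrable (fun x ↦ |u x| ^ m) ∧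
      Integrable (fun x ↦ |deriv u x| ^ p) ∧ u 0 = 1 ∧
      ∫ x, |deriv u x| ^ p ≤ ∫ x, |u x| ^ m ∧ ∫ x, |u x| ^ m ≤ 2 * (ε + s⁻¹) := by
  have hα : 0 < m / p := div_pos hm hpr.pos
  have hαm : m / p ≤ m := div_le_self hm.le hpr.lt.le
  have hs' : s = 1 + m - m / p := by
    rw [hs, div_eq_mul_inv, ← hpr.one_sub_inv, div_eq_mul_inv]; ring
  obtain ⟨φ, hφ⟩ := exists_isExtremalProfile hα
  set u : ℝ → ℝ := fun x ↦ φ (smoothAbs ε x)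
  have hu : ContDiff ℝ 1 u := hφ.contDiff_comp_smoothAbs hα.le hε.ne'
  have hum : Integrable fun x ↦ |u x| ^ m := hφ.integrable_comp_smoothAbs_rpow hα.le hm hαm hε
  have hderiv_le (x : ℝ) : |deriv u x| ^ p ≤ |u x| ^ m :=
    calc |deriv u x| ^ p ≤ (|u x| ^ (m / p)) ^ p :=
          Real.rpow_le_rpow (abs_nonneg _) (hφ.abs_deriv_comp_smoothAbs_le hε.ne' x) hpr.nonneg
      _ = |u x| ^ m := norm_rpow_div_rpow hpr.ne_zero (u x)
  have hup : Integrable fun x ↦ |deriv u x| ^ p := by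
    refine hum.mono' ((hu.continuous_deriv le_rfl).abs.rpow_const
      fun _ ↦ Or.inr hpr.nonneg).aestronglyMeasurable (Eventually.of_forall fun x ↦ ?_)
    rw [Real.norm_of_nonneg (by positivity)]
    exact hderiv_le x
  refine ⟨u, hu, hum, hup, ?_, integral_mono hup hum hderiv_le, ?_⟩
  · simp only [u, smoothAbs_zero hε.le, hφ.apply_zero]
  · exact hs' ▸ hφ.integral_comp_smoothAbs_rpow_le hα.le hm hαm hε

lemma exists_pos_mul_rpow_lt_one (hs : 0 < s) {C' : ℝ} (hC' : C' < (s / 2) ^ s⁻¹) :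
    ∃ ε > 0, C' * (2 * (ε + s⁻¹)) ^ s⁻¹ < 1 := by
  have hlt : C' * (2 * (0 + s⁻¹)) ^ s⁻¹ < 1 :=
    calc C' * (2 * (0 + s⁻¹)) ^ s⁻¹ < (s / 2) ^ s⁻¹ * (2 * (0 + s⁻¹)) ^ s⁻¹ := by gcongr
      _ = 1 := by
        rw [← Real.mul_rpow (by positivity) (by positivity)]
        field_simp
        simp
  have hcont : Continuous fun ε : ℝ ↦ C' * (2 * (ε + s⁻¹)) ^ s⁻¹ :=
    continuous_const.mul ((by fun_prop : Continuous fun ε : ℝ ↦ 2 * (ε + s⁻¹)).rpow_const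
      fun _ ↦ Or.inr (by positivity))
  have hev : ∀ᶠ ε in 𝓝[>] (0 : ℝ), C' * (2 * (ε + s⁻¹)) ^ s⁻¹ < 1 :=
    nhdsWithin_le_nhds (hcont.continuousAt.eventually_lt_const hlt)
  obtain ⟨ε, hε, hpos⟩ := (hev.and self_mem_nhdsWithin).exists
  exact ⟨ε, hpos, hε⟩

theorem exists_contDiff_integral_mul_integral_deriv_lt (hpr : p.HolderConjugate r) (hm : 0 < m)
    (hs : s = 1 + m / r) {C' : ℝ} (hC' : C' < (s / 2) ^ s⁻¹) :
    ∃ u : ℝ → ℝ, ContDiff ℝ 1 u ∧ Integrable (fun x ↦ |u x| ^ m) ∧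
      Integrable (fun x ↦ |deriv u x| ^ p) ∧
      ∃ x, C' * (∫ y, |u y| ^ m) ^ (s⁻¹ / r) * (∫ y, |deriv u y| ^ p) ^ (s⁻¹ / p) < |u x| := by
  have hr : 0 < r := hpr.symm.pos
  have hp : 0 < p := hpr.pos
  have hs0 : 0 < s := by rw [hs]; positivity
  have hexp : s⁻¹ / r + s⁻¹ / p = s⁻¹ := by
    rw [div_eq_mul_inv, div_eq_mul_inv, ← mul_add, hpr.symm.inv_add_inv_eq_one, mul_one]
  obtain ⟨ε, hε, hlt⟩ := exists_pos_mul_rpow_lt_one hs0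
    (max_lt hC' (by positivity : 0 < (s / 2) ^ s⁻¹))
  obtain ⟨u, hu, hum, hup, hu0, hBA, hA⟩ :=
    exists_contDiff_integral_deriv_le_integral_le hpr hm hs hε
  refine ⟨u, hu, hum, hup, 0, ?_⟩
  set A := ∫ y, |u y| ^ m
  set B := ∫ y, |deriv u y| ^ p
  have hA0 : 0 ≤ A := by positivity
  calc C' * A ^ (s⁻¹ / r) * B ^ (s⁻¹ / p)
      ≤ max C' 0 * A ^ (s⁻¹ / r) * A ^ (s⁻¹ / p) := by
        gcongr
        exact le_max_left C' 0
    _ = max C' 0 * A ^ s⁻¹ := by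
        rw [mul_assoc, ← Real.rpow_add' hA0 (by rw [hexp]; positivity), hexp]
    _ ≤ max C' 0 * (2 * (ε + s⁻¹)) ^ s⁻¹ := by gcongr
    _ < |u 0| := by rwa [hu0, abs_one]

end Optimality

theorem stmt9_general {E : Type*} [NormedAddCommGroup E] [InnerProductSpace ℝ E] [CompleteSpace E]
    (p q θ C : ℝ) (hp : 1 < p) (hq : -1 < q)
    (hθ : θ = p / (p + (p - 1) * (q + 1)))
    (hC : C = ((p + (p - 1) * (q + 1)) / (2 * p)) ^ (p / (p + (p - 1) * (q + 1)))) :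
    (∀ u : ℝ → E, Differentiable ℝ u →
      Integrable (fun x => ‖u x‖ ^ (q + 1)) →
      Integrable (fun x => ‖deriv u x‖ ^ p) →
      ∀ x : ℝ, ‖u x‖ ≤ C * (∫ y : ℝ, ‖u y‖ ^ (q + 1)) ^ ((1 - θ) / (q + 1)) *
        (∫ y : ℝ, ‖deriv u y‖ ^ p) ^ (θ / p)) ∧
    (∀ C' : ℝ, C' < C → ∃ u : ℝ → ℝ, ContDiff ℝ 1 u ∧
      Integrable (fun x => |u x| ^ (q + 1)) ∧
      Integrable (fun x => |deriv u x| ^ p) ∧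
      ∃ x : ℝ, C' * (∫ y : ℝ, |u y| ^ (q + 1)) ^ ((1 - θ) / (q + 1)) *
        (∫ y : ℝ, |deriv u y| ^ p) ^ (θ / p) < |u x|) := by
  have hm : 0 < q + 1 := by linarith
  have hp1 : 0 < p - 1 := sub_pos.2 hp
  have hpr : p.HolderConjugate (p / (p - 1)) := Real.HolderConjugate.conjExponent hp
  obtain ⟨s, hs⟩ : ∃ s, s = 1 + (q + 1) / (p / (p - 1)) := ⟨_, rfl⟩
  have hsD : s = (p + (p - 1) * (q + 1)) / p := by rw [hs]; field_simp
  have hθs : θ = s⁻¹ := by rw [hθ, hsD, inv_div]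
  have hCs : C = (s / 2) ^ s⁻¹ := by rw [hC, hsD, inv_div, div_div, mul_comm p 2]
  have hexp : (1 - θ) / (q + 1) = s⁻¹ / (p / (p - 1)) := by
    rw [hθs, hsD]
    field_simp
    ring
  rw [hexp, hθs, hCs]
  exact ⟨fun u hu hum hup x ↦ norm_le_integral_mul_integral_deriv hpr hm hs hu hum hup x,
    fun C' hC' ↦ exists_contDiff_integral_mul_integral_deriv_lt hpr hm hs hC'⟩

/-- The sharp one-dimensional L^∞-type Gagliardo-Nirenberg inequality
`‖u‖_∞ ≤ C ‖u‖_{q+1}^{1-θ} ‖u'‖_p^θ` with its optimal constant. -/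
theorem stmt9 (p q θ C : ℝ) (hp : 1 < p) (hq : 0 ≤ q)
    (hθ : θ = p / (p + (p - 1) * (q + 1)))
    (hC : C = ((p + (p - 1) * (q + 1)) / (2 * p)) ^ (p / (p + (p - 1) * (q + 1)))) :
    (∀ u : ℝ → ℝ, ContDiff ℝ 1 u →
      Integrable (fun x => |u x| ^ (q + 1)) →
      Integrable (fun x => |deriv u x| ^ p) →
      ∀ x : ℝ, |u x| ≤ C * (∫ y : ℝ, |u y| ^ (q + 1)) ^ ((1 - θ) / (q + 1)) *
        (∫ y : ℝ, |deriv u y| ^ p) ^ (θ / p)) ∧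
    (∀ C' : ℝ, C' < C → ∃ u : ℝ → ℝ, ContDiff ℝ 1 u ∧
      Integrable (fun x => |u x| ^ (q + 1)) ∧
      Integrable (fun x => |deriv u x| ^ p) ∧
      ∃ x : ℝ, C' * (∫ y : ℝ, |u y| ^ (q + 1)) ^ ((1 - θ) / (q + 1)) *
        (∫ y : ℝ, |deriv u y| ^ p) ^ (θ / p) < |u x|) :=
  (stmt9_general (E := ℝ) p q θ C hp (by linarith) hθ hC).imp_left
    fun hbound u hu ↦ hbound u (hu.differentiable one_ne_zero)
end

section
/- Let d ≥ 1 be an integer, p > d, q ≥ 0 real numbers, and set θ = pd/(dp + (p−d)(q+1)). Suppose u_c : (0,∞) → ℝ is continuously differentiable, nonincreasing, nonnegative, satisfies lim_{r→0⁺} u_c(r) = 1 and lim_{r→∞} u_c(r) = 0, the function r ↦ r^{d−1}|u_c'(r)|^{p−2}u_c'(r) is differentiable on (0,∞) with derivative r^{d−1} u_c(r)^q, and ∫_0^∞ r^{d−1}(|u_c'(r)|^p + u_c(r)^{q+1}) dr < ∞. Set M_c = ∫_{ℝ^d} u_c(‖x‖)^{q+1} dx and C = θ^{−θ/p} (1−θ)^{θ/p}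 M_c^{−θ/d}. Then for every continuously differentiable u : ℝ^d → ℝ with ∫_{ℝ^d} |u(x)|^{q+1} dx < ∞ and ∫_{ℝ^d} ‖∇u(x)‖^p dx < ∞, one has sup_{x∈ℝ^d} |u(x)| ≤ C · (∫_{ℝ^d} |u|^{q+1} dx)^{(1−θ)/(q+1)} · (∫_{ℝ^d} ‖∇u(x)‖^p dx)^{θ/p}; moreover C is the smallest constant for which this inequality holds for all such u. -/
open Filter Set Topology MeasureTheory

/-!
Let `w` be the profile. Its inward flux `r ^ (d - 1) |w'| ^ (p - 1)` decreases at rate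
`r ^ (d - 1) w ^ q`, so integrating it by parts against `u` along every ray issuing from `x₀`
expresses a multiple of `u x₀` through `∫ w ^ q u` and `∫ |w'| ^ (p - 1) |∇u|`. Young's inequality
bounds these by a combination of `∫ |u| ^ (q + 1)` and `∫ ‖∇u‖ ^ p`, with equality for `u = w`.

Among all dilates of `w` this bound is sharp at `w` itself, and differentiating in the dilation
parameter yields the Pohozaev identity relating `∫ |w'| ^ p` to `∫ w ^ (q + 1)`. Replacing a general
`u` by the multiple of its dilate that matches both integrals of `w` turns the bound into the
multiplicative inequality, and the Pohozaev identity puts the constant in closed form. The profile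
need not be differentiable at the origin, so optimality is tested on `w (√(‖x‖ ^ 2 + ε ^ 2))`,
`ε → 0`: both integrals are at most those of `w`, and the value at the origin tends to `1`.
-/

section PolarCoordinates

variable {E F : Type*} [NormedAddCommGroup E] [NormedSpace ℝ E] [NormedAddCommGroup F]

lemma snd_smul_fst_homeomorphUnitSphereProd (x : ({0}ᶜ : Set E)) :
    ((homeomorphUnitSphereProd E x).2 : ℝ) • ((homeomorphUnitSphereProd E x).1 : E) = x := by
  rw [← homeomorphUnitSphereProd_symm_apply_coe, Homeomorph.symm_apply_apply]

variable [FiniteDimensional ℝ E] [MeasurableSpace E] [BorelSpace E]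
  {μ : Measure E} [μ.IsAddHaarMeasure] {f : E → F}

lemma integrable_sphere_prod_ray (hf : Integrable f μ) (x₀ : E) :
    Integrable (fun z : Metric.sphere (0 : E) 1 × Ioi (0 : ℝ) => f (x₀ + (z.2 : ℝ) • (z.1 : E)))
      (μ.toSphere.prod (Measure.volumeIoiPow (Module.finrank ℝ E - 1))) := by
  rw [← μ.measurePreserving_homeomorphUnitSphereProd.integrable_comp_emb
    (homeomorphUnitSphereProd E).measurableEmbedding]
  simp only [Function.comp_def, snd_smul_fst_homeomorphUnitSphereProd]
  exact (integrableOn_iff_comap_subtypeVal (measurableSet_singleton _).compl).1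
    (hf.comp_add_left x₀).integrableOn

variable [NormedSpace ℝ F]

lemma integrable_volumeIoiPow_iff (n : ℕ) {f : ℝ → F} :
    Integrable (fun r : Ioi (0 : ℝ) => f r) (Measure.volumeIoiPow n) ↔
      IntegrableOn (fun r => r ^ n • f r) (Ioi 0) := by
  rw [Measure.volumeIoiPow, integrable_withDensity_iff_integrable_smul' (by fun_prop) (by simp),
    integrableOn_iff_comap_subtypeVal measurableSet_Ioi]
  refine integrable_congr (.of_forall ?_)
  rintro ⟨r, hr : 0 < r⟩
  simp (disch := positivity) [ENNReal.toReal_ofReal]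

lemma integral_volumeIoiPow (n : ℕ) (f : ℝ → F) :
    ∫ r : Ioi (0 : ℝ), f r ∂Measure.volumeIoiPow n = ∫ r in Ioi (0 : ℝ), r ^ n • f r := by
  rw [Measure.volumeIoiPow, integral_withDensity_eq_integral_toReal_smul (by fun_prop) (by simp),
    ← integral_subtype_comap measurableSet_Ioi]
  refine integral_congr_ae (.of_forall ?_)
  rintro ⟨r, hr : 0 < r⟩
  simp (disch := positivity) [ENNReal.toReal_ofReal]

lemma ae_integrableOn_ray (hf : Integrable f μ) (x₀ : E) :
    ∀ᵐ ω : Metric.sphere (0 : E) 1 ∂μ.toSphere,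
      IntegrableOn (fun r : ℝ => r ^ (Module.finrank ℝ E - 1) • f (x₀ + r • (ω : E))) (Ioi 0) := by
  filter_upwards [(integrable_sphere_prod_ray hf x₀).prod_right_ae] with ω hω
  exact (integrable_volumeIoiPow_iff _ (f := fun r : ℝ => f (x₀ + r • (ω : E)))).1 hω

lemma integrable_integral_ray (hf : Integrable f μ) (x₀ : E) :
    Integrable (fun ω : Metric.sphere (0 : E) 1 =>
      ∫ r in Ioi (0 : ℝ), r ^ (Module.finrank ℝ E - 1) • f (x₀ + r • (ω : E))) μ.toSphere :=
  (integrable_sphere_prod_ray hf x₀).integral_prod_left.congr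
    (.of_forall fun ω => integral_volumeIoiPow _ fun r => f (x₀ + r • (ω : E)))

lemma integral_eq_integral_sphere_integral_ray [Nontrivial E] (hf : Integrable f μ) (x₀ : E) :
    ∫ x, f x ∂μ = ∫ ω : Metric.sphere (0 : E) 1,
      (∫ r in Ioi (0 : ℝ), r ^ (Module.finrank ℝ E - 1) • f (x₀ + r • (ω : E))) ∂μ.toSphere :=
  calc ∫ x, f x ∂μ = ∫ x, f (x₀ + x) ∂μ := (integral_add_left_eq_self f x₀).symm
    _ = ∫ x : ({0}ᶜ : Set E), f (x₀ + x) ∂μ.comap (↑) := by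
      rw [integral_subtype_comap (measurableSet_singleton _).compl fun x => f (x₀ + x),
        restrict_compl_singleton]
    _ = ∫ z : Metric.sphere (0 : E) 1 × Ioi (0 : ℝ), f (x₀ + (z.2 : ℝ) • (z.1 : E))
          ∂μ.toSphere.prod (Measure.volumeIoiPow (Module.finrank ℝ E - 1)) := by
      rw [← μ.measurePreserving_homeomorphUnitSphereProd.integral_comp
        (homeomorphUnitSphereProd E).measurableEmbedding]
      simp only [snd_smul_fst_homeomorphUnitSphereProd]
    _ = _ := by
      rw [integral_prod _ (integrable_sphere_prod_ray hf x₀)]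
      exact integral_congr_ae
        (.of_forall fun ω => integral_volumeIoiPow _ fun r => f (x₀ + r • (ω : E)))

end PolarCoordinates

/-- The integral of the radial function `x ↦ f ‖x‖` over a `d`-dimensional space, divided by the
area of the unit sphere. -/
noncomputable def radialIntegral (d : ℕ) (f : ℝ → ℝ) : ℝ :=
  ∫ r in Ioi (0 : ℝ), r ^ (d - 1) * f r

section Scaling

variable {d : ℕ} {l : ℝ}

lemma pow_mul_comp_mul_left (hl : 0 < l) (f : ℝ → ℝ) (r : ℝ) :
    r ^ (d - 1) * f (l * r) = (l ^ (d - 1))⁻¹ * ((l * r) ^ (d - 1) * f (l * r)) := by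
  rw [mul_pow]; field_simp

lemma integrableOn_radial_comp_mul_left (hl : 0 < l) {f : ℝ → ℝ}
    (hf : IntegrableOn (fun r => r ^ (d - 1) * f r) (Ioi 0)) :
    IntegrableOn (fun r => r ^ (d - 1) * f (l * r)) (Ioi 0) := by
  simp only [pow_mul_comp_mul_left hl f]
  refine Integrable.const_mul ?_ _
  exact (integrableOn_Ioi_comp_mul_left_iff (fun r => r ^ (d - 1) * f r) 0 hl).2
    (by rwa [mul_zero])

lemma radialIntegral_comp_mul_left (hd : 1 ≤ d) (hl : 0 < l) (f : ℝ → ℝ) :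
    radialIntegral d (fun r => f (l * r)) = l ^ (-(d : ℝ)) * radialIntegral d f := by
  simp only [radialIntegral, pow_mul_comp_mul_left hl f]
  rw [integral_const_mul, integral_comp_mul_left_Ioi (fun r => r ^ (d - 1) * f r) 0 hl, mul_zero,
    smul_eq_mul, ← mul_assoc, ← mul_inv, ← pow_succ, Nat.sub_add_cancel hd, Real.rpow_neg hl.le,
    Real.rpow_natCast]

end Scaling

section Young

/-- The right-hand side of the sum of two Young inequalities
`a ^ (p - 1) * b + c ^ q * e ≤ youngBound p q (a ^ p) (c ^ (q + 1)) (b ^ p) (e ^ (q + 1))`. -/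
noncomputable def youngBound (p q A M G N : ℝ) : ℝ :=
  (1 - 1 / p) * A + 1 / p * G + (1 - 1 / (q + 1)) * M + 1 / (q + 1) * N

lemma rpow_sub_one_mul_le {s a b : ℝ} (hs : 1 ≤ s) (ha : 0 ≤ a) (hb : 0 ≤ b) :
    a ^ (s - 1) * b ≤ (1 - 1 / s) * a ^ s + 1 / s * b ^ s := by
  have hs0 : 0 < s := by linarith
  have hs1 : 1 / s ≤ 1 := (div_le_one hs0).2 hs
  have amgm := Real.geom_mean_le_arith_mean2_weighted (w₁ := 1 - 1 / s) (w₂ := 1 / s)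
    (p₁ := a ^ s) (p₂ := b ^ s) (by linarith) (by positivity) (by positivity) (by positivity)
    (by ring)
  rwa [← Real.rpow_mul ha, ← Real.rpow_mul hb, mul_one_div_cancel hs0.ne', Real.rpow_one,
    show s * (1 - 1 / s) = s - 1 by field_simp] at amgm

lemma mul_add_mul_le_youngBound {p q a b c e : ℝ} (hp : 1 ≤ p) (hq : 0 ≤ q) (ha : 0 ≤ a)
    (hb : 0 ≤ b) (hc : 0 ≤ c) (he : 0 ≤ e) :
    a ^ (p - 1) * b + c ^ q * e ≤
      youngBound p q (a ^ p) (c ^ (q + 1)) (b ^ p) (e ^ (q + 1)) := by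
  have young_p := rpow_sub_one_mul_le hp ha hb
  have young_q := rpow_sub_one_mul_le (s := q + 1) (by linarith) hc he
  rw [add_sub_cancel_right] at young_q
  unfold youngBound
  linarith

lemma youngBound_self (p q A M : ℝ) : youngBound p q A M A M = A + M := by
  unfold youngBound; ring

lemma mul_youngBound (c p q A M G N : ℝ) : c * youngBound p q A M G N =
    youngBound p q (c * A) (c * M) (c * G) (c * N) := by
  unfold youngBound; ring

lemma youngBound_mono {p q A M G G' N N' : ℝ} (hp : 0 ≤ p) (hq : 0 ≤ q + 1) (hG : G ≤ G')
    (hN : N ≤ N') : youngBound p q A M G N ≤ youngBound p q A M G' N' := by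
  unfold youngBound; gcongr

variable {α : Type*} [MeasurableSpace α] {ν : Measure α} {A M G N : α → ℝ}

lemma integrable_youngBound (p q : ℝ) (hA : Integrable A ν) (hM : Integrable M ν)
    (hG : Integrable G ν) (hN : Integrable N ν) :
    Integrable (fun x => youngBound p q (A x) (M x) (G x) (N x)) ν :=
  (((hA.const_mul _).add (hG.const_mul _)).add (hM.const_mul _)).add (hN.const_mul _)

lemma integral_youngBound (p q : ℝ) (hA : Integrable A ν) (hM : Integrable M ν)
    (hG : Integrable G ν) (hN : Integrable N ν) :
    ∫ x, youngBound p q (A x) (M x) (G x) (N x) ∂ν =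
      youngBound p q (∫ x, A x ∂ν) (∫ x, M x ∂ν) (∫ x, G x ∂ν) (∫ x, N x ∂ν) := by
  have hA := hA.const_mul (1 - 1 / p)
  have hG := hG.const_mul (1 / p)
  have hM := hM.const_mul (1 - 1 / (q + 1))
  have hN := hN.const_mul (1 / (q + 1))
  unfold youngBound
  rw [integral_add (by exact (hA.add hG).add hM) hN, integral_add (by exact hA.add hG) hM,
    integral_add hA hG]
  simp only [integral_const_mul]

end Young

/-- `w : (0, ∞) → ℝ` is a nonincreasing, nonnegative, finite-energy solution of the radial
`p`-Laplace equation `(r ^ (d - 1) |w'| ^ (p - 2) w')' = r ^ (d - 1) w ^ q` in dimension `d`,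
normalised by `w (0⁺) = 1` and `w (∞) = 0`; `w'` is its continuous derivative. Only the values of
`w` and `w'` on `(0, ∞)` are constrained. -/
structure IsRadialProfile (d : ℕ) (p q : ℝ) (w w' : ℝ → ℝ) : Prop where
  hasDerivAt : ∀ r ∈ Ioi (0 : ℝ), HasDerivAt w (w' r) r
  continuousOn_deriv : ContinuousOn w' (Ioi 0)
  antitoneOn : AntitoneOn w (Ioi 0)
  nonneg : ∀ r ∈ Ioi (0 : ℝ), 0 ≤ w r
  tendsto_nhdsGT_zero : Tendsto w (𝓝[>] 0) (𝓝 1)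
  tendsto_atTop : Tendsto w atTop (𝓝 0)
  hasDerivAt_signed_flux : ∀ r ∈ Ioi (0 : ℝ),
    HasDerivAt (fun s => s ^ (d - 1) * |w' s| ^ (p - 2) * w' s) (r ^ (d - 1) * w r ^ q) r
  integrableOn_energy :
    IntegrableOn (fun r => r ^ (d - 1) * (|w' r| ^ p + w r ^ (q + 1))) (Ioi 0)

/-- The inward flux `r ^ (d - 1) |w'(r)| ^ (p - 1)` of the `p`-Laplacian through the sphere of
radius `r`, up to the area of the unit sphere. -/
noncomputable def radialFlux (d : ℕ) (p : ℝ) (w' : ℝ → ℝ) (r : ℝ) : ℝ :=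
  r ^ (d - 1) * |w' r| ^ (p - 1)

lemma radialFlux_nonneg (d : ℕ) (p : ℝ) (w' : ℝ → ℝ) {r : ℝ} (hr : 0 < r) :
    0 ≤ radialFlux d p w' r := by
  unfold radialFlux; positivity

lemma aestronglyMeasurable_restrict_Ioi_of_hasDerivAt {g g' : ℝ → ℝ} {a : ℝ}
    (hg : ∀ r ∈ Ioi a, HasDerivAt g (g' r) r) :
    AEStronglyMeasurable g' (volume.restrict (Ioi a)) := by
  refine (aestronglyMeasurable_deriv g _).congr ?_
  filter_upwards [ae_restrict_mem measurableSet_Ioi] with r hr using (hg r hr).deriv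

lemma abs_rpow_eq_mul_abs {a s : ℝ} (hs : 1 < s) : |a| ^ s = |a| ^ (s - 1) * |a| := by
  rw [← Real.rpow_add_one' (abs_nonneg a) (by linarith), sub_add_cancel]

namespace IsRadialProfile

variable {d : ℕ} {p q : ℝ} {w w' : ℝ → ℝ}

lemma deriv_nonpos (H : IsRadialProfile d p q w w') {r : ℝ} (hr : 0 < r) : w' r ≤ 0 := by
  have hderiv := (H.hasDerivAt r hr).hasDerivWithinAt (s := Ioi 0)
  rw [← hderiv.derivWithin (isOpen_Ioi.uniqueDiffWithinAt hr)]
  exact H.antitoneOn.derivWithin_nonpos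

lemma eventually_pos (H : IsRadialProfile d p q w w') : ∀ᶠ r in 𝓝[>] 0, 0 < w r :=
  H.tendsto_nhdsGT_zero.eventually (lt_mem_nhds one_pos)

lemma signed_flux_eq_neg_radialFlux (H : IsRadialProfile d p q w w') (hp : 1 < p) {r : ℝ}
    (hr : 0 < r) : r ^ (d - 1) * |w' r| ^ (p - 2) * w' r = -radialFlux d p w' r := by
  have hpow : |w' r| ^ (p - 1) = |w' r| ^ (p - 2) * |w' r| := by
    rw [← Real.rpow_add_one' (abs_nonneg _) (by linarith)]; ring_nf
  rw [radialFlux, hpow, abs_of_nonpos (H.deriv_nonpos hr)]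
  ring

lemma hasDerivAt_radialFlux (H : IsRadialProfile d p q w w') (hp : 1 < p) {r : ℝ} (hr : 0 < r) :
    HasDerivAt (radialFlux d p w') (-(r ^ (d - 1) * w r ^ q)) r := by
  refine (H.hasDerivAt_signed_flux r hr).neg.congr_of_eventuallyEq ?_
  filter_upwards [isOpen_Ioi.mem_nhds hr] with s hs
  rw [Pi.neg_apply, H.signed_flux_eq_neg_radialFlux hp hs, neg_neg]

lemma antitoneOn_radialFlux (H : IsRadialProfile d p q w w') (hp : 1 < p) :
    AntitoneOn (radialFlux d p w') (Ioi 0) := by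
  refine antitoneOn_of_hasDerivWithinAt_nonpos (convex_Ioi 0)
    (fun r hr => (H.hasDerivAt_radialFlux hp hr).continuousAt.continuousWithinAt)
    (f' := fun r => -(r ^ (d - 1) * w r ^ q)) ?_ ?_ <;> rw [interior_Ioi]
  · exact fun r hr => (H.hasDerivAt_radialFlux hp hr).hasDerivWithinAt
  · intro r (hr : 0 < r)
    have := Real.rpow_nonneg (H.nonneg r hr) q
    exact neg_nonpos.2 (by positivity)

lemma antitoneOn_abs_deriv (H : IsRadialProfile d p q w w') (hp : 1 < p) :
    AntitoneOn (fun r => |w' r|) (Ioi 0) := by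
  intro r (hr : 0 < r) s (hs : 0 < s) hrs
  have hflux : s ^ (d - 1) * |w' s| ^ (p - 1) ≤ s ^ (d - 1) * |w' r| ^ (p - 1) :=
    calc s ^ (d - 1) * |w' s| ^ (p - 1) ≤ r ^ (d - 1) * |w' r| ^ (p - 1) :=
          H.antitoneOn_radialFlux hp hr hs hrs
      _ ≤ s ^ (d - 1) * |w' r| ^ (p - 1) := by gcongr
  exact (Real.rpow_le_rpow_iff (abs_nonneg _) (abs_nonneg _) (by linarith)).1
    (le_of_mul_le_mul_left hflux (by positivity))

lemma integrableOn_abs_deriv_rpow (H : IsRadialProfile d p q w w') :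
    IntegrableOn (fun r => r ^ (d - 1) * |w' r| ^ p) (Ioi 0) := by
  have hw' := (aestronglyMeasurable_restrict_Ioi_of_hasDerivAt H.hasDerivAt).aemeasurable
  have hmeas : AEStronglyMeasurable (fun r => r ^ (d - 1) * |w' r| ^ p)
      (volume.restrict (Ioi 0)) := AEMeasurable.aestronglyMeasurable (by fun_prop)
  refine Integrable.mono' H.integrableOn_energy hmeas ?_
  filter_upwards [ae_restrict_mem measurableSet_Ioi] with r (hr : 0 < r)
  have hw := Real.rpow_nonneg (H.nonneg r hr) (q + 1)
  rw [Real.norm_of_nonneg (by positivity)]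
  gcongr
  exact le_add_of_nonneg_right hw

lemma integrableOn_rpow (H : IsRadialProfile d p q w w') :
    IntegrableOn (fun r => r ^ (d - 1) * w r ^ (q + 1)) (Ioi 0) := by
  refine (H.integrableOn_energy.sub H.integrableOn_abs_deriv_rpow).congr (.of_forall fun r => ?_)
  simp only [Pi.sub_apply]
  ring

lemma integral_energy (H : IsRadialProfile d p q w w') :
    ∫ r in Ioi (0 : ℝ), r ^ (d - 1) * (|w' r| ^ p + w r ^ (q + 1)) =
      radialIntegral d (fun r => |w' r| ^ p) + radialIntegral d (fun r => w r ^ (q + 1)) := by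
  simp only [mul_add]
  exact integral_add H.integrableOn_abs_deriv_rpow H.integrableOn_rpow

lemma hasDerivAt_radialFlux_mul_profile (H : IsRadialProfile d p q w w') (hp : 1 < p)
    (hq : 0 ≤ q) {r : ℝ} (hr : 0 < r) : HasDerivAt (fun s => radialFlux d p w' s * w s)
      (-(r ^ (d - 1) * (|w' r| ^ p + w r ^ (q + 1)))) r := by
  refine ((H.hasDerivAt_radialFlux hp hr).mul (H.hasDerivAt r hr)).congr_deriv ?_
  rw [radialFlux, Real.rpow_add_one' (H.nonneg r hr) (by linarith), abs_rpow_eq_mul_abs hp,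
    abs_of_nonpos (H.deriv_nonpos hr)]
  ring

lemma tendsto_radialFlux_mul_profile_atTop (H : IsRadialProfile d p q w w') (hp : 1 < p) :
    Tendsto (fun r => radialFlux d p w' r * w r) atTop (𝓝 0) := by
  have hbound : Tendsto (fun r => radialFlux d p w' 1 * w r) atTop (𝓝 0) := by
    simpa using H.tendsto_atTop.const_mul (radialFlux d p w' 1)
  refine squeeze_zero' ?_ ?_ hbound
  · filter_upwards [eventually_gt_atTop 0] with r hr
    exact mul_nonneg (radialFlux_nonneg d p w' hr) (H.nonneg r hr)
  · filter_upwards [eventually_ge_atTop 1] with r hr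
    have hr0 : 0 < r := one_pos.trans_le hr
    exact mul_le_mul_of_nonneg_right (H.antitoneOn_radialFlux hp (mem_Ioi.2 one_pos) hr0 hr)
      (H.nonneg r hr0)

lemma radialFlux_mul_profile_eq_integral_Ioi (H : IsRadialProfile d p q w w') (hp : 1 < p)
    (hq : 0 ≤ q) {r : ℝ} (hr : 0 < r) : radialFlux d p w' r * w r =
      ∫ s in Ioi r, s ^ (d - 1) * (|w' s| ^ p + w s ^ (q + 1)) := by
  have hftc := integral_Ioi_of_hasDerivAt_of_tendsto'
    (fun s (hs : r ≤ s) => H.hasDerivAt_radialFlux_mul_profile hp hq (hr.trans_le hs))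
    (H.integrableOn_energy.mono_set (Ioi_subset_Ioi hr.le)).neg
    (H.tendsto_radialFlux_mul_profile_atTop hp)
  rw [integral_neg, zero_sub, neg_inj] at hftc
  exact hftc.symm

lemma tendsto_radialFlux_nhdsGT_zero (H : IsRadialProfile d p q w w') (hp : 1 < p) (hq : 0 ≤ q) :
    Tendsto (radialFlux d p w') (𝓝[>] 0)
      (𝓝 (radialIntegral d (fun r => |w' r| ^ p) + radialIntegral d (fun r => w r ^ (q + 1)))) := by
  have hflux_mul : Tendsto (fun r => radialFlux d p w' r * w r) (𝓝[>] 0)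
      (𝓝 (∫ s in Ioi (0 : ℝ), s ^ (d - 1) * (|w' s| ^ p + w s ^ (q + 1)))) := by
    refine ((aecover_Ioi_of_Ioi (tendsto_id'.2 nhdsWithin_le_nhds)
      ).integral_tendsto_of_countably_generated H.integrableOn_energy).congr' ?_
    filter_upwards [self_mem_nhdsWithin] with r (hr : 0 < r)
    rw [H.radialFlux_mul_profile_eq_integral_Ioi hp hq hr,
      Measure.restrict_restrict measurableSet_Ioi, id, inter_eq_left.2 (Ioi_subset_Ioi hr.le)]
  rw [← H.integral_energy, ← div_one (integral _ _)]
  refine (hflux_mul.div H.tendsto_nhdsGT_zero one_ne_zero).congr' ?_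
  filter_upwards [H.eventually_pos] with r hw
  exact mul_div_cancel_right₀ _ hw.ne'

lemma radialFlux_le (H : IsRadialProfile d p q w w') (hp : 1 < p) (hq : 0 ≤ q) {r : ℝ}
    (hr : 0 < r) : radialFlux d p w' r ≤
      radialIntegral d (fun r => |w' r| ^ p) + radialIntegral d (fun r => w r ^ (q + 1)) := by
  refine ge_of_tendsto (H.tendsto_radialFlux_nhdsGT_zero hp hq) ?_
  filter_upwards [Ioo_mem_nhdsGT hr] with s hs
  exact H.antitoneOn_radialFlux hp hs.1 hr hs.2.le

end IsRadialProfile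

/-- `g : (0, ∞) → ℝ` is differentiable with derivative `g'`, tends to `g₀` at `0⁺`, and has finite
radial energy in dimension `d`: the class of functions against which a radial profile is tested. -/
structure IsRadialTestFunction (d : ℕ) (p q : ℝ) (g g' : ℝ → ℝ) (g₀ : ℝ) : Prop where
  hasDerivAt : ∀ r ∈ Ioi (0 : ℝ), HasDerivAt g (g' r) r
  tendsto_nhdsGT_zero : Tendsto g (𝓝[>] 0) (𝓝 g₀)
  integrableOn_abs_deriv_rpow : IntegrableOn (fun r => r ^ (d - 1) * |g' r| ^ p) (Ioi 0)
  integrableOn_abs_rpow : IntegrableOn (fun r => r ^ (d - 1) * |g r| ^ (q + 1)) (Ioi 0)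

section Rescaling

variable {d : ℕ} {p q g₀ s l : ℝ} {g g' : ℝ → ℝ}

lemma radialIntegral_abs_rpow_rescale (hd : 1 ≤ d) (hs : 0 ≤ s) (hl : 0 < l) (t : ℝ)
    (g : ℝ → ℝ) : radialIntegral d (fun r => |s * g (l * r)| ^ t) =
      s ^ t * l ^ (-(d : ℝ)) * radialIntegral d (fun r => |g r| ^ t) := by
  rw [mul_assoc, ← radialIntegral_comp_mul_left hd hl]
  simp only [radialIntegral, abs_mul, abs_of_nonneg hs, Real.mul_rpow hs (abs_nonneg _),
    mul_left_comm _ (s ^ t), integral_const_mul]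

lemma integrableOn_abs_rpow_rescale (s : ℝ) (hl : 0 < l) {t : ℝ}
    (hg : IntegrableOn (fun r => r ^ (d - 1) * |g r| ^ t) (Ioi 0)) :
    IntegrableOn (fun r => r ^ (d - 1) * |s * g (l * r)| ^ t) (Ioi 0) := by
  simp only [abs_mul, Real.mul_rpow (abs_nonneg _) (abs_nonneg _), mul_left_comm _ (|s| ^ t)]
  exact (integrableOn_radial_comp_mul_left hl hg).const_mul _

lemma IsRadialTestFunction.rescale (hg : IsRadialTestFunction d p q g g' g₀) (s : ℝ)
    (hl : 0 < l) : IsRadialTestFunction d p q (fun r => s * g (l * r))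
      (fun r => s * l * g' (l * r)) (s * g₀) where
  hasDerivAt r hr := by
    have hderiv := (hg.hasDerivAt (l * r) (mul_pos hl hr)).comp r ((hasDerivAt_id r).const_mul l)
    exact (hderiv.const_mul s).congr_deriv (by ring)
  tendsto_nhdsGT_zero := by
    have hmul : Tendsto (fun r => l * r) (𝓝[>] 0) (𝓝[>] 0) := by
      refine tendsto_nhdsWithin_iff.2 ⟨?_, ?_⟩
      · exact ((continuous_const_mul l).tendsto' 0 0 (mul_zero l)).mono_left nhdsWithin_le_nhds
      · filter_upwards [self_mem_nhdsWithin] with r hr using mul_pos hl hr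
    exact (hg.tendsto_nhdsGT_zero.comp hmul).const_mul s
  integrableOn_abs_deriv_rpow :=
    integrableOn_abs_rpow_rescale (s * l) hl hg.integrableOn_abs_deriv_rpow
  integrableOn_abs_rpow := integrableOn_abs_rpow_rescale s hl hg.integrableOn_abs_rpow

end Rescaling

namespace IsRadialProfile

variable {d : ℕ} {p q g₀ s l : ℝ} {w w' g g' : ℝ → ℝ}

lemma radialIntegral_abs_rpow (H : IsRadialProfile d p q w w') :
    radialIntegral d (fun r => |w r| ^ (q + 1)) = radialIntegral d (fun r => w r ^ (q + 1)) :=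
  setIntegral_congr_fun measurableSet_Ioi fun r hr => by simp only [abs_of_nonneg (H.nonneg r hr)]

lemma isRadialTestFunction (H : IsRadialProfile d p q w w') :
    IsRadialTestFunction d p q w w' 1 where
  hasDerivAt := H.hasDerivAt
  tendsto_nhdsGT_zero := H.tendsto_nhdsGT_zero
  integrableOn_abs_deriv_rpow := H.integrableOn_abs_deriv_rpow
  integrableOn_abs_rpow := H.integrableOn_rpow.congr_fun
    (fun r hr => by simp only [abs_of_nonneg (H.nonneg r hr)]) measurableSet_Ioi

lemma abs_deriv_radialFlux_mul_le (H : IsRadialProfile d p q w w') (hp : 1 < p) (hq : 0 ≤ q) {r : ℝ}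
    (hr : 0 < r) (a b : ℝ) :
    |-(r ^ (d - 1) * w r ^ q) * a + radialFlux d p w' r * b| ≤
      r ^ (d - 1) * youngBound p q (|w' r| ^ p) (w r ^ (q + 1)) (|b| ^ p) (|a| ^ (q + 1)) := by
  have hwq := Real.rpow_nonneg (H.nonneg r hr) q
  calc |-(r ^ (d - 1) * w r ^ q) * a + radialFlux d p w' r * b|
      ≤ |-(r ^ (d - 1) * w r ^ q) * a| + |radialFlux d p w' r * b| := abs_add_le _ _
    _ = r ^ (d - 1) * (|w' r| ^ (p - 1) * |b| + w r ^ q * |a|) := by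
      rw [abs_mul, abs_neg, abs_of_nonneg (by positivity), abs_mul,
        abs_of_nonneg (radialFlux_nonneg d p w' hr), radialFlux]
      ring
    _ ≤ _ := by
      gcongr
      exact mul_add_mul_le_youngBound hp.le hq (abs_nonneg _) (abs_nonneg _) (H.nonneg r hr)
        (abs_nonneg _)

lemma integrableOn_youngBound (H : IsRadialProfile d p q w w')
    (hg : IsRadialTestFunction d p q g g' g₀) :
    IntegrableOn (fun r => r ^ (d - 1) *
      youngBound p q (|w' r| ^ p) (w r ^ (q + 1)) (|g' r| ^ p) (|g r| ^ (q + 1))) (Ioi 0) := by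
  simp only [mul_youngBound]
  exact integrable_youngBound p q H.integrableOn_abs_deriv_rpow H.integrableOn_rpow
    hg.integrableOn_abs_deriv_rpow hg.integrableOn_abs_rpow

lemma integrableOn_deriv_radialFlux_mul (H : IsRadialProfile d p q w w') (hp : 1 < p) (hq : 0 ≤ q)
    (hg : IsRadialTestFunction d p q g g' g₀) :
    IntegrableOn (fun r => -(r ^ (d - 1) * w r ^ q) * g r + radialFlux d p w' r * g' r)
      (Ioi 0) := by
  refine Integrable.mono' (H.integrableOn_youngBound hg) ?_ ?_
  · exact (aestronglyMeasurable_restrict_Ioi_of_hasDerivAt fun r hr =>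
      (H.hasDerivAt_radialFlux hp hr).mul (hg.hasDerivAt r hr))
  · filter_upwards [ae_restrict_mem measurableSet_Ioi] with r hr
    exact H.abs_deriv_radialFlux_mul_le hp hq hr (g r) (g' r)

lemma integrableAtFilter_abs_radialFlux_mul_rpow (H : IsRadialProfile d p q w w') (hp : 1 < p)
    (hq : 0 ≤ q) (hg : IsRadialTestFunction d p q g g' g₀) :
    IntegrableAtFilter (fun r => |radialFlux d p w' r * g r| ^ (q + 1)) atTop := by
  refine ⟨Ioi 1, Ioi_mem_atTop 1, ?_⟩
  set K := radialIntegral d (fun r => |w' r| ^ p) + radialIntegral d (fun r => w r ^ (q + 1))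
  have hdom := (hg.integrableOn_abs_rpow.mono_set (Ioi_subset_Ioi zero_le_one)).const_mul
    (K ^ (q + 1))
  have hcont : ContinuousOn (fun r => radialFlux d p w' r * g r) (Ioi 1) := fun r (hr : 1 < r) =>
    have hr0 : 0 < r := one_pos.trans hr
    ((H.hasDerivAt_radialFlux hp hr0).mul (hg.hasDerivAt r hr0)).continuousAt.continuousWithinAt
  have hcont_rpow := hcont.abs.rpow_const (p := q + 1) fun _ _ => Or.inr (by linarith)
  refine Integrable.mono' hdom (hcont_rpow.aestronglyMeasurable measurableSet_Ioi) ?_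
  filter_upwards [ae_restrict_mem measurableSet_Ioi] with r (hr : 1 < r)
  have hr0 : 0 < r := one_pos.trans hr
  have hflux := radialFlux_nonneg d p w' hr0
  have hK : 0 ≤ K := hflux.trans (H.radialFlux_le hp hq hr0)
  rw [Real.norm_of_nonneg (by positivity), abs_mul, abs_of_nonneg hflux,
    Real.mul_rpow hflux (abs_nonneg _)]
  gcongr
  · exact H.radialFlux_le hp hq hr0
  · exact le_mul_of_one_le_left (by positivity) (one_le_pow₀ hr.le)

lemma tendsto_radialFlux_mul_atTop (H : IsRadialProfile d p q w w') (hp : 1 < p) (hq : 0 ≤ q)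
    (hg : IsRadialTestFunction d p q g g' g₀) :
    Tendsto (fun r => radialFlux d p w' r * g r) atTop (𝓝 0) := by
  have hlim := tendsto_limUnder_of_hasDerivAt_of_integrableOn_Ioi
    (fun r hr => (H.hasDerivAt_radialFlux hp hr).mul (hg.hasDerivAt r hr))
    (H.integrableOn_deriv_radialFlux_mul hp hq hg)
  have hlim_rpow := hlim.abs.rpow_const (p := q + 1) (Or.inr (by linarith))
  have hvolume : ∀ t ∈ (atTop : Filter ℝ), volume t = ⊤ := fun t ht => by
    obtain ⟨a, ha⟩ := mem_atTop_sets.1 ht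
    exact measure_mono_top (show Ici a ⊆ t from ha) Real.volume_Ici
  have hzero := (H.integrableAtFilter_abs_radialFlux_mul_rpow hp hq hg).eq_zero_of_tendsto hvolume
    hlim_rpow
  rw [Real.rpow_eq_zero (abs_nonneg _) (by linarith), abs_eq_zero] at hzero
  rwa [hzero] at hlim

lemma mul_abs_le_youngBound (H : IsRadialProfile d p q w w') (hp : 1 < p) (hq : 0 ≤ q)
    (hg : IsRadialTestFunction d p q g g' g₀) :
    (radialIntegral d (fun r => |w' r| ^ p) + radialIntegral d (fun r => w r ^ (q + 1))) * |g₀| ≤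
      youngBound p q (radialIntegral d (fun r => |w' r| ^ p))
        (radialIntegral d (fun r => w r ^ (q + 1)))
        (radialIntegral d (fun r => |g' r| ^ p)) (radialIntegral d (fun r => |g r| ^ (q + 1))) := by
  set K := radialIntegral d (fun r => |w' r| ^ p) + radialIntegral d (fun r => w r ^ (q + 1))
  have hK : 0 ≤ K := (radialFlux_nonneg d p w' one_pos).trans (H.radialFlux_le hp hq one_pos)
  have hint := H.integrableOn_deriv_radialFlux_mul hp hq hg
  have hparts := integral_Ioi_deriv_mul_eq_sub (fun r hr => H.hasDerivAt_radialFlux hp hr)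
    hg.hasDerivAt hint
    ((H.tendsto_radialFlux_nhdsGT_zero hp hq).mul hg.tendsto_nhdsGT_zero)
    (H.tendsto_radialFlux_mul_atTop hp hq hg)
  calc K * |g₀|
      = |∫ r in Ioi 0, (-(r ^ (d - 1) * w r ^ q) * g r + radialFlux d p w' r * g' r)| := by
        rw [hparts, zero_sub, abs_neg, abs_mul, abs_of_nonneg hK]
    _ ≤ ∫ r in Ioi 0, |-(r ^ (d - 1) * w r ^ q) * g r + radialFlux d p w' r * g' r| :=
        abs_integral_le_integral_abs
    _ ≤ ∫ r in Ioi 0, r ^ (d - 1) *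
          youngBound p q (|w' r| ^ p) (w r ^ (q + 1)) (|g' r| ^ p) (|g r| ^ (q + 1)) :=
        setIntegral_mono_on hint.abs (H.integrableOn_youngBound hg) measurableSet_Ioi
          fun r hr => H.abs_deriv_radialFlux_mul_le hp hq hr (g r) (g' r)
    _ = _ := by
        simp only [mul_youngBound]
        exact integral_youngBound p q H.integrableOn_abs_deriv_rpow H.integrableOn_rpow
          hg.integrableOn_abs_deriv_rpow hg.integrableOn_abs_rpow

lemma mul_abs_le_youngBound_rescale (H : IsRadialProfile d p q w w') (hd : 1 ≤ d) (hp : 1 < p)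
    (hq : 0 ≤ q) (hg : IsRadialTestFunction d p q g g' g₀) (hs : 0 < s) (hl : 0 < l) :
    (radialIntegral d (fun r => |w' r| ^ p) + radialIntegral d (fun r => w r ^ (q + 1))) *
        (s * |g₀|) ≤
      youngBound p q (radialIntegral d (fun r => |w' r| ^ p))
        (radialIntegral d (fun r => w r ^ (q + 1)))
        (s ^ p * l ^ (p - d) * radialIntegral d (fun r => |g' r| ^ p))
        (s ^ (q + 1) * l ^ (-(d : ℝ)) * radialIntegral d (fun r => |g r| ^ (q + 1))) := by
  have hrescale := H.mul_abs_le_youngBound hp hq (hg.rescale s hl)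
  rwa [abs_mul, abs_of_pos hs, radialIntegral_abs_rpow_rescale hd (mul_pos hs hl).le hl,
    radialIntegral_abs_rpow_rescale hd hs.le hl, Real.mul_rpow hs.le hl.le,
    mul_assoc (s ^ p), ← Real.rpow_add hl, ← sub_eq_add_neg] at hrescale

lemma pohozaev (H : IsRadialProfile d p q w w') (hd : 1 ≤ d) (hp : 1 < p) (hq : 0 ≤ q) :
    radialIntegral d (fun r => |w' r| ^ p) * ((p - d) / p) =
      radialIntegral d (fun r => w r ^ (q + 1)) * (d / (q + 1)) := by
  set A := radialIntegral d (fun r => |w' r| ^ p) with hA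
  set M := radialIntegral d (fun r => w r ^ (q + 1)) with hM
  have hmin :
      IsLocalMin (fun l => youngBound p q A M (l ^ (p - d) * A) (l ^ (-(d : ℝ)) * M)) 1 := by
    filter_upwards [isOpen_Ioi.mem_nhds (zero_lt_one' ℝ)] with l hl
    have hdilate := H.mul_abs_le_youngBound_rescale hd hp hq H.isRadialTestFunction one_pos hl
    rw [H.radialIntegral_abs_rpow] at hdilate
    simpa [← hA, ← hM, youngBound_self] using hdilate
  have hderiv_rpow (t : ℝ) : HasDerivAt (fun l : ℝ => l ^ t) t 1 := by
    simpa using Real.hasDerivAt_rpow_const (x := 1) (p := t) (Or.inl one_ne_zero)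
  have hderiv : HasDerivAt (fun l => youngBound p q A M (l ^ (p - d) * A) (l ^ (-(d : ℝ)) * M))
      (1 / p * ((p - d) * A) + 1 / (q + 1) * (-(d : ℝ) * M)) 1 :=
    (((((hderiv_rpow _).mul_const A).const_mul (1 / p)).const_add _).add_const _).add
      (((hderiv_rpow _).mul_const M).const_mul _)
  linear_combination hmin.hasDerivAt_eq_zero hderiv

end IsRadialProfile

section NormedSpace

variable {E : Type*} [NormedAddCommGroup E] [NormedSpace ℝ E]
  {d : ℕ} {p q : ℝ} {u : E → ℝ}

lemma abs_fderiv_apply_sphere_le (x : E) (ω : Metric.sphere (0 : E) 1) :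
    |fderiv ℝ u x ω| ≤ ‖fderiv ℝ u x‖ := by
  simpa using (fderiv ℝ u x).le_opNorm ω

lemma isRadialTestFunction_ray (hp : 0 ≤ p) (hu : Differentiable ℝ u) (x₀ : E)
    (ω : Metric.sphere (0 : E) 1)
    (hN : IntegrableOn (fun r : ℝ => r ^ (d - 1) * |u (x₀ + r • (ω : E))| ^ (q + 1)) (Ioi 0))
    (hG : IntegrableOn (fun r : ℝ => r ^ (d - 1) * ‖fderiv ℝ u (x₀ + r • (ω : E))‖ ^ p)
      (Ioi 0)) :
    IsRadialTestFunction d p q (fun r => u (x₀ + r • (ω : E)))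
      (fun r => fderiv ℝ u (x₀ + r • (ω : E)) ω) (u x₀) := by
  have hderiv (r : ℝ) : HasDerivAt (fun r : ℝ => u (x₀ + r • (ω : E)))
      (fderiv ℝ u (x₀ + r • (ω : E)) ω) r := by
    have hray : HasDerivAt (fun r : ℝ => x₀ + r • (ω : E)) ω r := by
      simpa using ((hasDerivAt_id r).smul_const (ω : E)).const_add x₀
    exact (hu _).hasFDerivAt.comp_hasDerivAt r hray
  refine ⟨fun r _ => hderiv r, ?_, ?_, hN⟩
  · exact ((hderiv 0).continuousAt.tendsto.mono_left nhdsWithin_le_nhds).trans_eq (by simp)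
  · have hmeas := (aestronglyMeasurable_restrict_Ioi_of_hasDerivAt (a := 0)
      fun r _ => hderiv r).aemeasurable
    refine Integrable.mono' hG (AEMeasurable.aestronglyMeasurable (by fun_prop)) ?_
    filter_upwards [ae_restrict_mem measurableSet_Ioi] with r (hr : 0 < r)
    rw [Real.norm_of_nonneg (by positivity)]
    gcongr
    exact abs_fderiv_apply_sphere_le _ ω

lemma IsRadialProfile.mul_abs_le_youngBound_ray {w w' : ℝ → ℝ} (H : IsRadialProfile d p q w w')
    (hd : 1 ≤ d) (hp : 1 < p) (hq : 0 ≤ q) (hu : Differentiable ℝ u) (x₀ : E)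
    (ω : Metric.sphere (0 : E) 1)
    (hN : IntegrableOn (fun r : ℝ => r ^ (d - 1) * |u (x₀ + r • (ω : E))| ^ (q + 1)) (Ioi 0))
    (hG : IntegrableOn (fun r : ℝ => r ^ (d - 1) * ‖fderiv ℝ u (x₀ + r • (ω : E))‖ ^ p)
      (Ioi 0))
    {s l : ℝ} (hs : 0 < s) (hl : 0 < l) :
    (radialIntegral d (fun r => |w' r| ^ p) + radialIntegral d (fun r => w r ^ (q + 1))) *
        (s * |u x₀|) ≤
      youngBound p q (radialIntegral d (fun r => |w' r| ^ p))
        (radialIntegral d (fun r => w r ^ (q + 1)))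
        (s ^ p * l ^ (p - d) *
          radialIntegral d (fun r => ‖fderiv ℝ u (x₀ + r • (ω : E))‖ ^ p))
        (s ^ (q + 1) * l ^ (-(d : ℝ)) *
          radialIntegral d (fun r => |u (x₀ + r • (ω : E))| ^ (q + 1))) := by
  have hg := isRadialTestFunction_ray (by linarith) hu x₀ ω hN hG
  refine (H.mul_abs_le_youngBound_rescale hd hp hq hg hs hl).trans
    (youngBound_mono (by linarith) (by linarith) ?_ le_rfl)
  gcongr
  refine setIntegral_mono_on hg.integrableOn_abs_deriv_rpow hG measurableSet_Ioi
    fun r (hr : 0 < r) => ?_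
  dsimp only
  gcongr
  exact abs_fderiv_apply_sphere_le _ ω

variable [FiniteDimensional ℝ E] [Nontrivial E] [MeasurableSpace E] [BorelSpace E]
  (μ : Measure E) [μ.IsAddHaarMeasure]

lemma integral_fun_norm_eq_mul_radialIntegral (f : ℝ → ℝ) :
    ∫ x, f ‖x‖ ∂μ = μ.toSphere.real univ * radialIntegral (Module.finrank ℝ E) f := by
  rw [integral_fun_norm_addHaar, Measure.toSphere_real_apply_univ, radialIntegral]
  simp only [nsmul_eq_mul, smul_eq_mul, mul_assoc]

namespace IsRadialProfile

variable {w w' : ℝ → ℝ}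

lemma integrable_abs_deriv_norm_rpow (H : IsRadialProfile (Module.finrank ℝ E) p q w w') :
    Integrable (fun x => |w' ‖x‖| ^ p) μ :=
  (integrable_fun_norm_addHaar μ (f := fun r => |w' r| ^ p)).2 H.integrableOn_abs_deriv_rpow

lemma integrable_norm_rpow (H : IsRadialProfile (Module.finrank ℝ E) p q w w') :
    Integrable (fun x => w ‖x‖ ^ (q + 1)) μ :=
  (integrable_fun_norm_addHaar μ (f := fun r => w r ^ (q + 1))).2 H.integrableOn_rpow

lemma integral_norm_rpow_pos (H : IsRadialProfile (Module.finrank ℝ E) p q w w') :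
    0 < ∫ x, w ‖x‖ ^ (q + 1) ∂μ := by
  have hnonneg : 0 ≤ᵐ[μ] fun x => w ‖x‖ ^ (q + 1) := by
    filter_upwards [Measure.ae_ne μ 0] with x hx
    exact Real.rpow_nonneg (H.nonneg _ (norm_pos_iff.2 hx)) _
  rw [integral_pos_iff_support_of_nonneg_ae hnonneg (H.integrable_norm_rpow μ)]
  obtain ⟨ε, hε : 0 < ε, hpos⟩ := mem_nhdsGT_iff_exists_Ioo_subset.1 H.eventually_pos
  calc 0 < μ (Metric.ball 0 ε) := Metric.measure_ball_pos μ _ hε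
    _ = μ (Metric.ball 0 ε \ {0}) := (measure_sdiff_null (measure_singleton _)).symm
    _ ≤ _ := measure_mono fun x ⟨hxε, hx0⟩ =>
      (Real.rpow_pos_of_pos (hpos ⟨norm_pos_iff.2 hx0, mem_ball_zero_iff.1 hxε⟩) _).ne'

lemma pohozaev_norm (H : IsRadialProfile (Module.finrank ℝ E) p q w w') (hp : 1 < p)
    (hq : 0 ≤ q) :
    (∫ x, |w' ‖x‖| ^ p ∂μ) * ((p - Module.finrank ℝ E) / p) =
      (∫ x, w ‖x‖ ^ (q + 1) ∂μ) * (Module.finrank ℝ E / (q + 1)) := by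
  rw [integral_fun_norm_eq_mul_radialIntegral μ fun r => |w' r| ^ p,
    integral_fun_norm_eq_mul_radialIntegral μ fun r => w r ^ (q + 1), mul_assoc,
    H.pohozaev Module.finrank_pos hp hq, mul_assoc]

lemma mul_abs_le_youngBound_integral (H : IsRadialProfile (Module.finrank ℝ E) p q w w')
    (hp : 1 < p) (hq : 0 ≤ q) (hu : Differentiable ℝ u)
    (hN : Integrable (fun x => |u x| ^ (q + 1)) μ)
    (hG : Integrable (fun x => ‖fderiv ℝ u x‖ ^ p) μ) (x₀ : E) {s l : ℝ} (hs : 0 < s)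
    (hl : 0 < l) :
    ((∫ x, |w' ‖x‖| ^ p ∂μ) + ∫ x, w ‖x‖ ^ (q + 1) ∂μ) * (s * |u x₀|) ≤
      youngBound p q (∫ x, |w' ‖x‖| ^ p ∂μ) (∫ x, w ‖x‖ ^ (q + 1) ∂μ)
        (s ^ p * l ^ (p - Module.finrank ℝ E) * ∫ x, ‖fderiv ℝ u x‖ ^ p ∂μ)
        (s ^ (q + 1) * l ^ (-(Module.finrank ℝ E : ℝ)) * ∫ x, |u x| ^ (q + 1) ∂μ) := by
  have hGs := (integrable_integral_ray hG x₀).const_mul (s ^ p * l ^ (p - Module.finrank ℝ E))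
  have hNs := (integrable_integral_ray hN x₀).const_mul
    (s ^ (q + 1) * l ^ (-(Module.finrank ℝ E : ℝ)))
  have hrays := integral_mono_ae (integrable_const _)
    (integrable_youngBound p q (integrable_const _) (integrable_const _) hGs hNs) <| by
      filter_upwards [ae_integrableOn_ray hN x₀, ae_integrableOn_ray hG x₀] with ω hNω hGω
      exact H.mul_abs_le_youngBound_ray Module.finrank_pos hp hq hu x₀ ω hNω hGω hs hl
  rw [integral_youngBound p q (integrable_const _) (integrable_const _) hGs hNs] at hrays
  simp only [integral_const, integral_const_mul, smul_eq_mul] at hrays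
  rwa [integral_fun_norm_eq_mul_radialIntegral μ fun r => |w' r| ^ p,
    integral_fun_norm_eq_mul_radialIntegral μ fun r => w r ^ (q + 1), ← mul_add, mul_assoc,
    integral_eq_integral_sphere_integral_ray hG x₀, integral_eq_integral_sphere_integral_ray hN x₀]

lemma mul_abs_le_one (H : IsRadialProfile (Module.finrank ℝ E) p q w w')
    (hp : 1 < p) (hq : 0 ≤ q) (hu : Differentiable ℝ u)
    (hN : Integrable (fun x => |u x| ^ (q + 1)) μ)
    (hG : Integrable (fun x => ‖fderiv ℝ u x‖ ^ p) μ) (x₀ : E) {s l : ℝ} (hs : 0 < s)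
    (hl : 0 < l)
    (hGA : s ^ p * l ^ (p - Module.finrank ℝ E) * ∫ x, ‖fderiv ℝ u x‖ ^ p ∂μ ≤
      ∫ x, |w' ‖x‖| ^ p ∂μ)
    (hNM : s ^ (q + 1) * l ^ (-(Module.finrank ℝ E : ℝ)) * ∫ x, |u x| ^ (q + 1) ∂μ ≤
      ∫ x, w ‖x‖ ^ (q + 1) ∂μ) :
    s * |u x₀| ≤ 1 := by
  have hA : 0 ≤ ∫ x, |w' ‖x‖| ^ p ∂μ := integral_nonneg fun _ => by positivity
  have hM := H.integral_norm_rpow_pos μ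
  refine le_of_mul_le_mul_left ?_ (add_pos_of_nonneg_of_pos hA hM)
  calc _ ≤ _ := H.mul_abs_le_youngBound_integral μ hp hq hu hN hG x₀ hs hl
    _ ≤ _ := youngBound_mono (by linarith) (by linarith) hGA hNM
    _ = _ := by rw [youngBound_self, mul_one]

end IsRadialProfile

end NormedSpace

section ScalingOptimisation

variable {a b c e α β A M G N U X Y : ℝ}

lemma exists_rpow_mul_rpow_eq (hdet : a * e - b * c ≠ 0) (hX : 0 < X) (hY : 0 < Y) :
    ∃ s l : ℝ, 0 < s ∧ 0 < l ∧ s ^ a * l ^ b = X ∧ s ^ c * l ^ e = Y := by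
  refine ⟨Real.exp ((e * Real.log X - b * Real.log Y) / (a * e - b * c)),
    Real.exp ((a * Real.log Y - c * Real.log X) / (a * e - b * c)),
    Real.exp_pos _, Real.exp_pos _, ?_, ?_⟩
  · rw [← Real.exp_mul, ← Real.exp_mul, ← Real.exp_add, ← Real.exp_log hX, Real.log_exp]
    rw [div_mul_eq_mul_div, div_mul_eq_mul_div, ← add_div, Real.exp_eq_exp, div_eq_iff hdet]
    ring
  · rw [← Real.exp_mul, ← Real.exp_mul, ← Real.exp_add, ← Real.exp_log hY, Real.log_exp]
    rw [div_mul_eq_mul_div, div_mul_eq_mul_div, ← add_div, Real.exp_eq_exp, div_eq_iff hdet]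
    ring

lemma mul_le_rpow_mul_rpow_of_pos (hdet : a * e - b * c ≠ 0) (hs_exp : a * α + c * β = 1)
    (hl_exp : b * α + e * β = 0) (hA : 0 < A) (hM : 0 < M) (hG : 0 < G) (hN : 0 < N)
    (hU : ∀ s l : ℝ, 0 < s → 0 < l → s ^ a * l ^ b * G ≤ A → s ^ c * l ^ e * N ≤ M → s * U ≤ 1) :
    M ^ β * A ^ α * U ≤ N ^ β * G ^ α := by
  obtain ⟨s, l, hs, hl, hsA, hsM⟩ := exists_rpow_mul_rpow_eq hdet (div_pos hA hG) (div_pos hM hN)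
  have hsU : s * U ≤ 1 := hU s l hs hl (by rw [hsA, div_mul_cancel₀ _ hG.ne'])
    (by rw [hsM, div_mul_cancel₀ _ hN.ne'])
  have hs_eq : (M / N) ^ β * (A / G) ^ α = s := by
    calc (M / N) ^ β * (A / G) ^ α
        = s ^ (a * α + c * β) * l ^ (b * α + e * β) := by
          rw [← hsA, ← hsM, Real.mul_rpow (by positivity) (by positivity),
            Real.mul_rpow (by positivity) (by positivity), Real.rpow_add hs, Real.rpow_add hl]
          simp only [← Real.rpow_mul hs.le, ← Real.rpow_mul hl.le]
          ring
      _ = s := by rw [hs_exp, hl_exp, Real.rpow_one, Real.rpow_zero, mul_one]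
  rw [Real.div_rpow hA.le hG.le, Real.div_rpow hM.le hN.le, div_mul_div_comm] at hs_eq
  rwa [← hs_eq, div_mul_eq_mul_div, div_le_one (by positivity)] at hsU

lemma mul_le_rpow_mul_rpow_of_nonneg (hdet : a * e - b * c ≠ 0) (hs_exp : a * α + c * β = 1)
    (hl_exp : b * α + e * β = 0) (hα : 0 ≤ α) (hβ : 0 ≤ β) (hA : 0 < A) (hM : 0 < M)
    (hG : 0 ≤ G) (hN : 0 ≤ N)
    (hU : ∀ s l : ℝ, 0 < s → 0 < l → s ^ a * l ^ b * G ≤ A → s ^ c * l ^ e * N ≤ M → s * U ≤ 1) :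
    M ^ β * A ^ α * U ≤ N ^ β * G ^ α := by
  have hcont : Continuous fun δ : ℝ => (N + δ) ^ β * (G + δ) ^ α :=
    ((continuous_const.add continuous_id).rpow_const fun _ => Or.inr hβ).mul
      ((continuous_const.add continuous_id).rpow_const fun _ => Or.inr hα)
  have hlim := (hcont.tendsto' 0 (N ^ β * G ^ α) (by simp only [add_zero])).mono_left
    (nhdsWithin_le_nhds (s := Ioi 0))
  refine ge_of_tendsto hlim ?_
  filter_upwards [self_mem_nhdsWithin] with δ (hδ : 0 < δ)
  refine mul_le_rpow_mul_rpow_of_pos hdet hs_exp hl_exp hA hM (by positivity) (by positivity)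
    fun s l hs hl hGA hNM => hU s l hs hl (le_trans ?_ hGA) (le_trans ?_ hNM)
  all_goals gcongr; linarith

end ScalingOptimisation

/-- The exponent `θ` of `‖∇u‖_{L^p}` in the Gagliardo–Nirenberg inequality for `‖u‖_{L^∞}` in
dimension `d`; it is dictated by invariance under `u ↦ s * u (l • ·)`. -/
noncomputable def gnExponent (d p q : ℝ) : ℝ := p * d / (d * p + (p - d) * (q + 1))

/-- The best constant in the Gagliardo–Nirenberg inequality for `‖u‖_{L^∞}`, in terms of the mass
`M = ∫ w ‖x‖ ^ (q + 1)` of the extremal profile `w`. -/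
noncomputable def gnConstant (d p q M : ℝ) : ℝ :=
  gnExponent d p q ^ (-(gnExponent d p q / p)) * (1 - gnExponent d p q) ^ (gnExponent d p q / p) *
    M ^ (-(gnExponent d p q / d))

section Exponent

variable {d p q A M : ℝ}

lemma gnExponent_denom_pos (hd : 0 < d) (hp : d < p) (hq : 0 < q + 1) :
    0 < d * p + (p - d) * (q + 1) := by
  have := hd.trans hp
  have := sub_pos.2 hp
  positivity

lemma gnExponent_pos (hd : 0 < d) (hp : d < p) (hq : 0 < q + 1) : 0 < gnExponent d p q :=
  div_pos (mul_pos (hd.trans hp) hd) (gnExponent_denom_pos hd hp hq)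

lemma one_sub_gnExponent (hd : 0 < d) (hp : d < p) (hq : 0 < q + 1) :
    1 - gnExponent d p q = (p - d) * (q + 1) / (d * p + (p - d) * (q + 1)) := by
  have hD := (gnExponent_denom_pos hd hp hq).ne'
  rw [gnExponent, eq_div_iff hD, sub_mul, div_mul_cancel₀ _ hD]
  ring

lemma one_sub_gnExponent_pos (hd : 0 < d) (hp : d < p) (hq : 0 < q + 1) :
    0 < 1 - gnExponent d p q := by
  rw [one_sub_gnExponent hd hp hq]
  exact div_pos (mul_pos (sub_pos.2 hp) hq) (gnExponent_denom_pos hd hp hq)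

lemma gnExponent_dilation_scaling (hd : 0 < d) (hp : d < p) (hq : 0 < q + 1) :
    (p - d) * (gnExponent d p q / p) + -d * ((1 - gnExponent d p q) / (q + 1)) = 0 := by
  have := hd.trans hp
  have := gnExponent_denom_pos hd hp hq
  rw [one_sub_gnExponent hd hp hq, gnExponent]; field_simp; ring

lemma gnConstant_pos (hd : 0 < d) (hp : d < p) (hq : 0 < q + 1) (hM : 0 < M) :
    0 < gnConstant d p q M := by
  have := gnExponent_pos hd hp hq
  have := one_sub_gnExponent_pos hd hp hq
  unfold gnConstant; positivity

lemma eq_mul_gnExponent_div_of_pohozaev (hd : 0 < d) (hp : d < p) (hq : 0 < q + 1)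
    (hAM : A * ((p - d) / p) = M * (d / (q + 1))) :
    A = M * (gnExponent d p q / (1 - gnExponent d p q)) := by
  have := hd.trans hp
  have := sub_pos.2 hp
  have := gnExponent_denom_pos hd hp hq
  rw [one_sub_gnExponent hd hp hq, gnExponent]
  field_simp at hAM ⊢
  linear_combination hAM

lemma gnConstant_mul_rpow_mul_rpow (hd : 0 < d) (hp : d < p) (hq : 0 < q + 1) (hM : 0 < M)
    (hAM : A * ((p - d) / p) = M * (d / (q + 1))) :
    gnConstant d p q M *
      (M ^ ((1 - gnExponent d p q) / (q + 1)) * A ^ (gnExponent d p q / p)) = 1 := by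
  have hp0 := hd.trans hp
  have hθ := gnExponent_pos hd hp hq
  have hθ1 := one_sub_gnExponent_pos hd hp hq
  have hexp : (1 - gnExponent d p q) / (q + 1) = gnExponent d p q / d - gnExponent d p q / p := by
    have := gnExponent_dilation_scaling hd hp hq
    field_simp at this ⊢
    linear_combination -this
  rw [hexp, gnConstant, eq_mul_gnExponent_div_of_pohozaev hd hp hq hAM,
    Real.mul_rpow hM.le (by positivity), Real.div_rpow hθ.le hθ1.le, Real.rpow_neg hθ.le,
    Real.rpow_neg hM.le, Real.rpow_sub hM]
  field_simp

end Exponent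

section NormedSpace

variable {E : Type*} [NormedAddCommGroup E] [NormedSpace ℝ E] [FiniteDimensional ℝ E]
  [Nontrivial E] [MeasurableSpace E] [BorelSpace E] (μ : Measure E) [μ.IsAddHaarMeasure]
  {p q : ℝ} {w w' : ℝ → ℝ}

namespace IsRadialProfile

lemma integral_abs_deriv_norm_rpow_pos (H : IsRadialProfile (Module.finrank ℝ E) p q w w')
    (hp : Module.finrank ℝ E < p) (hq : 0 ≤ q) : 0 < ∫ x, |w' ‖x‖| ^ p ∂μ := by
  have hd : (0 : ℝ) < Module.finrank ℝ E := Nat.cast_pos.2 Module.finrank_pos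
  have hp1 : 1 < p := (Nat.one_le_cast.2 Module.finrank_pos).trans_lt hp
  have hq1 : 0 < q + 1 := by linarith
  have hM := H.integral_norm_rpow_pos μ
  have hθ := gnExponent_pos hd hp hq1
  have hθ1 := one_sub_gnExponent_pos hd hp hq1
  rw [eq_mul_gnExponent_div_of_pohozaev hd hp hq1 (H.pohozaev_norm μ hp1 hq)]
  positivity

lemma gnConstant_mul_eq_one (H : IsRadialProfile (Module.finrank ℝ E) p q w w')
    (hp : Module.finrank ℝ E < p) (hq : 0 ≤ q) :
    gnConstant (Module.finrank ℝ E) p q (∫ x, w ‖x‖ ^ (q + 1) ∂μ) *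
      ((∫ x, w ‖x‖ ^ (q + 1) ∂μ) ^ ((1 - gnExponent (Module.finrank ℝ E) p q) / (q + 1)) *
        (∫ x, |w' ‖x‖| ^ p ∂μ) ^ (gnExponent (Module.finrank ℝ E) p q / p)) = 1 :=
  gnConstant_mul_rpow_mul_rpow (Nat.cast_pos.2 Module.finrank_pos) hp (by linarith)
    (H.integral_norm_rpow_pos μ)
    (H.pohozaev_norm μ ((Nat.one_le_cast.2 Module.finrank_pos).trans_lt hp) hq)

theorem abs_le_gnConstant_mul
    (H : IsRadialProfile (Module.finrank ℝ E) p q w w') (hp : Module.finrank ℝ E < p)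
    (hq : 0 ≤ q) {u : E → ℝ} (hu : Differentiable ℝ u)
    (hN : Integrable (fun x => |u x| ^ (q + 1)) μ)
    (hG : Integrable (fun x => ‖fderiv ℝ u x‖ ^ p) μ) (x : E) :
    |u x| ≤ gnConstant (Module.finrank ℝ E) p q (∫ y, w ‖y‖ ^ (q + 1) ∂μ) *
      (∫ y, |u y| ^ (q + 1) ∂μ) ^ ((1 - gnExponent (Module.finrank ℝ E) p q) / (q + 1)) *
      (∫ y, ‖fderiv ℝ u y‖ ^ p ∂μ) ^ (gnExponent (Module.finrank ℝ E) p q / p) := by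
  have hd : (0 : ℝ) < Module.finrank ℝ E := Nat.cast_pos.2 Module.finrank_pos
  have hp0 : 0 < p := hd.trans hp
  have hp1 : 1 < p := (Nat.one_le_cast.2 Module.finrank_pos).trans_lt hp
  have hq1 : 0 < q + 1 := by linarith
  have hθ := gnExponent_pos hd hp hq1
  have hθ1 := one_sub_gnExponent_pos hd hp hq1
  have hM := H.integral_norm_rpow_pos μ
  have hU := mul_le_rpow_mul_rpow_of_nonneg (a := p) (b := p - Module.finrank ℝ E) (c := q + 1)
    (e := -Module.finrank ℝ E) (by linarith [gnExponent_denom_pos hd hp hq1])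
    (by rw [mul_div_cancel₀ _ hp0.ne', mul_div_cancel₀ _ hq1.ne', add_sub_cancel])
    (gnExponent_dilation_scaling hd hp hq1) (by positivity) (by positivity)
    (H.integral_abs_deriv_norm_rpow_pos μ hp hq) hM
    (integral_nonneg fun _ => by positivity) (integral_nonneg fun _ => by positivity)
    fun s l hs hl hGA hNM => H.mul_abs_le_one μ hp1 hq hu hN hG x hs hl hGA hNM
  calc |u x| = gnConstant (Module.finrank ℝ E) p q (∫ y, w ‖y‖ ^ (q + 1) ∂μ) * (_ * |u x|) := by
        rw [← mul_assoc, H.gnConstant_mul_eq_one μ hp hq, one_mul]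
    _ ≤ _ := mul_le_mul_of_nonneg_left hU (gnConstant_pos hd hp hq1 hM).le
    _ = _ := (mul_assoc _ _ _).symm

end IsRadialProfile

end NormedSpace

section SmoothNorm

variable {E : Type*} [NormedAddCommGroup E] {ε p q : ℝ} {d : ℕ} {w w' : ℝ → ℝ}

/-- The regularised norm `√(‖x‖ ^ 2 + ε ^ 2)`. Composing a radial profile with it removes the
singularity at the origin. -/
noncomputable def smoothNorm (ε : ℝ) (x : E) : ℝ := √(‖x‖ ^ 2 + ε ^ 2)

lemma smoothNorm_pos (hε : 0 < ε) (x : E) : 0 < smoothNorm ε x :=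
  Real.sqrt_pos.2 (by positivity)

lemma norm_le_smoothNorm (ε : ℝ) (x : E) : ‖x‖ ≤ smoothNorm ε x :=
  Real.le_sqrt_of_sq_le (le_add_of_nonneg_right (sq_nonneg ε))

lemma smoothNorm_zero (hε : 0 < ε) : smoothNorm ε (0 : E) = ε := by
  simp [smoothNorm, Real.sqrt_sq hε.le]

lemma IsRadialProfile.abs_comp_smoothNorm_le (H : IsRadialProfile d p q w w') (hε : 0 < ε) {x : E}
    (hx : x ≠ 0) : |w (smoothNorm ε x)| ≤ w ‖x‖ := by
  rw [abs_of_nonneg (H.nonneg _ (smoothNorm_pos hε x))]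
  exact H.antitoneOn (norm_pos_iff.2 hx) (smoothNorm_pos hε x) (norm_le_smoothNorm ε x)

lemma IsRadialProfile.abs_comp_smoothNorm_rpow_ae_le [MeasurableSpace E] (μ : Measure E)
    [NullSingletonClass μ] (H : IsRadialProfile d p q w w') (hq : 0 ≤ q + 1) (hε : 0 < ε) :
    (fun x => |w (smoothNorm ε x)| ^ (q + 1)) ≤ᵐ[μ] fun x => w ‖x‖ ^ (q + 1) := by
  filter_upwards [Measure.ae_ne μ 0] with x hx
  exact Real.rpow_le_rpow (abs_nonneg _) (H.abs_comp_smoothNorm_le hε hx) hq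

variable [InnerProductSpace ℝ E]

lemma contDiff_smoothNorm {n : WithTop ℕ∞} (hε : 0 < ε) :
    ContDiff ℝ n (smoothNorm ε : E → ℝ) :=
  ((contDiff_norm_sq ℝ).add contDiff_const).sqrt fun _ => by positivity

lemma norm_fderiv_smoothNorm_le_one (hε : 0 < ε) (x : E) :
    ‖fderiv ℝ (smoothNorm ε) x‖ ≤ 1 := by
  have hderiv := ((hasStrictFDerivAt_norm_sq x).hasFDerivAt.add_const (ε ^ 2)).sqrt
    (by positivity)
  have hinner : ‖2 • innerSL ℝ x‖ = 2 * ‖x‖ := by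
    rw [← Nat.cast_smul_eq_nsmul ℝ, norm_smul, innerSL_apply_norm]
    simp
  calc ‖fderiv ℝ (smoothNorm ε) x‖ = 1 / (2 * smoothNorm ε x) * (2 * ‖x‖) := by
        have hpos := smoothNorm_pos hε x
        rw [HasFDerivAt.fderiv (f := smoothNorm ε) hderiv, norm_smul, hinner, ← smoothNorm,
          Real.norm_of_nonneg (by positivity)]
    _ = ‖x‖ / smoothNorm ε x := by field_simp
    _ ≤ 1 := div_le_one_of_le₀ (norm_le_smoothNorm ε x) (smoothNorm_pos hε x).le

namespace IsRadialProfile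

lemma contDiffOn (H : IsRadialProfile d p q w w') :
    ContDiffOn ℝ 1 w (Ioi 0) := by
  rw [← zero_add 1, contDiffOn_succ_iff_deriv_of_isOpen isOpen_Ioi, contDiffOn_zero]
  exact ⟨fun r hr => (H.hasDerivAt r hr).differentiableAt.differentiableWithinAt, by simp,
    H.continuousOn_deriv.congr fun r hr => (H.hasDerivAt r hr).deriv⟩

lemma contDiff_comp_smoothNorm (H : IsRadialProfile d p q w w') (hε : 0 < ε) :
    ContDiff ℝ 1 fun x : E => w (smoothNorm ε x) :=
  H.contDiffOn.comp_contDiff (contDiff_smoothNorm hε) (smoothNorm_pos hε)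

lemma norm_fderiv_comp_smoothNorm_le (H : IsRadialProfile d p q w w') (hp : 1 < p)
    (hε : 0 < ε) {x : E} (hx : x ≠ 0) :
    ‖fderiv ℝ (fun y : E => w (smoothNorm ε y)) x‖ ≤ |w' ‖x‖| := by
  have hderiv := (H.hasDerivAt _ (smoothNorm_pos hε x)).comp_hasFDerivAt x
    ((contDiff_smoothNorm hε).differentiable one_ne_zero x).hasFDerivAt
  calc ‖fderiv ℝ (fun y : E => w (smoothNorm ε y)) x‖
      = |w' (smoothNorm ε x)| * ‖fderiv ℝ (smoothNorm ε) x‖ := by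
        rw [HasFDerivAt.fderiv (f := fun y : E => w (smoothNorm ε y)) hderiv, norm_smul,
          Real.norm_eq_abs]
    _ ≤ |w' (smoothNorm ε x)| :=
        mul_le_of_le_one_right (abs_nonneg _) (norm_fderiv_smoothNorm_le_one hε x)
    _ ≤ |w' ‖x‖| :=
        H.antitoneOn_abs_deriv hp (norm_pos_iff.2 hx) (smoothNorm_pos hε x)
          (norm_le_smoothNorm ε x)

variable [MeasurableSpace E]

lemma norm_fderiv_comp_smoothNorm_rpow_ae_le (μ : Measure E) [NullSingletonClass μ]
    (H : IsRadialProfile d p q w w') (hp : 1 < p) (hε : 0 < ε) :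
    (fun x => ‖fderiv ℝ (fun y => w (smoothNorm ε y)) x‖ ^ p) ≤ᵐ[μ]
      fun x => |w' ‖x‖| ^ p := by
  filter_upwards [Measure.ae_ne μ 0] with x hx
  exact Real.rpow_le_rpow (norm_nonneg _) (H.norm_fderiv_comp_smoothNorm_le hp hε hx)
    (by linarith)

variable [FiniteDimensional ℝ E] [Nontrivial E] [BorelSpace E] (μ : Measure E)
  [μ.IsAddHaarMeasure]

lemma integrable_abs_comp_smoothNorm_rpow (H : IsRadialProfile (Module.finrank ℝ E) p q w w')
    (hq : 0 ≤ q + 1) (hε : 0 < ε) :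
    Integrable (fun x => |w (smoothNorm ε x)| ^ (q + 1)) μ := by
  refine (H.integrable_norm_rpow μ).mono' ?_ ?_
  · exact ((H.contDiff_comp_smoothNorm hε).continuous.abs.rpow_const
      fun _ => Or.inr hq).aestronglyMeasurable
  · filter_upwards [H.abs_comp_smoothNorm_rpow_ae_le μ hq hε] with x hx
    rwa [Real.norm_of_nonneg (by positivity)]

lemma integrable_norm_fderiv_comp_smoothNorm_rpow
    (H : IsRadialProfile (Module.finrank ℝ E) p q w w') (hp : 1 < p) (hε : 0 < ε) :
    Integrable (fun x => ‖fderiv ℝ (fun y => w (smoothNorm ε y)) x‖ ^ p) μ := by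
  refine (H.integrable_abs_deriv_norm_rpow μ).mono' ?_ ?_
  · exact (((H.contDiff_comp_smoothNorm hε).continuous_fderiv one_ne_zero).norm.rpow_const
      fun _ => Or.inr (by linarith)).aestronglyMeasurable
  · filter_upwards [H.norm_fderiv_comp_smoothNorm_rpow_ae_le μ hp hε] with x hx
    rwa [Real.norm_of_nonneg (by positivity)]

lemma le_mul_of_forall_abs_le (H : IsRadialProfile (Module.finrank ℝ E) p q w w') (hp : 1 < p)
    (hq : 0 ≤ q + 1) {α β C : ℝ} (hα : 0 ≤ α) (hβ : 0 ≤ β)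
    (hC : ∀ u : E → ℝ, ContDiff ℝ 1 u → Integrable (fun x => |u x| ^ (q + 1)) μ →
      Integrable (fun x => ‖fderiv ℝ u x‖ ^ p) μ → ∀ x,
        |u x| ≤ C * (∫ y, |u y| ^ (q + 1) ∂μ) ^ β * (∫ y, ‖fderiv ℝ u y‖ ^ p ∂μ) ^ α)
    (hε : 0 < ε) (hw : 0 < w ε) :
    w ε ≤ C * ((∫ x, w ‖x‖ ^ (q + 1) ∂μ) ^ β * (∫ x, |w' ‖x‖| ^ p ∂μ) ^ α) := by
  have hN := H.integrable_abs_comp_smoothNorm_rpow μ hq hε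
  have hG := H.integrable_norm_fderiv_comp_smoothNorm_rpow μ hp hε
  have hNM := integral_mono_ae hN (H.integrable_norm_rpow μ)
    (H.abs_comp_smoothNorm_rpow_ae_le μ hq hε)
  have hGA := integral_mono_ae hG (H.integrable_abs_deriv_norm_rpow μ)
    (H.norm_fderiv_comp_smoothNorm_rpow_ae_le μ hp hε)
  have hle := hC _ (H.contDiff_comp_smoothNorm hε) hN hG 0
  rw [smoothNorm_zero hε, abs_of_pos hw, mul_assoc] at hle
  have hM0 := H.integral_norm_rpow_pos μ
  have hN0 : 0 ≤ ∫ x, |w (smoothNorm ε x)| ^ (q + 1) ∂μ :=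
    integral_nonneg fun _ => by positivity
  have hG0 : 0 ≤ ∫ x, ‖fderiv ℝ (fun y => w (smoothNorm ε y)) x‖ ^ p ∂μ :=
    integral_nonneg fun _ => by positivity
  have hC0 : 0 ≤ C := (pos_of_mul_pos_left (hw.trans_le hle)
    (mul_nonneg (Real.rpow_nonneg hN0 _) (Real.rpow_nonneg hG0 _))).le
  refine hle.trans ?_
  gcongr

theorem gnConstant_le (H : IsRadialProfile (Module.finrank ℝ E) p q w w')
    (hp : Module.finrank ℝ E < p) (hq : 0 ≤ q) {C : ℝ}
    (hC : ∀ u : E → ℝ, ContDiff ℝ 1 u → Integrable (fun x => |u x| ^ (q + 1)) μ →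
      Integrable (fun x => ‖fderiv ℝ u x‖ ^ p) μ → ∀ x, |u x| ≤ C *
        (∫ y, |u y| ^ (q + 1) ∂μ) ^ ((1 - gnExponent (Module.finrank ℝ E) p q) / (q + 1)) *
        (∫ y, ‖fderiv ℝ u y‖ ^ p ∂μ) ^ (gnExponent (Module.finrank ℝ E) p q / p)) :
    gnConstant (Module.finrank ℝ E) p q (∫ x, w ‖x‖ ^ (q + 1) ∂μ) ≤ C := by
  have hd : (0 : ℝ) < Module.finrank ℝ E := Nat.cast_pos.2 Module.finrank_pos
  have hp0 : 0 < p := hd.trans hp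
  have hp1 : 1 < p := (Nat.one_le_cast.2 Module.finrank_pos).trans_lt hp
  have hq1 : 0 < q + 1 := by linarith
  have hθ := gnExponent_pos hd hp hq1
  have hθ1 := one_sub_gnExponent_pos hd hp hq1
  have hM := H.integral_norm_rpow_pos μ
  have hA := H.integral_abs_deriv_norm_rpow_pos μ hp hq
  have hone := le_of_tendsto H.tendsto_nhdsGT_zero <| by
    filter_upwards [self_mem_nhdsWithin, H.eventually_pos] with ε hε hw
    exact H.le_mul_of_forall_abs_le μ hp1 hq1.le (by positivity) (by positivity) hC hε hw
  refine le_of_mul_le_mul_right ((H.gnConstant_mul_eq_one μ hp hq).trans_le hone) ?_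
  positivity

end IsRadialProfile

end SmoothNorm

theorem stmt10_general {E : Type*} [NormedAddCommGroup E] [InnerProductSpace ℝ E]
    [FiniteDimensional ℝ E] [Nontrivial E] [MeasurableSpace E] [BorelSpace E] (μ : Measure E)
    [μ.IsAddHaarMeasure] {d : ℕ} (hdim : Module.finrank ℝ E = d) {p q : ℝ} (hp : (d : ℝ) < p)
    (hq : 0 ≤ q) {w w' : ℝ → ℝ} (H : IsRadialProfile d p q w w') :
    (∀ u : E → ℝ, Differentiable ℝ u → Integrable (fun x => |u x| ^ (q + 1)) μ →
      Integrable (fun x => ‖fderiv ℝ u x‖ ^ p) μ →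
      ∀ x, |u x| ≤ gnConstant d p q (∫ y, w ‖y‖ ^ (q + 1) ∂μ) *
        (∫ y, |u y| ^ (q + 1) ∂μ) ^ ((1 - gnExponent d p q) / (q + 1)) *
        (∫ y, ‖fderiv ℝ u y‖ ^ p ∂μ) ^ (gnExponent d p q / p)) ∧
    (∀ C : ℝ, (∀ u : E → ℝ, ContDiff ℝ 1 u → Integrable (fun x => |u x| ^ (q + 1)) μ →
      Integrable (fun x => ‖fderiv ℝ u x‖ ^ p) μ →
      ∀ x, |u x| ≤ C * (∫ y, |u y| ^ (q + 1) ∂μ) ^ ((1 - gnExponent d p q) / (q + 1)) *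
        (∫ y, ‖fderiv ℝ u y‖ ^ p ∂μ) ^ (gnExponent d p q / p)) →
      gnConstant d p q (∫ y, w ‖y‖ ^ (q + 1) ∂μ) ≤ C) := by
  subst hdim
  exact ⟨fun _ hu hN hG => H.abs_le_gnConstant_mul μ hp hq hu hN hG,
    fun _ hC => H.gnConstant_le μ hp hq hC⟩

/-- The L^∞-type Gagliardo-Nirenberg inequality on ℝ^d with its best
constant `C = θ^{-θ/p} (1-θ)^{θ/p} M_c^{-θ/d}` expressed through the radial
nonincreasing solution `u_c` of `Δ_p u = u^q`, `u(0⁺)=1`, `u(∞)=0`. -/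
theorem stmt10 (d : ℕ) (hd : 1 ≤ d) (p q θ : ℝ) (hp : (d : ℝ) < p) (hq : 0 ≤ q)
    (hθ : θ = p * d / (d * p + (p - d) * (q + 1)))
    (uc uc' : ℝ → ℝ)
    (hderivc : ∀ r ∈ Ioi (0:ℝ), HasDerivAt uc (uc' r) r)
    (hcc : ContinuousOn uc' (Ioi 0))
    (hmono : AntitoneOn uc (Ioi 0))
    (hnn : ∀ r ∈ Ioi (0:ℝ), 0 ≤ uc r)
    (hlim0 : Tendsto uc (𝓝[>] 0) (𝓝 1))
    (hliminf : Tendsto uc atTop (𝓝 0))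
    (hode : ∀ r ∈ Ioi (0:ℝ),
      HasDerivAt (fun s => s ^ (d - 1) * |uc' s| ^ (p - 2) * uc' s)
        (r ^ (d - 1) * uc r ^ q) r)
    (hint : IntegrableOn (fun r => r ^ (d - 1) * (|uc' r| ^ p + uc r ^ (q + 1))) (Ioi 0))
    (Mc C : ℝ)
    (hMc : Mc = ∫ x : EuclideanSpace ℝ (Fin d), (uc ‖x‖) ^ (q + 1))
    (hC : C = θ ^ (-(θ / p)) * (1 - θ) ^ (θ / p) * Mc ^ (-(θ / d))) :
    (∀ u : EuclideanSpace ℝ (Fin d) → ℝ, ContDiff ℝ 1 u →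
      Integrable (fun x => |u x| ^ (q + 1)) →
      Integrable (fun x => ‖fderiv ℝ u x‖ ^ p) →
      ∀ x, |u x| ≤ C * (∫ y, |u y| ^ (q + 1)) ^ ((1 - θ) / (q + 1)) *
        (∫ y, ‖fderiv ℝ u y‖ ^ p) ^ (θ / p)) ∧
    (∀ C' : ℝ, (∀ u : EuclideanSpace ℝ (Fin d) → ℝ, ContDiff ℝ 1 u →
      Integrable (fun x => |u x| ^ (q + 1)) →
      Integrable (fun x => ‖fderiv ℝ u x‖ ^ p) →
      ∀ x, |u x| ≤ C' * (∫ y, |u y| ^ (q + 1)) ^ ((1 - θ) / (q + 1)) *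
        (∫ y, ‖fderiv ℝ u y‖ ^ p) ^ (θ / p)) → C ≤ C') := by
  have : Nonempty (Fin d) := ⟨⟨0, hd⟩⟩
  have H : IsRadialProfile d p q uc uc' :=
    ⟨hderivc, hcc, hmono, hnn, hlim0, hliminf, hode, hint⟩
  subst hθ hMc hC
  obtain ⟨hle, hsharp⟩ :=
    stmt10_general (volume : Measure (EuclideanSpace ℝ (Fin d))) finrank_euclideanSpace_fin hp hq H
  exact ⟨fun u hu => hle u (hu.differentiable one_ne_zero), hsharp⟩
end
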